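/- For each choice of sign ± there exist a real number c_± and a constant C > 0 such that for every prime q ≥ 3: |(1/q)·Σ_{a=1}^{q−1} f_±(a/q)² − (1/π²)·(log q)^4 − c_±·(log q)^3| ≤ C·(log q)². -/

import Mathlib

open Real Finset

/-- The list `[b_0, b_1, …, b_κ]` of partial quotients of `a/q` produced by the
Euclidean algorithm. -/
def cfList : ℕ → ℕ → List ℕ
  | a, q =>
    if h : q = 0 then [] else (a / q) :: cfList q (a % q)
termination_by a q => q
decreasing_by exact Nat.mod_lt _ (Nat.pos_of_ne_zero h)

/-- `f_±(a/q) = ∑_{j=1}^κ (±1)^j b_j^{1/2} (log b_j + γ − log 8π ∓ π/2)`. -/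
noncomputable def fpm (ε : ℤ) (a q : ℕ) : ℝ :=
  ∑ j ∈ Finset.Icc 1 ((cfList a q).length - 1),
    (ε : ℝ)^j * Real.sqrt ((cfList a q).getD j 0) *
      (Real.log ((cfList a q).getD j 0) + Real.eulerMascheroniConstant
        - Real.log (8*π) - (ε : ℝ) * π/2)

/-- continuant pair -/
def cont : List ℕ → ℕ × ℕ
  | [] => (1, 0)
  | b :: l => (b * (cont l).1 + (cont l).2, (cont l).1)

def PosL (l : List ℕ) : Prop := ∀ b ∈ l, 1 ≤ b

def Canon : List ℕ → Prop
  | [] => True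
  | [b] => 2 ≤ b
  | b :: c :: l => 1 ≤ b ∧ Canon (c :: l)

theorem cfList_zero (a : ℕ) : cfList a 0 = [] := by rw [cfList]; simp

theorem cfList_pos (a q : ℕ) (h : 0 < q) : cfList a q = (a / q) :: cfList q (a % q) := by
  rw [cfList]; simp [h.ne']

theorem PosL.tail {b : ℕ} {l : List ℕ} (h : PosL (b :: l)) : PosL l :=
  fun c hc => h c (List.mem_cons_of_mem _ hc)

theorem PosL.head {b : ℕ} {l : List ℕ} (h : PosL (b :: l)) : 1 ≤ b := h b List.mem_cons_self

theorem PosL.cons {b : ℕ} {l : List ℕ} (hb : 1 ≤ b) (h : PosL l) : PosL (b :: l) := by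
  intro c hc
  rcases List.mem_cons.1 hc with rfl | hc
  · exact hb
  · exact h c hc

theorem PosL.nil : PosL [] := by intro c hc; simp at hc

theorem PosL.append {u v : List ℕ} (hu : PosL u) (hv : PosL v) : PosL (u ++ v) := by
  intro c hc
  rcases List.mem_append.1 hc with h | h
  · exact hu c h
  · exact hv c h

theorem PosL.left {u v : List ℕ} (h : PosL (u ++ v)) : PosL u :=
  fun c hc => h c (List.mem_append_left _ hc)

theorem PosL.right {u v : List ℕ} (h : PosL (u ++ v)) : PosL v :=
  fun c hc => h c (List.mem_append_right _ hc)

theorem PosL.rev {u : List ℕ} (h : PosL u) : PosL u.reverse :=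
  fun c hc => h c (List.mem_reverse.1 hc)

theorem Canon.posL : ∀ {l : List ℕ}, Canon l → PosL l
  | [], _ => PosL.nil
  | [b], h => PosL.cons (by simp only [Canon] at h; omega) PosL.nil
  | b :: c :: l, h => by
      simp only [Canon] at h
      exact PosL.cons h.1 (Canon.posL h.2)

theorem Canon.tail {b : ℕ} {l : List ℕ} (h : Canon (b :: l)) : Canon l := by
  cases l with
  | nil => trivial
  | cons c l => simp only [Canon] at h; exact h.2

theorem Canon.right : ∀ {u v : List ℕ}, Canon (u ++ v) → Canon v
  | [], _, h => h
  | _ :: _, _, h => Canon.right (Canon.tail h)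

theorem Canon.cons {b : ℕ} {l : List ℕ} (hb : 1 ≤ b) (hl : l ≠ []) (h : Canon l) :
    Canon (b :: l) := by
  cases l with
  | nil => exact absurd rfl hl
  | cons c l => exact ⟨hb, h⟩

theorem Canon.app : ∀ {u v : List ℕ}, PosL u → v ≠ [] → Canon v → Canon (u ++ v)
  | [], _, _, _, h => h
  | b :: u, v, hu, hv, h => by
      rw [List.cons_append]
      exact Canon.cons hu.head (by simp [hv]) (Canon.app hu.tail hv h)

theorem cont_pos : ∀ {l : List ℕ}, PosL l → 1 ≤ (cont l).1
  | [], _ => by simp [cont]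
  | b :: l, h => by
      have := cont_pos h.tail
      have hb := h.head
      simp only [cont]
      nlinarith

theorem cont_le : ∀ {l : List ℕ}, PosL l → (cont l).2 ≤ (cont l).1
  | [], _ => by simp [cont]
  | b :: l, h => by
      have := cont_pos h.tail
      have hb := h.head
      simp only [cont]
      nlinarith

theorem cont_lt : ∀ {l : List ℕ}, Canon l → (cont l).2 < (cont l).1
  | [], _ => by simp [cont]
  | [b], h => by simp only [Canon] at h; simp [cont]; omega
  | b :: c :: l, h => by
      have h1 := cont_lt h.tail
      have h2 := cont_pos h.tail.tail.posL
      have hb := h.posL.head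
      have hc := h.tail.posL.head
      simp only [cont] at *
      nlinarith

theorem cont_coprime : ∀ (l : List ℕ), Nat.Coprime (cont l).1 (cont l).2
  | [] => by simp [cont]
  | b :: l => by
      have := cont_coprime l
      simp only [cont]
      rw [Nat.coprime_comm]
      simpa using this

theorem cont_rev : ∀ (u v : List ℕ), (cont (u.reverse ++ v)).1 =
    (cont u).1 * (cont v).1 + (cont u).2 * (cont v).2
  | [], v => by simp [cont]
  | c :: u, v => by
      have := cont_rev u (c :: v)
      simp only [List.reverse_cons, List.append_assoc, List.singleton_append, this, cont]
      ring

theorem cont_reverse (u : List ℕ) : (cont u.reverse).1 = (cont u).1 := by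
  have := cont_rev u []
  simpa [cont] using this

theorem cont_zip (u v : List ℕ) (b : ℕ) : (cont (u.reverse ++ b :: v)).1 =
    b * (cont u).1 * (cont v).1 + (cont u).2 * (cont v).1 + (cont u).1 * (cont v).2 := by
  rw [cont_rev]; simp only [cont]; ring

/-- `K(u ++ v) ≥ K(u) K(v)` -/
theorem cont_mul_le (u v : List ℕ) : (cont u).1 * (cont v).1 ≤ (cont (u ++ v)).1 := by
  have := cont_rev u.reverse v
  rw [List.reverse_reverse, cont_reverse] at this
  rw [this]; exact Nat.le_add_right _ _

theorem cfList_spec : ∀ (a q : ℕ), a < q → Nat.Coprime q a →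
    cont (cfList q a) = (q, a) ∧ Canon (cfList q a) := by
  intro a
  induction a using Nat.strong_induction_on with
  | _ a ih =>
    intro q haq hc
    rcases Nat.eq_zero_or_pos a with rfl | ha
    · rw [cfList_zero]
      simp at hc
      simp [cont, hc, Canon]
    · rw [cfList_pos q a ha]
      have hlt := Nat.mod_lt q ha
      have hc' : Nat.Coprime a (q % a) := by
        rw [Nat.coprime_comm]; unfold Nat.Coprime; rw [← Nat.gcd_rec]; exact hc.symm
      obtain ⟨h1, h2⟩ := ih (q % a) hlt a hlt hc'
      constructor
      · simp only [cont, h1]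
        rw [Nat.div_add_mod']
      · by_cases he : cfList a (q % a) = []
        · rw [he] at h1 ⊢
          simp only [cont, Prod.mk.injEq] at h1
          simp only [Canon]
          rw [← h1.1]; simp; omega
        · exact Canon.cons (Nat.div_pos haq.le ha) he h2

theorem cfList_unique : ∀ (l : List ℕ), Canon l → l = cfList (cont l).1 (cont l).2
  | [], _ => by simp [cont, cfList_zero]
  | b :: l, h => by
      have h1 := cfList_unique l h.tail
      have h2 := cont_lt h.tail
      have h3 := cont_pos h.tail.posL
      simp only [cont]
      rw [cfList_pos _ _ h3]
      have e1 : (b * (cont l).1 + (cont l).2) / (cont l).1 = b := by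
        rw [mul_comm, Nat.mul_add_div h3, Nat.div_eq_of_lt h2, add_zero]
      have e2 : (b * (cont l).1 + (cont l).2) % (cont l).1 = (cont l).2 := by
        rw [mul_comm, Nat.mul_add_mod, Nat.mod_eq_of_lt h2]
      rw [e1, e2, ← h1]

theorem canon_inj {l l' : List ℕ} (h : Canon l) (h' : Canon l') (e : cont l = cont l') :
    l = l' := by
  rw [cfList_unique l h, cfList_unique l' h', e]

theorem cont_eq_imp {l : List ℕ} (h : PosL l) (e : (cont l).2 = (cont l).1) : l = [1] := by
  cases l with
  | nil => simp [cont] at e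
  | cons b l =>
    have hb := h.head
    have hp := cont_pos h.tail
    simp only [cont] at e
    have hb1 : b = 1 := by nlinarith
    have h0 : (cont l).2 = 0 := by nlinarith
    cases l with
    | nil => rw [hb1]
    | cons c l =>
      have := cont_pos h.tail.tail
      simp only [cont] at h0
      omega

theorem cont_zero_imp {l : List ℕ} (h : PosL l) (e : (cont l).2 = 0) : l = [] := by
  cases l with
  | nil => rfl
  | cons c l =>
      have := cont_pos h.tail
      simp only [cont] at e
      omega

theorem pos_inj : ∀ {l l' : List ℕ}, PosL l → PosL l' → cont l = cont l' →
    l.length % 2 = l'.length % 2 → l = l'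
  | [], l', _, h', e, _ => by
      have : (cont l').2 = 0 := by rw [← e]; simp [cont]
      rw [cont_zero_imp h' this]
  | b :: l, [], h, _, e, _ => by
      have : (cont (b :: l)).2 = 0 := by rw [e]; simp [cont]
      rw [cont_zero_imp h this]
  | b :: l, b' :: l', h, h', e, par => by
      have par' : l.length % 2 = l'.length % 2 := by
        simp only [List.length_cons] at par; omega
      have hp := cont_pos h.tail
      have hl := cont_le h.tail
      have hl' := cont_le h'.tail
      simp only [cont, Prod.mk.injEq] at e
      obtain ⟨e1, e2⟩ := e
      rw [← e2] at e1 hl'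
      have key : (cont l).2 = (cont l').2 := by
        rcases hl.lt_or_eq with h1 | h1
        · rcases hl'.lt_or_eq with h2 | h2
          · have : (b * (cont l).1 + (cont l).2) % (cont l).1 =
                (b' * (cont l).1 + (cont l').2) % (cont l).1 := by rw [e1]
            rwa [mul_comm b, mul_comm b', Nat.mul_add_mod, Nat.mul_add_mod, Nat.mod_eq_of_lt h1,
              Nat.mod_eq_of_lt h2] at this
          · exfalso
            have := cont_eq_imp h'.tail (by rw [h2, e2])
            rw [this] at par' e2
            simp [cont] at e2
            have h0 : (cont l).2 = 0 := by omega
            have := cont_zero_imp h.tail h0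
            rw [this] at par'; simp at par'
        · have := cont_eq_imp h.tail h1
          rcases hl'.lt_or_eq with h2 | h2
          · exfalso
            rw [this] at par' h2 
            simp [cont] at h2
            have := cont_zero_imp h'.tail h2
            rw [this] at par'; simp at par'
          · rw [h1, h2]
      have hll : l = l' := pos_inj h.tail h'.tail (Prod.ext e2 key) par'
      have hb : b = b' := by
        rw [← key] at e1
        exact Nat.eq_of_mul_eq_mul_right hp (by omega)
      rw [hb, hll]

theorem exists_pos_list : ∀ (x' x : ℕ), 1 ≤ x' → x' < x → Nat.Coprime x x' → ∀ par : ℕ, par < 2 →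
    ∃ l, PosL l ∧ cont l = (x, x') ∧ l.length % 2 = par := by
  intro x'
  induction x' using Nat.strong_induction_on with
  | _ x' ih =>
    intro x h1 h2 hc par hpar
    rcases Nat.lt_or_ge 1 x' with h3 | h3
    · have hlt := Nat.mod_lt x h1
      have hc' : Nat.Coprime x' (x % x') := by
        rw [Nat.coprime_comm]; unfold Nat.Coprime; rw [← Nat.gcd_rec]; exact hc.symm
      have hpos : 1 ≤ x % x' := by
        rcases Nat.eq_zero_or_pos (x % x') with h0 | h0
        · rw [h0] at hc'; simp at hc'; omega
        · exact h0
      obtain ⟨l, hl1, hl2, hl3⟩ := ih (x % x') hlt x' hpos hlt hc' (1 - par) (by omega)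
      refine ⟨(x / x') :: l, PosL.cons (Nat.div_pos h2.le h1) hl1, ?_, ?_⟩
      · simp only [cont, hl2]; rw [Nat.div_add_mod']
      · simp only [List.length_cons]; omega
    · have : x' = 1 := by omega
      subst this
      interval_cases par
      · refine ⟨[x - 1, 1], PosL.cons (by omega) (PosL.cons le_rfl PosL.nil), ?_, by simp⟩
        simp [cont]; omega
      · refine ⟨[x], PosL.cons (by omega) PosL.nil, ?_, by simp⟩
        simp [cont]


def bb (q a i : ℕ) : ℕ := (cfList q a).getD i 0
def uL (q a i : ℕ) : List ℕ := ((cfList q a).take i).reverse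
def vL (q a i : ℕ) : List ℕ := (cfList q a).drop (i + 1)
def xx (q a i : ℕ) : ℕ := (cont (uL q a i)).1
def yy (q a i : ℕ) : ℕ := (cont (vL q a i)).1
/-- index set of all (a, i) -/
def DD (q : ℕ) : Finset ((_ : ℕ) × ℕ) :=
  (Finset.Icc 1 (q - 1)).sigma (fun a => Finset.range (cfList q a).length)

theorem zip_eq (q a i : ℕ) (hi : i < (cfList q a).length) :
    cfList q a = (uL q a i).reverse ++ bb q a i :: vL q a i := by
  unfold uL bb vL
  rw [List.reverse_reverse, List.getD_eq_getElem _ _ hi, List.getElem_cons_drop, List.take_append_drop]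

theorem uL_len (q a i : ℕ) (hi : i < (cfList q a).length) : (uL q a i).length = i := by
  simp [uL]; omega

theorem mem_DD {q : ℕ} {p : (_ : ℕ) × ℕ} : p ∈ DD q ↔
    (1 ≤ p.1 ∧ p.1 ≤ q - 1) ∧ p.2 < (cfList q p.1).length := by
  simp [DD]

theorem cf_spec {q a : ℕ} (hq : q.Prime) (h1 : 1 ≤ a) (h2 : a ≤ q - 1) :
    cont (cfList q a) = (q, a) ∧ Canon (cfList q a) := by
  have := hq.two_le
  apply cfList_spec a q (by omega)
  rw [Nat.Prime.coprime_iff_not_dvd hq]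
  intro h
  have := Nat.le_of_dvd (by omega) h
  omega

theorem facts {q a i : ℕ} (hq : q.Prime) (h1 : 1 ≤ a) (h2 : a ≤ q - 1)
    (hi : i < (cfList q a).length) :
    PosL (uL q a i) ∧ Canon (vL q a i) ∧ 1 ≤ bb q a i ∧
    q = bb q a i * xx q a i * yy q a i + (cont (uL q a i)).2 * yy q a i
      + xx q a i * (cont (vL q a i)).2 ∧ 1 ≤ xx q a i ∧ 1 ≤ yy q a i ∧
      Canon (bb q a i :: vL q a i) := by
  obtain ⟨hc, hcan⟩ := cf_spec hq h1 h2
  have hz := zip_eq q a i hi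
  have hz2 := hz
  rw [hz2] at hcan
  have hpos := hcan.posL
  have hu : PosL (uL q a i) := by simpa using hpos.left.rev
  have hv : Canon (bb q a i :: vL q a i) := hcan.right
  refine ⟨hu, hv.tail, hv.posL.head, ?_, cont_pos hu, cont_pos hv.tail.posL, hv⟩
  have := cont_zip (uL q a i) (vL q a i) (bb q a i)
  rw [← hz, hc] at this
  exact this

theorem xy_le {q a i : ℕ} (hq : q.Prime) (h1 : 1 ≤ a) (h2 : a ≤ q - 1)
    (hi : i < (cfList q a).length) : bb q a i * (xx q a i * yy q a i) ≤ q := by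
  obtain ⟨_, _, _, h, _⟩ := facts hq h1 h2 hi
  nlinarith

theorem xy_ge {q a i : ℕ} (hq : q.Prime) (h1 : 1 ≤ a) (h2 : a ≤ q - 1)
    (hi : i < (cfList q a).length) : q ≤ (bb q a i + 2) * (xx q a i * yy q a i) := by
  obtain ⟨hu, hv, _, h, _⟩ := facts hq h1 h2 hi
  have h3 := cont_le hu
  have h4 := (cont_lt hv).le
  change _ ≤ xx q a i at h3
  change _ ≤ yy q a i at h4
  nlinarith [Nat.mul_le_mul_right (yy q a i) h3, Nat.mul_le_mul_left (xx q a i) h4]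

theorem xy_lt {q a i : ℕ} (hq : q.Prime) (h1 : 1 ≤ a) (h2 : a ≤ q - 1)
    (hi : i < (cfList q a).length) : xx q a i * yy q a i < q := by
  obtain ⟨hu, hv, hb, h, hx, hy, hcan⟩ := facts hq h1 h2 hi
  have hle : xx q a i * yy q a i ≤ q := by
    have := xy_le hq h1 h2 hi
    nlinarith [Nat.mul_pos hx hy]
  refine lt_of_le_of_ne hle ?_
  intro he
  have hb1 : bb q a i = 1 := by
    have hpos := Nat.mul_pos hx hy
    have := xy_le hq h1 h2 hi
    nlinarith
  rw [hb1] at h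
  have e1 : xx q a i * (cont (vL q a i)).2 = 0 := by nlinarith
  have e2 : (cont (vL q a i)).2 = 0 := by
    rcases Nat.mul_eq_zero.1 e1 with h | h <;> omega
  have := cont_zero_imp hv.posL e2
  rw [this, hb1] at hcan
  simp [Canon] at hcan

theorem coprime_of_eq {q x y b x' y' : ℕ} (hq : q.Prime) (h : q = b * x * y + x' * y + x * y')
    (hlt : x * y < q) (hx : 1 ≤ x) (hy : 1 ≤ y) : Nat.Coprime x y := by
  have hd : Nat.gcd x y ∣ q := by
    rw [h]
    have h1 := Nat.gcd_dvd_left x y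
    have h2 := Nat.gcd_dvd_right x y
    exact dvd_add (dvd_add (h2.mul_left _) (h2.mul_left _)) (h1.mul_right _)
  rcases (Nat.dvd_prime hq).1 hd with h | h
  · exact h
  · exfalso
    have := Nat.gcd_le_left y hx
    nlinarith

theorem xy_coprime {q a i : ℕ} (hq : q.Prime) (h1 : 1 ≤ a) (h2 : a ≤ q - 1)
    (hi : i < (cfList q a).length) : Nat.Coprime (xx q a i) (yy q a i) := by
  obtain ⟨hu, hv, hb, h, hx, hy, hcan⟩ := facts hq h1 h2 hi
  exact coprime_of_eq hq h (xy_lt hq h1 h2 hi) hx hy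

theorem modEq_helper {x y A B x' x2' : ℕ} (hc : Nat.Coprime x y)
    (h : x * A + x' * y = x * B + x2' * y) : x' ≡ x2' [MOD x] := by
  have h1 : x' * y ≡ x2' * y [MOD x] := by
    have : (x * A + x' * y) % x = (x * B + x2' * y) % x := by rw [h]
    rw [Nat.mul_add_mod, Nat.mul_add_mod] at this
    exact this
  exact Nat.ModEq.cancel_right_of_coprime hc h1

theorem DD_inj {q a i a2 i2 : ℕ} (hq : q.Prime) (h1 : 1 ≤ a) (h2 : a ≤ q - 1)
    (hi : i < (cfList q a).length) (h1' : 1 ≤ a2) (h2' : a2 ≤ q - 1)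
    (hi' : i2 < (cfList q a2).length) (ex : xx q a i = xx q a2 i2) (ey : yy q a i = yy q a2 i2)
    (ep : i % 2 = i2 % 2) : a = a2 ∧ i = i2 := by
  obtain ⟨hu, hv, hb, h, hx, hy, hcan⟩ := facts hq h1 h2 hi
  obtain ⟨hu', hv', hb', h', hx', hy', hcan'⟩ := facts hq h1' h2' hi'
  have hcop := xy_coprime hq h1 h2 hi
  rw [← ex, ← ey] at h'
  have l1 := cont_le hu
  have l1' := cont_le hu'
  have l2 := cont_lt hv
  have l2' := cont_lt hv'
  change _ ≤ xx q a i at l1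
  change _ ≤ xx q a2 i2 at l1'
  change _ < yy q a i at l2
  change _ < yy q a2 i2 at l2'
  rw [← ex] at l1'
  rw [← ey] at l2'
  have eqq := h.symm.trans h'
  have m2 : (cont (vL q a i)).2 ≡ (cont (vL q a2 i2)).2 [MOD yy q a i] := by
    refine modEq_helper (A := bb q a i * xx q a i + (cont (uL q a i)).2)
      (B := bb q a2 i2 * xx q a i + (cont (uL q a2 i2)).2) hcop.symm ?_
    linarith
  have e2 : (cont (vL q a i)).2 = (cont (vL q a2 i2)).2 := Nat.ModEq.eq_of_lt_of_lt m2 l2 l2'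
  have ev : vL q a i = vL q a2 i2 := canon_inj hv hv' (Prod.ext ey e2)
  have m1 : (cont (uL q a i)).2 ≡ (cont (uL q a2 i2)).2 [MOD xx q a i] := by
    refine modEq_helper (A := bb q a i * yy q a i + (cont (vL q a i)).2)
      (B := bb q a2 i2 * yy q a i + (cont (vL q a2 i2)).2) hcop ?_
    linarith
  have par : (uL q a i).length % 2 = (uL q a2 i2).length % 2 := by
    rw [uL_len _ _ _ hi, uL_len _ _ _ hi', ep]
  have e1 : (cont (uL q a i)).2 = (cont (uL q a2 i2)).2 := by
    rcases l1.lt_or_eq with g1 | g1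
    · rcases l1'.lt_or_eq with g2 | g2
      · exact Nat.ModEq.eq_of_lt_of_lt m1 g1 g2
      · exfalso
        have hL := cont_eq_imp hu' (by rw [g2, ex]; rfl)
        rw [hL] at g2 par
        simp [cont] at g2
        rw [← g2] at g1
        have := cont_zero_imp hu (by omega)
        rw [this] at par; simp at par
    · rcases l1'.lt_or_eq with g2 | g2
      · exfalso
        have hL := cont_eq_imp hu g1
        rw [hL] at g1 par
        simp [cont] at g1
        rw [← g1] at g2
        have := cont_zero_imp hu' (by omega)
        rw [this] at par; simp at par
      · rw [g1, g2]
  have eu : uL q a i = uL q a2 i2 := pos_inj hu hu' (Prod.ext ex e1) par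
  have eb : bb q a i = bb q a2 i2 := by
    rw [e1, e2] at eqq
    have : bb q a i * (xx q a i * yy q a i) = bb q a2 i2 * (xx q a i * yy q a i) := by linarith
    exact Nat.eq_of_mul_eq_mul_right (Nat.mul_pos hx hy) this
  have hl : cfList q a = cfList q a2 := by
    rw [zip_eq q a i hi, zip_eq q a2 i2 hi', eu, eb, ev]
  constructor
  · have k1 := (cf_spec hq h1 h2).1
    have k2 := (cf_spec hq h1' h2').1
    rw [hl, k2] at k1
    simpa using k1.symm
  · have k1 := uL_len _ _ _ hi
    have k2 := uL_len _ _ _ hi'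
    rw [eu] at k1; omega

theorem exists_residue {q x y : ℕ} (hc : Nat.Coprime x y) (hx : 2 ≤ x) (hqx : Nat.Coprime q x) :
    ∃ x', 1 ≤ x' ∧ x' < x ∧ Nat.Coprime x x' ∧ x' * y ≡ q [MOD x] := by
  obtain ⟨t, ht⟩ := Nat.exists_mul_mod_eq_one_of_coprime hc.symm (by omega : 1 < x)
  have hmod : (q * t) % x * y ≡ q [MOD x] := by
    have h1 : (q * t) % x ≡ q * t [MOD x] := Nat.mod_modEq _ _
    have h2 : y * t ≡ 1 [MOD x] := by
      unfold Nat.ModEq; rw [ht.2, Nat.mod_eq_of_lt (by omega : 1 < x)]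
    calc (q * t) % x * y ≡ q * t * y [MOD x] := h1.mul_right y
      _ = q * (y * t) := by ring
      _ ≡ q * 1 [MOD x] := h2.mul_left q
      _ = q := by ring
  have hcop : Nat.Coprime x ((q * t) % x) := by
    have h3 : Nat.gcd x ((q * t) % x) ∣ q := by
      have hd := Nat.gcd_dvd_left x ((q * t) % x)
      have hm := hmod.of_dvd hd
      exact (Nat.modEq_zero_iff_dvd).1 (hm.symm.trans
        ((Nat.modEq_zero_iff_dvd).2 ((Nat.gcd_dvd_right x ((q * t) % x)).mul_right y)))
    have h4 := Nat.dvd_gcd h3 (Nat.gcd_dvd_left x ((q * t) % x))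
    rw [hqx] at h4
    exact Nat.dvd_one.1 h4
  refine ⟨(q * t) % x, ?_, Nat.mod_lt _ (by omega), hcop, hmod⟩
  rcases Nat.eq_zero_or_pos ((q * t) % x) with h0 | h0
  · rw [h0] at hcop; simp at hcop; omega
  · exact h0

theorem DD_surj {q x y par : ℕ} (hq : q.Prime) (hx : 1 ≤ x) (hy : 1 ≤ y) (hc : Nat.Coprime x y)
    (hxy : 4 * (x * y) ≤ q) (hpar : par < 2) : ∃ a i, 1 ≤ a ∧ a ≤ q - 1 ∧
      i < (cfList q a).length ∧ xx q a i = x ∧ yy q a i = y ∧ i % 2 = par := by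
  have hxq : Nat.Coprime q x := by
    rw [Nat.Prime.coprime_iff_not_dvd hq]
    intro h; have := Nat.le_of_dvd (by omega) h; nlinarith
  have hyq : Nat.Coprime q y := by
    rw [Nat.Prime.coprime_iff_not_dvd hq]
    intro h; have := Nat.le_of_dvd (by omega) h; nlinarith
  obtain ⟨u, hu, hu1, hu2, hu3, hu4⟩ : ∃ u, PosL u ∧ (cont u).1 = x ∧ (cont u).2 ≤ x ∧
      u.length % 2 = par ∧ (cont u).2 * y ≡ q [MOD x] := by
    rcases Nat.lt_or_ge 1 x with h | h
    · obtain ⟨x', k1, k2, k3, k4⟩ := exists_residue hc h hxq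
      obtain ⟨l, hl1, hl2, hl3⟩ := exists_pos_list x' x k1 k2 k3 par hpar
      exact ⟨l, hl1, by rw [hl2], by rw [hl2]; exact k2.le, hl3, by rw [hl2]; exact k4⟩
    · have : x = 1 := by omega
      subst this
      interval_cases par
      · exact ⟨[], PosL.nil, rfl, by simp [cont], rfl, Nat.modEq_one⟩
      · exact ⟨[1], PosL.cons le_rfl PosL.nil, rfl, by simp [cont], rfl, Nat.modEq_one⟩
  obtain ⟨v, hv, hv1, hv2, hv4⟩ : ∃ v, Canon v ∧ (cont v).1 = y ∧ (cont v).2 ≤ y ∧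
      (cont v).2 * x ≡ q [MOD y] := by
    rcases Nat.lt_or_ge 1 y with h | h
    · obtain ⟨y', k1, k2, k3, k4⟩ := exists_residue hc.symm h hyq
      obtain ⟨l1, l2⟩ := cfList_spec y' y k2 k3
      exact ⟨_, l2, by rw [l1], by rw [l1]; exact k2.le, by rw [l1]; exact k4⟩
    · have : y = 1 := by omega
      subst this
      exact ⟨[], trivial, rfl, by simp [cont], Nat.modEq_one⟩
  have hS : (cont u).2 * y + x * (cont v).2 ≤ 2 * (x * y) := by
    nlinarith [Nat.mul_le_mul_right y hu2, Nat.mul_le_mul_left x hv2]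
  have hmx : (cont u).2 * y + x * (cont v).2 ≡ q [MOD x] := by
    have : x * (cont v).2 ≡ 0 [MOD x] := (Nat.modEq_zero_iff_dvd).2 (Dvd.intro _ rfl)
    simpa using hu4.add this
  have hmy : (cont u).2 * y + x * (cont v).2 ≡ q [MOD y] := by
    have : (cont u).2 * y ≡ 0 [MOD y] := (Nat.modEq_zero_iff_dvd).2 (Dvd.intro_left _ rfl)
    rw [mul_comm x]
    simpa using this.add hv4
  have hm := (Nat.modEq_and_modEq_iff_modEq_mul hc).1 ⟨hmx, hmy⟩
  obtain ⟨b, hb⟩ := (Nat.modEq_iff_dvd' (by omega)).1 hm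
  have hbq : q = b * x * y + (cont u).2 * y + x * (cont v).2 := by
    have : q = x * y * b + ((cont u).2 * y + x * (cont v).2) := by omega
    rw [this]; ring
  have hb2 : 2 ≤ b := by
    have hpos := Nat.mul_pos hx hy
    by_contra hlt
    have : x * y * b ≤ x * y * 1 := Nat.mul_le_mul_left _ (by omega)
    nlinarith
  have hbv : Canon (b :: v) := by
    cases v with
    | nil => exact hb2
    | cons c v => exact ⟨by omega, hv⟩
  have hcan : Canon (u.reverse ++ b :: v) := Canon.app hu.rev (by simp) hbv
  set l := u.reverse ++ b :: v with hl
  have hK : (cont l).1 = q := by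
    rw [hl, cont_zip, hu1, hv1, ← hbq]
  have hun := cfList_unique l hcan
  have hlt := cont_lt hcan
  rw [hK] at hun hlt
  have hlen : u.length < l.length := by simp [hl]
  refine ⟨(cont l).2, u.length, ?_, by omega, by rw [← hun]; exact hlen, ?_, ?_, hu3⟩
  · by_contra h0
    have := cont_zero_imp hcan.posL (by omega)
    rw [this] at hlen; simp at hlen
  · unfold xx uL
    rw [← hun, hl]
    simp [hu1]
  · unfold yy vL
    rw [← hun, hl]
    have : List.drop (u.length + 1) u.reverse = [] := by
      apply List.drop_eq_nil_of_le; simp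
    simp [hv1, List.drop_append, this]

theorem euler_id (w z : List ℕ) (b c : ℕ) : ∃ s : ℤ, (s = 1 ∨ s = -1) ∧
    ((cont (b :: w)).1 : ℤ) * (cont (b :: (w ++ c :: z))).2
      - (cont (b :: (w ++ c :: z))).1 * (cont (b :: w)).2 = s * (cont z).1 := by
  induction w generalizing b with
  | nil => exact ⟨-1, Or.inr rfl, by simp [cont]⟩
  | cons d w ih =>
    obtain ⟨s, hs, h⟩ := ih d
    refine ⟨-s, by rcases hs with rfl | rfl <;> simp, ?_⟩
    have e1 : ∀ l : List ℕ, cont (b :: l) = (b * (cont l).1 + (cont l).2, (cont l).1) := fun _ => rfl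
    rw [List.cons_append, e1, e1]
    push_cast
    linear_combination (-1) * h

theorem cont_drop_le {l : List ℕ} (h : PosL l) (n : ℕ) : (cont (l.drop n)).1 ≤ (cont l).1 := by
  have h1 := cont_mul_le (l.take n) (l.drop n)
  rw [List.take_append_drop] at h1
  have h2 : 1 ≤ (cont (l.take n)).1 := by
    apply cont_pos
    rw [← List.take_append_drop n l] at h
    exact h.left
  nlinarith

/-- decomposition at two places -/
theorem zip2 (l : List ℕ) (i j : ℕ) (hij : i < j) (hj : j < l.length) :
    ∃ w : List ℕ, l.drop (i + 1) = w ++ l.getD j 0 :: l.drop (j + 1) ∧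
      l.take j = l.take i ++ l.getD i 0 :: w ∧ w.length = j - i - 1 := by
  refine ⟨(l.drop (i + 1)).take (j - (i + 1)), ?_, ?_, ?_⟩
  · conv_lhs => rw [← List.take_append_drop (j - (i + 1)) (l.drop (i + 1))]
    rw [List.drop_drop, List.getD_eq_getElem _ _ hj, List.getElem_cons_drop]
    congr 2; omega
  · rw [List.getD_eq_getElem _ _ (by omega)]
    conv_lhs => rw [← List.take_append_drop i (l.take j)]
    rw [List.take_take, min_eq_left (by omega)]
    congr 1
    rw [List.drop_take, ← List.getElem_cons_drop (by omega : i < l.length)]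
    have : j - i = (j - (i + 1)) + 1 := by omega
    rw [this, List.take_succ_cons]
  · simp; omega

theorem pair_rel {q a i j : ℕ} (hq : q.Prime) (h1 : 1 ≤ a) (h2 : a ≤ q - 1) (hij : i < j)
    (hj : j < (cfList q a).length) : ∃ (m : ℕ) (s : ℤ), 1 ≤ m ∧ (s = 1 ∨ s = -1) ∧
      (xx q a j : ℤ) * yy q a i = q * m + s * (xx q a i * yy q a j) ∧
      xx q a i ≤ xx q a j ∧ yy q a j ≤ yy q a i := by
  have hi : i < (cfList q a).length := by omega
  obtain ⟨hu, hv, hb, h, hx, hy, hcan⟩ := facts hq h1 h2 hi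
  obtain ⟨hu', hv', hb', h', hx', hy', hcan'⟩ := facts hq h1 h2 hj
  obtain ⟨w, w1, w2, w3⟩ := zip2 (cfList q a) i j hij hj
  have hvi : vL q a i = w ++ bb q a j :: vL q a j := w1
  have hz := zip_eq q a i hi
  have hxj : xx q a j = (cont ((uL q a i).reverse ++ bb q a i :: w)).1 := by
    unfold xx
    rw [← cont_reverse]; unfold uL; rw [List.reverse_reverse, List.reverse_reverse, w2]; rfl
  have hw : PosL w := by
    have := hv.posL; rw [hvi] at this; exact this.left
  obtain ⟨s, hs, hid⟩ := euler_id w (vL q a j) (bb q a i) (bb q a j)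
  rw [← hvi] at hid
  have hQ : q = (cont (uL q a i)).1 * (cont (bb q a i :: vL q a i)).1
      + (cont (uL q a i)).2 * (cont (bb q a i :: vL q a i)).2 := by
    rw [← cont_rev, ← hz, (cf_spec hq h1 h2).1]
  refine ⟨(cont w).1, s, cont_pos hw, hs, ?_, ?_, ?_⟩
  · rw [hxj, cont_rev]
    have hQ' : (q : ℤ) = (cont (uL q a i)).1 * (cont (bb q a i :: vL q a i)).1
      + (cont (uL q a i)).2 * (cont (bb q a i :: vL q a i)).2 := by exact_mod_cast hQ
    rw [hQ']
    have e1 : ∀ (l : List ℕ), (cont (bb q a i :: l)).2 = (cont l).1 := fun _ => rfl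
    rw [e1, e1] at *
    change _ = s * (yy q a j : ℤ) at hid
    change ((cont (bb q a i :: w)).1 : ℤ) * (yy q a i : ℤ) - _ = _ at hid
    unfold xx
    have e2 : (cont (vL q a i)).1 = yy q a i := rfl
    rw [e2]
    push_cast
    linear_combination ((cont (uL q a i)).1 : ℤ) * hid
  · rw [hxj]
    have := cont_mul_le (uL q a i).reverse (bb q a i :: w)
    rw [cont_reverse] at this
    have h3 := cont_pos (PosL.cons hb hw)
    change xx q a i * _ ≤ _ at this
    nlinarith
  · have e : vL q a j = (vL q a i).drop (j - i) := by
      unfold vL; rw [List.drop_drop]; congr 1; omega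
    unfold yy; rw [e]
    exact cont_drop_le hv.posL _

theorem len_bound : ∀ (l : List ℕ), PosL l → 2 ^ (l.length / 2) ≤ (cont l).1
  | [], _ => by simp [cont]
  | [b], h => by have := h.head; simp [cont]; omega
  | b :: c :: l, h => by
      have h1 := len_bound l h.tail.tail
      have hb := h.head
      have hc := h.tail.head
      have : (b :: c :: l).length / 2 = l.length / 2 + 1 := by simp; omega
      rw [this, pow_succ]
      simp only [cont]
      have hl := cont_pos h.tail.tail
      have : (cont l).1 ≤ c * (cont l).1 := Nat.le_mul_of_pos_left _ hc
      have : c * (cont l).1 + (cont l).2 ≤ b * (c * (cont l).1 + (cont l).2) :=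
        Nat.le_mul_of_pos_left _ hb
      nlinarith


noncomputable def GG (b : ℕ) : ℝ := Real.sqrt b * (1 + Real.log b)

theorem GG_nonneg (b : ℕ) : 0 ≤ GG b := by
  unfold GG
  have := Real.log_natCast_nonneg b
  positivity

theorem one_add_log_le {t : ℝ} (ht : 0 < t) : 1 + Real.log t ≤ 4 * t ^ (1/4 : ℝ) := by
  have h := Real.log_le_sub_one_of_pos (Real.rpow_pos_of_pos ht (1/4 : ℝ))
  rw [Real.log_rpow ht] at h
  linarith

theorem GG_le (b : ℕ) (hb : 1 ≤ b) : GG b ≤ 4 * (b : ℝ) ^ (3/4 : ℝ) := by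
  have hb' : (0 : ℝ) < b := by exact_mod_cast hb
  unfold GG
  have h := one_add_log_le hb'
  calc Real.sqrt b * (1 + Real.log b) ≤ Real.sqrt b * (4 * (b : ℝ) ^ (1/4 : ℝ)) :=
        mul_le_mul_of_nonneg_left h (Real.sqrt_nonneg _)
    _ = 4 * ((b : ℝ) ^ (1/2 : ℝ) * (b : ℝ) ^ (1/4 : ℝ)) := by rw [Real.sqrt_eq_rpow]; ring
    _ = _ := by rw [← Real.rpow_add hb']; norm_num

theorem GG_sum : ∃ C : ℝ, 0 < C ∧ ∀ S : Finset ℕ, (∀ b ∈ S, 1 ≤ b) →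
    ∑ b ∈ S, GG b / (b : ℝ) ^ 2 ≤ C := by
  have hs : Summable (fun n : ℕ => 4 * (n : ℝ) ^ (-(5/4) : ℝ)) := by
    apply Summable.mul_left
    exact Real.summable_nat_rpow.2 (by norm_num)
  refine ⟨∑' n : ℕ, 4 * (n : ℝ) ^ (-(5/4) : ℝ) + 1, ?_, ?_⟩
  · have : 0 ≤ ∑' n : ℕ, 4 * (n : ℝ) ^ (-(5/4) : ℝ) := tsum_nonneg (fun n => by positivity)
    linarith
  · intro S hS
    have h1 : ∑ b ∈ S, GG b / (b : ℝ) ^ 2 ≤ ∑ b ∈ S, 4 * (b : ℝ) ^ (-(5/4) : ℝ) := by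
      apply Finset.sum_le_sum
      intro b hb
      have hb' : (0 : ℝ) < b := by exact_mod_cast hS b hb
      rw [div_le_iff₀ (by positivity)]
      refine (GG_le b (hS b hb)).trans (le_of_eq ?_)
      rw [mul_assoc, ← Real.rpow_natCast, ← Real.rpow_add hb']
      norm_num
    have h2 := hs.sum_le_tsum S (fun n _ => by positivity)
    linarith

theorem harm_le (N : ℕ) : ∑ x ∈ Finset.Icc 1 N, 1 / (x : ℝ) ≤ 1 + Real.log N := by
  have h := harmonic_le_one_add_log N
  rw [harmonic_eq_sum_Icc] at h
  push_cast at h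
  simpa [one_div] using h

theorem list_sum_le (N : ℕ) (S : Finset (List ℕ)) (hS : ∀ l ∈ S, PosL l ∧ (cont l).1 ≤ N) :
    ∑ l ∈ S, 1 / ((cont l).1 : ℝ) ^ 2 ≤ 4 * (1 + Real.log N) := by
  classical
  have hmaps : ∀ l ∈ S, (cont l).1 ∈ Finset.Icc 1 N := fun l hl =>
    Finset.mem_Icc.2 ⟨cont_pos (hS l hl).1, (hS l hl).2⟩
  rw [← Finset.sum_fiberwise_of_maps_to hmaps]
  calc _ ≤ ∑ x ∈ Finset.Icc 1 N, 4 * (1 / (x : ℝ)) := ?_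
    _ ≤ _ := by rw [← Finset.mul_sum]; linarith [harm_le N]
  apply Finset.sum_le_sum
  intro x hx
  have hx1 := (Finset.mem_Icc.1 hx).1
  have hx0 : (0 : ℝ) < x := by exact_mod_cast hx1
  have hcard : (S.filter (fun l => (cont l).1 = x)).card ≤ (x + 1) * 2 := by
    have := Finset.card_le_card_of_injOn (s := S.filter (fun l => (cont l).1 = x))
      (t := Finset.range (x + 1) ×ˢ Finset.range 2) (fun l => ((cont l).2, l.length % 2)) ?_ ?_
    · simpa using this
    · intro l hl
      obtain ⟨h1, h2⟩ := Finset.mem_filter.1 hl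
      have h3 := cont_le (hS l h1).1
      simp only [Finset.coe_product, Set.mem_prod, Finset.coe_range, Set.mem_Iio]
      constructor
      · omega
      · exact Nat.mod_lt _ (by norm_num)
    · intro l hl l' hl' e
      obtain ⟨h1, h2⟩ := Finset.mem_filter.1 hl
      obtain ⟨h1', h2'⟩ := Finset.mem_filter.1 hl'
      simp only [Prod.mk.injEq] at e
      exact pos_inj (hS l h1).1 (hS l' h1').1 (Prod.ext (h2.trans h2'.symm) e.1) e.2
  have : ∑ l ∈ S.filter (fun l => (cont l).1 = x), 1 / ((cont l).1 : ℝ) ^ 2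
      = (S.filter (fun l => (cont l).1 = x)).card * (1 / (x : ℝ) ^ 2) := by
    rw [Finset.sum_congr rfl (g := fun _ => 1 / (x : ℝ) ^ 2)]
    · simp
    · intro l hl; rw [(Finset.mem_filter.1 hl).2]
  rw [this]
  have hc : ((S.filter (fun l => (cont l).1 = x)).card : ℝ) ≤ (x + 1) * 2 := by exact_mod_cast hcard
  have hx1' : (1 : ℝ) ≤ x := by exact_mod_cast hx1
  calc _ ≤ ((x : ℝ) + 1) * 2 * (1 / (x : ℝ) ^ 2) := by gcongr
    _ ≤ (x * 2) * 2 * (1 / (x : ℝ) ^ 2) := by gcongr; linarith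
    _ = 4 * (1 / (x : ℝ)) := by field_simp; ring

theorem count_le (q Y Y' : ℕ) (hY : 1 ≤ Y) (hq : Y ^ 2 ≤ q) (hc : Nat.Coprime Y Y')
    (U : Finset (List ℕ)) (hU : ∀ u ∈ U, PosL u ∧ (cont u).1 * Y + (cont u).2 * Y' = q) :
    (U.card : ℝ) ≤ 4 * q / (Y : ℝ) ^ 2 := by
  classical
  have hcard : U.card ≤ (q / Y ^ 2 + 1) * 2 := by
    have := Finset.card_le_card_of_injOn (s := U)
      (t := Finset.range (q / Y ^ 2 + 1) ×ˢ Finset.range 2)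
      (fun l => ((cont l).2 / Y, l.length % 2)) ?_ ?_
    · simpa using this
    · intro u hu
      obtain ⟨h1, h2⟩ := hU u hu
      have h3 := cont_le h1
      simp only [Finset.coe_product, Set.mem_prod, Finset.coe_range, Set.mem_Iio]
      constructor
      · apply Nat.lt_succ_of_le
        rw [pow_two, ← Nat.div_div_eq_div_mul]
        apply Nat.div_le_div_right
        rw [Nat.le_div_iff_mul_le hY]
        nlinarith
      · exact Nat.mod_lt _ (by norm_num)
    · intro l hl l' hl' e
      obtain ⟨h1, h2⟩ := hU l hl
      obtain ⟨h1', h2'⟩ := hU l' hl'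
      simp only [Prod.mk.injEq] at e
      have hm : (cont l).2 ≡ (cont l').2 [MOD Y] := by
        refine modEq_helper (A := (cont l).1) (B := (cont l').1) hc ?_
        rw [mul_comm Y, mul_comm Y, h2, h2']
      have e2 : (cont l).2 = (cont l').2 := by
        rw [← Nat.div_add_mod (cont l).2 Y, ← Nat.div_add_mod (cont l').2 Y, e.1, hm]
      have e1 : (cont l).1 = (cont l').1 := by
        rw [← h2', e2] at h2
        exact Nat.eq_of_mul_eq_mul_right hY (by omega)
      exact pos_inj h1 h1' (Prod.ext e1 e2) e.2
  have hY0 : (0 : ℝ) < Y := by exact_mod_cast hY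
  have hq' : (Y : ℝ) ^ 2 ≤ q := by exact_mod_cast hq
  have hd : ((q / Y ^ 2 : ℕ) : ℝ) ≤ q / (Y : ℝ) ^ 2 := by
    have := @Nat.cast_div_le ℝ _ _ _ q (Y ^ 2)
    push_cast at this
    exact this
  have h1 : 1 ≤ (q : ℝ) / (Y : ℝ) ^ 2 := by rw [le_div_iff₀ (by positivity)]; linarith
  have hc' : (U.card : ℝ) ≤ (((q / Y ^ 2 : ℕ) : ℝ) + 1) * 2 := by exact_mod_cast hcard
  calc (U.card : ℝ) ≤ _ := hc'
    _ ≤ 4 * ((q : ℝ) / (Y : ℝ) ^ 2) := by linarith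
    _ = _ := by ring

def sT (t : ℕ × List ℕ × ℕ × List ℕ) : List ℕ := t.1 :: (t.2.1 ++ t.2.2.1 :: t.2.2.2)

theorem sT_ge (t : ℕ × List ℕ × ℕ × List ℕ) :
    t.1 * (cont t.2.1).1 * (t.2.2.1 * (cont t.2.2.2).1) ≤ (cont (sT t)).1 := by
  have h := cont_mul_le (t.1 :: t.2.1) (t.2.2.1 :: t.2.2.2)
  refine le_trans ?_ h
  apply Nat.mul_le_mul <;> simp only [cont] <;> exact Nat.le_add_right _ _

theorem lemR : ∃ C : ℝ, 0 < C ∧ ∀ (q : ℕ) (A : Finset ((ℕ × List ℕ × ℕ × List ℕ) × List ℕ)),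
    1 ≤ q →
    (∀ t ∈ A, PosL (sT t.1) ∧ PosL t.2 ∧ (cont (sT t.1)).1 ^ 2 ≤ q ∧
      (cont t.2).1 * (cont (sT t.1)).1 + (cont t.2).2 * (cont (sT t.1)).2 = q) →
    ∑ t ∈ A, GG t.1.1 * GG t.1.2.2.1 ≤ C * q * (1 + Real.log q) ^ 2 := by
  classical
  obtain ⟨C, hC, hG⟩ := GG_sum
  refine ⟨4 * C ^ 2 * 16, by positivity, ?_⟩
  intro q A hq1 hA
  have hmaps : ∀ t ∈ A, t.1 ∈ A.image Prod.fst := fun t ht => Finset.mem_image_of_mem _ ht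
  rw [← Finset.sum_fiberwise_of_maps_to hmaps]
  set P := A.image Prod.fst with hP
  have hPp : ∀ t ∈ P, PosL (sT t) ∧ (cont (sT t)).1 ^ 2 ≤ q := by
    intro t ht
    obtain ⟨a, ha, rfl⟩ := Finset.mem_image.1 ht
    exact ⟨(hA a ha).1, (hA a ha).2.2.1⟩
  have hparts : ∀ t ∈ P, 1 ≤ t.1 ∧ PosL t.2.1 ∧ 1 ≤ t.2.2.1 ∧ PosL t.2.2.2 ∧
      (cont t.2.1).1 ≤ q ∧ (cont t.2.2.2).1 ≤ q := by
    intro t ht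
    obtain ⟨h1, h2⟩ := hPp t ht
    have p1 := h1.tail.left
    have p2 := h1.tail.right
    have g := sT_ge t
    have k1 := h1.head
    have k2 := p2.head
    have k3 := cont_pos p1
    have k4 := cont_pos p2.tail
    have k5 : (cont (sT t)).1 ≤ q := by nlinarith
    have k6 : 1 ≤ t.2.2.1 * (cont t.2.2.2).1 := Nat.mul_pos k2 k4
    have k7 : 1 ≤ t.1 * (cont t.2.1).1 := Nat.mul_pos k1 k3
    refine ⟨k1, p1, k2, p2.tail, ?_, ?_⟩ <;> nlinarith
  have step1 : ∀ t ∈ P, ∑ i ∈ A.filter (fun i => i.1 = t), GG i.1.1 * GG i.1.2.2.1 ≤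
      4 * q * ((GG t.1 / (t.1 : ℝ) ^ 2) * ((1 / ((cont t.2.1).1 : ℝ) ^ 2) *
        ((GG t.2.2.1 / (t.2.2.1 : ℝ) ^ 2) * (1 / ((cont t.2.2.2).1 : ℝ) ^ 2)))) := by
    intro t ht
    obtain ⟨h1, h2⟩ := hPp t ht
    obtain ⟨k1, p1, k2, p2, _, _⟩ := hparts t ht
    have e : ∑ i ∈ A.filter (fun i => i.1 = t), GG i.1.1 * GG i.1.2.2.1
        = (A.filter (fun i => i.1 = t)).card * (GG t.1 * GG t.2.2.1) := by
      rw [Finset.sum_congr rfl (g := fun _ => GG t.1 * GG t.2.2.1)]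
      · simp
      · intro l hl; rw [(Finset.mem_filter.1 hl).2]
    rw [e]
    have hcard : (A.filter (fun i => i.1 = t)).card =
        ((A.filter (fun i => i.1 = t)).image Prod.snd).card := by
      rw [Finset.card_image_of_injOn]
      intro i hi i' hi' hh
      exact Prod.ext ((Finset.mem_filter.1 hi).2.trans (Finset.mem_filter.1 hi').2.symm) hh
    have hcl := count_le q (cont (sT t)).1 (cont (sT t)).2 (cont_pos h1) h2 (cont_coprime _)
      ((A.filter (fun i => i.1 = t)).image Prod.snd) (by
        intro u hu
        obtain ⟨i, hi, rfl⟩ := Finset.mem_image.1 hu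
        obtain ⟨hi1, hi2⟩ := Finset.mem_filter.1 hi
        have := hA i hi1
        rw [hi2] at this
        exact ⟨this.2.1, this.2.2.2⟩)
    rw [← hcard] at hcl
    have g : (t.1 : ℝ) * (cont t.2.1).1 * (t.2.2.1 * (cont t.2.2.2).1) ≤ (cont (sT t)).1 := by
      exact_mod_cast sT_ge t
    have j1 : (0 : ℝ) < t.1 := by exact_mod_cast k1
    have j2 : (0 : ℝ) < t.2.2.1 := by exact_mod_cast k2
    have j3 : (0 : ℝ) < (cont t.2.1).1 := by exact_mod_cast cont_pos p1
    have j4 : (0 : ℝ) < (cont t.2.2.2).1 := by exact_mod_cast cont_pos p2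
    have hGG : 0 ≤ GG t.1 * GG t.2.2.1 := mul_nonneg (GG_nonneg _) (GG_nonneg _)
    calc _ ≤ 4 * q / ((cont (sT t)).1 : ℝ) ^ 2 * (GG t.1 * GG t.2.2.1) := by gcongr
      _ ≤ 4 * q / ((t.1 : ℝ) * (cont t.2.1).1 * (t.2.2.1 * (cont t.2.2.2).1)) ^ 2
            * (GG t.1 * GG t.2.2.1) := by gcongr
      _ = _ := by field_simp
  refine (Finset.sum_le_sum step1).trans ?_
  rw [← Finset.mul_sum]
  set P1 := P.image (fun t => t.1)
  set P2 := P.image (fun t => t.2.1)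
  set P3 := P.image (fun t => t.2.2.1)
  set P4 := P.image (fun t => t.2.2.2)
  have hsub : P ⊆ P1 ×ˢ P2 ×ˢ P3 ×ˢ P4 := by
    intro t ht
    simp only [Finset.mem_product]
    exact ⟨Finset.mem_image_of_mem _ ht, Finset.mem_image_of_mem (fun t => t.2.1) ht,
      Finset.mem_image_of_mem (fun t => t.2.2.1) ht, Finset.mem_image_of_mem (fun t => t.2.2.2) ht⟩
  have hnn : ∀ b : ℕ, 0 ≤ GG b / (b : ℝ) ^ 2 := fun b => div_nonneg (GG_nonneg b) (by positivity)
  have step2 : ∑ t ∈ P, ((GG t.1 / (t.1 : ℝ) ^ 2) * ((1 / ((cont t.2.1).1 : ℝ) ^ 2) *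
        ((GG t.2.2.1 / (t.2.2.1 : ℝ) ^ 2) * (1 / ((cont t.2.2.2).1 : ℝ) ^ 2)))) ≤
      (∑ b ∈ P1, GG b / (b : ℝ) ^ 2) * ((∑ w ∈ P2, 1 / ((cont w).1 : ℝ) ^ 2) *
      ((∑ b ∈ P3, GG b / (b : ℝ) ^ 2) * (∑ w ∈ P4, 1 / ((cont w).1 : ℝ) ^ 2))) := by
    rw [Finset.sum_mul_sum P3, ← Finset.sum_product', Finset.sum_mul_sum P2,
      ← Finset.sum_product', Finset.sum_mul_sum P1, ← Finset.sum_product']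
    apply Finset.sum_le_sum_of_subset_of_nonneg hsub
    intro t _ _
    have := hnn t.1
    have := hnn t.2.2.1
    positivity
  have s1 : ∑ b ∈ P1, GG b / (b : ℝ) ^ 2 ≤ C := hG _ (by
    intro b hb; obtain ⟨t, ht, rfl⟩ := Finset.mem_image.1 hb; exact (hparts t ht).1)
  have s3 : ∑ b ∈ P3, GG b / (b : ℝ) ^ 2 ≤ C := hG _ (by
    intro b hb; obtain ⟨t, ht, rfl⟩ := Finset.mem_image.1 hb; exact (hparts t ht).2.2.1)
  have s2 : ∑ w ∈ P2, 1 / ((cont w).1 : ℝ) ^ 2 ≤ 4 * (1 + Real.log q) := list_sum_le q _ (by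
    intro b hb; obtain ⟨t, ht, rfl⟩ := Finset.mem_image.1 hb
    exact ⟨(hparts t ht).2.1, (hparts t ht).2.2.2.2.1⟩)
  have s4 : ∑ w ∈ P4, 1 / ((cont w).1 : ℝ) ^ 2 ≤ 4 * (1 + Real.log q) := list_sum_le q _ (by
    intro b hb; obtain ⟨t, ht, rfl⟩ := Finset.mem_image.1 hb
    exact ⟨(hparts t ht).2.2.2.1, (hparts t ht).2.2.2.2.2⟩)
  have hL : 0 ≤ Real.log q := Real.log_natCast_nonneg q
  have n1 : 0 ≤ ∑ b ∈ P1, GG b / (b : ℝ) ^ 2 := Finset.sum_nonneg fun b _ => hnn b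
  have n3 : 0 ≤ ∑ b ∈ P3, GG b / (b : ℝ) ^ 2 := Finset.sum_nonneg fun b _ => hnn b
  have n2 : 0 ≤ ∑ w ∈ P2, 1 / ((cont w).1 : ℝ) ^ 2 := Finset.sum_nonneg fun b _ => by positivity
  have n4 : 0 ≤ ∑ w ∈ P4, 1 / ((cont w).1 : ℝ) ^ 2 := Finset.sum_nonneg fun b _ => by positivity
  calc _ ≤ 4 * q * (C * (4 * (1 + Real.log q) * (C * (4 * (1 + Real.log q))))) := by
        refine mul_le_mul_of_nonneg_left (step2.trans ?_) (by positivity)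
        gcongr
    _ = _ := by ring


def midL (l : List ℕ) (i j : ℕ) : List ℕ := (l.drop (i + 1)).take (j - (i + 1))

theorem midL_spec (l : List ℕ) (i j : ℕ) (hij : i < j) (hj : j < l.length) :
    l.drop (i + 1) = midL l i j ++ l.getD j 0 :: l.drop (j + 1) ∧
      l.take j = l.take i ++ l.getD i 0 :: midL l i j ∧ (midL l i j).length = j - i - 1 := by
  refine ⟨?_, ?_, ?_⟩
  · unfold midL
    conv_lhs => rw [← List.take_append_drop (j - (i + 1)) (l.drop (i + 1))]
    rw [List.drop_drop, List.getD_eq_getElem _ _ hj, List.getElem_cons_drop]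
    congr 2; omega
  · unfold midL
    rw [List.getD_eq_getElem _ _ (by omega)]
    conv_lhs => rw [← List.take_append_drop i (l.take j)]
    rw [List.take_take, min_eq_left (by omega)]
    congr 1
    rw [List.drop_take, ← List.getElem_cons_drop (by omega : i < l.length)]
    have : j - i = (j - (i + 1)) + 1 := by omega
    rw [this, List.take_succ_cons]
  · unfold midL; simp; omega

def TT (q : ℕ) : Finset ((_ : ℕ) × (ℕ × ℕ)) :=
  (Finset.Icc 1 (q - 1)).sigma (fun a =>
    ((Finset.range (cfList q a).length) ×ˢ (Finset.range (cfList q a).length)).filter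
      (fun p => p.1 < p.2))

theorem mem_TT {q : ℕ} {p : (_ : ℕ) × (ℕ × ℕ)} : p ∈ TT q ↔
    (1 ≤ p.1 ∧ p.1 ≤ q - 1) ∧ p.2.1 < p.2.2 ∧ p.2.2 < (cfList q p.1).length := by
  simp only [TT, Finset.mem_sigma, Finset.mem_Icc, Finset.mem_filter, Finset.mem_product,
    Finset.mem_range]
  constructor
  · rintro ⟨h, ⟨h1, h2⟩, h3⟩; exact ⟨h, h3, h2⟩
  · rintro ⟨h, h3, h2⟩; exact ⟨h, ⟨by omega, h2⟩, h3⟩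

theorem drop_eq_sT (l : List ℕ) (i j : ℕ) (hij : i < j) (hj : j < l.length) :
    l.drop i = sT (l.getD i 0, midL l i j, l.getD j 0, l.drop (j + 1)) := by
  unfold sT
  simp only
  rw [← (midL_spec l i j hij hj).1, List.getD_eq_getElem _ _ (by omega), List.getElem_cons_drop]

theorem take_eq_sT (l : List ℕ) (i j : ℕ) (hij : i < j) (hj : j < l.length) :
    l.take (j + 1) =
      (sT (l.getD j 0, (midL l i j).reverse, l.getD i 0, (l.take i).reverse)).reverse := by
  unfold sT
  simp only [List.reverse_cons, List.reverse_append, List.reverse_reverse, List.append_assoc]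
  rw [List.take_add_one, (midL_spec l i j hij hj).2.1, List.getD_eq_getElem _ _ hj,
    List.getElem?_eq_getElem hj]
  simp

theorem RR_bound : ∃ C : ℝ, 0 < C ∧ ∀ q : ℕ, q.Prime →
    ∑ t ∈ (TT q).filter (fun t => (cont ((cfList q t.1).drop t.2.1)).1 ^ 2 ≤ q),
      GG (bb q t.1 t.2.1) * GG (bb q t.1 t.2.2) ≤ C * q * (1 + Real.log q) ^ 2 := by
  classical
  obtain ⟨C, hC, h⟩ := lemR
  refine ⟨C, hC, fun q hq => ?_⟩
  set F : ((_ : ℕ) × (ℕ × ℕ)) → ((ℕ × List ℕ × ℕ × List ℕ) × List ℕ) := fun t =>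
    ((bb q t.1 t.2.1, midL (cfList q t.1) t.2.1 t.2.2, bb q t.1 t.2.2, vL q t.1 t.2.2),
      uL q t.1 t.2.1) with hF
  have hdrop : ∀ t ∈ TT q, (cfList q t.1).drop t.2.1 = sT (F t).1 := fun t ht =>
    drop_eq_sT _ _ _ (mem_TT.1 ht).2.1 (mem_TT.1 ht).2.2
  have hfull : ∀ t ∈ TT q, cfList q t.1 = (F t).2.reverse ++ sT (F t).1 := by
    intro t ht
    rw [← hdrop t ht]; simp [hF, uL]
  have hinj : Set.InjOn F ((TT q).filter
      (fun t => (cont ((cfList q t.1).drop t.2.1)).1 ^ 2 ≤ q)) := by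
    intro t ht t' ht' e
    have ht := (Finset.mem_filter.1 ht).1
    have ht' := (Finset.mem_filter.1 ht').1
    have hl : cfList q t.1 = cfList q t'.1 := by rw [hfull t ht, hfull t' ht', e]
    obtain ⟨⟨m1, m2⟩, m3, m4⟩ := mem_TT.1 ht
    obtain ⟨⟨m1', m2'⟩, m3', m4'⟩ := mem_TT.1 ht'
    have k1 := (cf_spec hq m1 m2).1
    have k2 := (cf_spec hq m1' m2').1
    rw [hl, k2] at k1
    have ea : t.1 = t'.1 := by simpa using k1.symm
    have ei : t.2.1 = t'.2.1 := by
      have := congrArg (fun z => z.2.length) e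
      simp only [hF] at this
      rwa [uL_len _ _ _ (by omega), uL_len _ _ _ (by omega)] at this
    have ej : t.2.2 = t'.2.2 := by
      have := congrArg (fun z => z.1.2.1.length) e
      simp only [hF] at this
      rw [(midL_spec _ _ _ m3 m4).2.2, (midL_spec _ _ _ m3' m4').2.2] at this
      omega
    exact Sigma.ext ea (heq_of_eq (Prod.ext ei ej))
  have := h q (((TT q).filter
      (fun t => (cont ((cfList q t.1).drop t.2.1)).1 ^ 2 ≤ q)).image F) hq.one_lt.le ?_
  · rwa [Finset.sum_image hinj] at this
  · intro z hz
    obtain ⟨t, ht, rfl⟩ := Finset.mem_image.1 hz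
    obtain ⟨ht, hK⟩ := Finset.mem_filter.1 ht
    obtain ⟨⟨m1, m2⟩, m3, m4⟩ := mem_TT.1 ht
    obtain ⟨k1, k2⟩ := cf_spec hq m1 m2
    have hp := k2.posL
    rw [hfull t ht] at hp k1
    rw [hdrop t ht] at hK
    refine ⟨hp.right, by simpa using hp.left.rev, hK, ?_⟩
    rw [← cont_rev, k1]

theorem LL_bound : ∃ C : ℝ, 0 < C ∧ ∀ q : ℕ, q.Prime →
    ∑ t ∈ (TT q).filter (fun t => (cont ((cfList q t.1).take (t.2.2 + 1))).1 ^ 2 ≤ q),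
      GG (bb q t.1 t.2.1) * GG (bb q t.1 t.2.2) ≤ C * q * (1 + Real.log q) ^ 2 := by
  classical
  obtain ⟨C, hC, h⟩ := lemR
  refine ⟨C, hC, fun q hq => ?_⟩
  set F : ((_ : ℕ) × (ℕ × ℕ)) → ((ℕ × List ℕ × ℕ × List ℕ) × List ℕ) := fun t =>
    ((bb q t.1 t.2.2, (midL (cfList q t.1) t.2.1 t.2.2).reverse, bb q t.1 t.2.1, uL q t.1 t.2.1),
      vL q t.1 t.2.2) with hF
  have htake : ∀ t ∈ TT q, (cfList q t.1).take (t.2.2 + 1) = (sT (F t).1).reverse := fun t ht =>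
    take_eq_sT _ _ _ (mem_TT.1 ht).2.1 (mem_TT.1 ht).2.2
  have hfull : ∀ t ∈ TT q, cfList q t.1 = (sT (F t).1).reverse ++ (F t).2 := by
    intro t ht
    rw [← htake t ht]; simp [hF, vL]
  have hinj : Set.InjOn F ((TT q).filter
      (fun t => (cont ((cfList q t.1).take (t.2.2 + 1))).1 ^ 2 ≤ q)) := by
    intro t ht t' ht' e
    have ht := (Finset.mem_filter.1 ht).1
    have ht' := (Finset.mem_filter.1 ht').1
    have hl : cfList q t.1 = cfList q t'.1 := by rw [hfull t ht, hfull t' ht', e]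
    obtain ⟨⟨m1, m2⟩, m3, m4⟩ := mem_TT.1 ht
    obtain ⟨⟨m1', m2'⟩, m3', m4'⟩ := mem_TT.1 ht'
    have k1 := (cf_spec hq m1 m2).1
    have k2 := (cf_spec hq m1' m2').1
    rw [hl, k2] at k1
    have ea : t.1 = t'.1 := by simpa using k1.symm
    have ei : t.2.1 = t'.2.1 := by
      have := congrArg (fun z => z.1.2.2.2.length) e
      simp only [hF] at this
      rwa [uL_len _ _ _ (by omega), uL_len _ _ _ (by omega)] at this
    have ej : t.2.2 = t'.2.2 := by
      have := congrArg (fun z => z.1.2.1.length) e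
      simp only [hF, List.length_reverse] at this
      rw [(midL_spec _ _ _ m3 m4).2.2, (midL_spec _ _ _ m3' m4').2.2] at this
      omega
    exact Sigma.ext ea (heq_of_eq (Prod.ext ei ej))
  have := h q (((TT q).filter
      (fun t => (cont ((cfList q t.1).take (t.2.2 + 1))).1 ^ 2 ≤ q)).image F) hq.one_lt.le ?_
  · rw [Finset.sum_image hinj] at this
    refine le_trans (le_of_eq ?_) this
    exact Finset.sum_congr rfl (fun t _ => mul_comm _ _)
  · intro z hz
    obtain ⟨t, ht, rfl⟩ := Finset.mem_image.1 hz
    obtain ⟨ht, hK⟩ := Finset.mem_filter.1 ht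
    obtain ⟨⟨m1, m2⟩, m3, m4⟩ := mem_TT.1 ht
    obtain ⟨k1, k2⟩ := cf_spec hq m1 m2
    have hp := k2.posL
    rw [hfull t ht] at hp k1
    rw [htake t ht, cont_reverse] at hK
    refine ⟨by simpa using hp.left.rev, hp.right, hK, ?_⟩
    have := cont_rev (sT (F t).1) (F t).2
    rw [k1] at this
    simp only at this
    rw [this]; ring

/-- at most one index is in the middle -/
theorem mid_unique {q a i j : ℕ} (hq : q.Prime) (h1 : 1 ≤ a) (h2 : a ≤ q - 1)
    (hij : i < j) (hj : j < (cfList q a).length)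
    (hL : ¬ (cont ((cfList q a).take (i + 1))).1 ^ 2 ≤ q)
    (hR : ¬ (cont ((cfList q a).drop j)).1 ^ 2 ≤ q) : False := by
  obtain ⟨k1, k2⟩ := cf_spec hq h1 h2
  have hp := k2.posL
  have e1 := cont_mul_le ((cfList q a).take j) ((cfList q a).drop j)
  rw [List.take_append_drop, k1] at e1
  have e2 := cont_mul_le ((cfList q a).take (i + 1)) (((cfList q a).take j).drop (i + 1))
  have e3 : (cfList q a).take (i + 1) ++ ((cfList q a).take j).drop (i + 1)
      = (cfList q a).take j := by
    conv_rhs => rw [← List.take_append_drop (i + 1) ((cfList q a).take j)]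
    rw [List.take_take, min_eq_left (by omega)]
  rw [e3] at e2
  have e4 : 1 ≤ (cont (((cfList q a).take j).drop (i + 1))).1 := by
    apply cont_pos
    intro c hc
    exact hp c (List.mem_of_mem_take (List.mem_of_mem_drop hc))
  simp only at e1
  push Not at hL hR
  have e5 : (cont ((cfList q a).take (i + 1))).1 ≤ (cont ((cfList q a).take j)).1 := by nlinarith
  have e6 : (cont ((cfList q a).take (i + 1))).1 * (cont ((cfList q a).drop j)).1 ≤ q :=
    (Nat.mul_le_mul_right _ e5).trans e1
  have e7 : ((cont ((cfList q a).take (i + 1))).1 * (cont ((cfList q a).drop j)).1) ^ 2 ≤ q ^ 2 :=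
    Nat.pow_le_pow_left e6 2
  rw [mul_pow] at e7
  have e8 : q * q < (cont ((cfList q a).take (i + 1))).1 ^ 2 * (cont ((cfList q a).drop j)).1 ^ 2 :=
    Nat.mul_lt_mul'' hL hR
  nlinarith


theorem DD_sum_le {q : ℕ} (hq : q.Prime) (S : Finset ((_ : ℕ) × ℕ)) (hS : S ⊆ DD q)
    (W : Finset (ℕ × ℕ)) (F : ℕ × ℕ → ℝ) (hF : ∀ w ∈ W, 0 ≤ F w)
    (hW : ∀ p ∈ S, (xx q p.1 p.2, yy q p.1 p.2) ∈ W) :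
    ∑ p ∈ S, F (xx q p.1 p.2, yy q p.1 p.2) ≤ 2 * ∑ w ∈ W, F w := by
  classical
  set φ : ((_ : ℕ) × ℕ) → (ℕ × ℕ) × ℕ := fun p => ((xx q p.1 p.2, yy q p.1 p.2), p.2 % 2)
  have hinj : Set.InjOn φ S := by
    intro p hp p' hp' e
    simp only [φ, Prod.mk.injEq] at e
    have h1 := mem_DD.1 (hS hp)
    have h2 := mem_DD.1 (hS hp')
    obtain ⟨a, i⟩ := p
    obtain ⟨a', i'⟩ := p'
    have := DD_inj hq h1.1.1 h1.1.2 h1.2 h2.1.1 h2.1.2 h2.2 e.1.1 e.1.2 e.2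
    simp only at this
    obtain ⟨rfl, rfl⟩ := this
    rfl
  calc ∑ p ∈ S, F (xx q p.1 p.2, yy q p.1 p.2) = ∑ p ∈ S, (fun z : (ℕ × ℕ) × ℕ => F z.1) (φ p) := rfl
    _ = ∑ z ∈ S.image φ, F z.1 := (Finset.sum_image (f := fun z : (ℕ × ℕ) × ℕ => F z.1) hinj).symm
    _ ≤ ∑ z ∈ W ×ˢ Finset.range 2, F z.1 := by
        apply Finset.sum_le_sum_of_subset_of_nonneg
        · intro z hz
          obtain ⟨p, hp, rfl⟩ := Finset.mem_image.1 hz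
          exact Finset.mem_product.2 ⟨hW p hp, Finset.mem_range.2 (Nat.mod_lt _ (by norm_num))⟩
        · intro z hz _
          exact hF _ (Finset.mem_product.1 hz).1
    _ = 2 * ∑ w ∈ W, F w := by
        rw [Finset.sum_product]
        simp [Finset.mul_sum]

theorem log_step (n : ℕ) (hn : 1 ≤ n) : 1 / ((n : ℝ) + 1) ≤ Real.log ((n + 1 : ℕ) : ℝ) - Real.log n := by
  have hn' : (0 : ℝ) < n := by exact_mod_cast hn
  have h := Real.log_le_sub_one_of_pos (x := (n : ℝ) / (n + 1)) (by positivity)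
  rw [Real.log_div (by positivity) (by positivity)] at h
  have e : (n : ℝ) / (n + 1) - 1 = - (1 / ((n : ℝ) + 1)) := by field_simp; ring
  rw [e] at h
  push_cast
  linarith

theorem Icc_harm (m n : ℕ) (hm : 1 ≤ m) (hmn : m ≤ n) :
    ∑ y ∈ Finset.Icc m n, 1 / (y : ℝ) ≤ 1 + (Real.log n - Real.log m) := by
  induction n, hmn using Nat.le_induction with
  | base =>
    simp only [Finset.Icc_self, Finset.sum_singleton, sub_self, add_zero]
    have : (1 : ℝ) ≤ m := by exact_mod_cast hm
    rw [div_le_one (by linarith)]; exact this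
  | succ n hmn ih =>
    rw [Finset.sum_Icc_succ_top (by omega)]
    have := log_step n (by omega)
    push_cast at *
    linarith

/-- harmonic sum on a multiplicative interval -/
theorem harm_interval (S : Finset ℕ) (hS : ∀ y ∈ S, 1 ≤ y) (lam : ℝ) (hlam : 1 ≤ lam)
    (h : ∀ y ∈ S, ∀ z ∈ S, (z : ℝ) ≤ lam * y) :
    ∑ y ∈ S, 1 / (y : ℝ) ≤ 1 + Real.log lam := by
  rcases S.eq_empty_or_nonempty with rfl | hne
  · simp; linarith [Real.log_nonneg hlam]
  · have hm := Finset.min'_mem S hne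
    have hM := Finset.max'_mem S hne
    have hsub : S ⊆ Finset.Icc (S.min' hne) (S.max' hne) := fun y hy =>
      Finset.mem_Icc.2 ⟨Finset.min'_le _ _ hy, Finset.le_max' _ _ hy⟩
    have h1 := Finset.sum_le_sum_of_subset_of_nonneg (f := fun y : ℕ => 1 / (y : ℝ)) hsub
      (fun _ _ _ => by positivity)
    have h2 := Icc_harm _ _ (hS _ hm) (Finset.min'_le _ _ hM)
    have h3 := h _ hm _ hM
    have hm0 : (0 : ℝ) < (S.min' hne : ℕ) := by exact_mod_cast hS _ hm
    have hM0 : (0 : ℝ) < (S.max' hne : ℕ) := by exact_mod_cast hS _ hM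
    have h4 := Real.log_le_log hM0 h3
    rw [Real.log_mul (by positivity) (by positivity)] at h4
    linarith

theorem mem_pairs {q a i : ℕ} (hq : q.Prime) (h1 : 1 ≤ a) (h2 : a ≤ q - 1)
    (hi : i < (cfList q a).length) : 1 ≤ xx q a i ∧ xx q a i ≤ q ∧ 1 ≤ yy q a i ∧ yy q a i ≤ q := by
  obtain ⟨_, _, _, _, hx, hy, _⟩ := facts hq h1 h2 hi
  have := xy_lt hq h1 h2 hi
  refine ⟨hx, by nlinarith, hy, by nlinarith⟩

theorem all_pairs_sum (q : ℕ) :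
    ∑ w ∈ Finset.Icc 1 q ×ˢ Finset.Icc 1 q, 1 / ((w.1 : ℝ) * w.2) ≤ (1 + Real.log q) ^ 2 := by
  rw [Finset.sum_product]
  have : ∀ x ∈ Finset.Icc 1 q, ∑ y ∈ Finset.Icc 1 q, 1 / ((x : ℝ) * y)
      = 1 / (x : ℝ) * ∑ y ∈ Finset.Icc 1 q, 1 / (y : ℝ) := by
    intro x _
    rw [Finset.mul_sum]
    apply Finset.sum_congr rfl
    intro y _
    rw [one_div_mul_one_div]
  rw [Finset.sum_congr rfl this, ← Finset.sum_mul, pow_two]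
  have h := harm_le q
  have h0 : 0 ≤ ∑ y ∈ Finset.Icc 1 q, 1 / (y : ℝ) := Finset.sum_nonneg (fun _ _ => by positivity)
  exact mul_le_mul h h h0 (h0.trans h)

theorem bb_le_div {q a i : ℕ} (hq : q.Prime) (h1 : 1 ≤ a) (h2 : a ≤ q - 1)
    (hi : i < (cfList q a).length) : (bb q a i : ℝ) ≤ q * (1 / ((xx q a i : ℝ) * yy q a i)) := by
  obtain ⟨_, _, _, _, hx, hy, _⟩ := facts hq h1 h2 hi
  have hx' : (0 : ℝ) < xx q a i := by exact_mod_cast hx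
  have hy' : (0 : ℝ) < yy q a i := by exact_mod_cast hy
  rw [mul_one_div, le_div_iff₀ (by positivity)]
  exact_mod_cast xy_le hq h1 h2 hi

theorem big_marg {q : ℕ} (hq : q.Prime) (T0 : ℝ) (hT : 1 ≤ T0) :
    ∑ p ∈ (DD q).filter (fun p => T0 ^ 8 < (bb q p.1 p.2 : ℝ)), GG (bb q p.1 p.2)
      ≤ 8 * q * (1 + Real.log q) ^ 2 / T0 ^ 2 := by
  have hT0 : 0 < T0 := by linarith
  have key : ∀ p ∈ (DD q).filter (fun p => T0 ^ 8 < (bb q p.1 p.2 : ℝ)), GG (bb q p.1 p.2) ≤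
      4 * q / T0 ^ 2 * (1 / ((xx q p.1 p.2 : ℝ) * yy q p.1 p.2)) := by
    intro p hp
    obtain ⟨hp, hb⟩ := Finset.mem_filter.1 hp
    obtain ⟨⟨h1, h2⟩, hi⟩ := mem_DD.1 hp
    obtain ⟨_, _, hb1, _, _, _, _⟩ := facts hq h1 h2 hi
    have hb0 : (0 : ℝ) < bb q p.1 p.2 := by exact_mod_cast hb1
    have hb4 : T0 ^ 2 ≤ (bb q p.1 p.2 : ℝ) ^ (1 / 4 : ℝ) := by
      have := Real.rpow_le_rpow (by positivity) hb.le (by norm_num : (0 : ℝ) ≤ 1 / 4)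
      refine le_trans (le_of_eq ?_) this
      rw [← Real.rpow_natCast T0 8, ← Real.rpow_mul hT0.le, ← Real.rpow_natCast T0 2]
      norm_num
    have e : (bb q p.1 p.2 : ℝ) ^ (3 / 4 : ℝ) * (bb q p.1 p.2 : ℝ) ^ (1 / 4 : ℝ) = bb q p.1 p.2 := by
      rw [← Real.rpow_add hb0]; norm_num
    have h34 : (bb q p.1 p.2 : ℝ) ^ (3 / 4 : ℝ) * T0 ^ 2 ≤ bb q p.1 p.2 := by
      refine le_trans ?_ e.le
      gcongr
    have := bb_le_div hq h1 h2 hi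
    calc GG (bb q p.1 p.2) ≤ 4 * (bb q p.1 p.2 : ℝ) ^ (3 / 4 : ℝ) := GG_le _ hb1
      _ ≤ 4 * ((bb q p.1 p.2 : ℝ) / T0 ^ 2) := by
          gcongr; rw [le_div_iff₀ (by positivity)]; exact h34
      _ ≤ 4 * ((q * (1 / ((xx q p.1 p.2 : ℝ) * yy q p.1 p.2))) / T0 ^ 2) := by gcongr
      _ = _ := by ring
  refine (Finset.sum_le_sum key).trans ?_
  rw [← Finset.mul_sum]
  have h := DD_sum_le hq ((DD q).filter (fun p => T0 ^ 8 < (bb q p.1 p.2 : ℝ)))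
    (Finset.filter_subset _ _) (Finset.Icc 1 q ×ˢ Finset.Icc 1 q)
    (fun w => 1 / ((w.1 : ℝ) * w.2)) (fun _ _ => by positivity) (by
      intro p hp
      obtain ⟨hp, hb⟩ := Finset.mem_filter.1 hp
      obtain ⟨⟨h1, h2⟩, hi⟩ := mem_DD.1 hp
      obtain ⟨m1, m2, m3, m4⟩ := mem_pairs hq h1 h2 hi
      exact Finset.mem_product.2 ⟨Finset.mem_Icc.2 ⟨m1, m2⟩, Finset.mem_Icc.2 ⟨m3, m4⟩⟩)
  have h3 := all_pairs_sum q
  calc _ ≤ 4 * q / T0 ^ 2 * (2 * (1 + Real.log q) ^ 2) := by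
        gcongr
        linarith
    _ = _ := by ring

theorem small_diag {q : ℕ} (hq : q.Prime) (T : ℝ) (hT : 1 ≤ T) :
    ∑ p ∈ (DD q).filter (fun p => (bb q p.1 p.2 : ℝ) ≤ T), GG (bb q p.1 p.2) ^ 2
      ≤ 6 * q * (1 + Real.log q) * (1 + Real.log T) ^ 3 := by
  classical
  set W := (Finset.Icc 1 q ×ˢ Finset.Icc 1 q).filter (fun w : ℕ × ℕ =>
    (w.1 * w.2 : ℝ) ≤ q ∧ (q : ℝ) ≤ (T + 2) * (w.1 * w.2)) with hWd
  have hlT := Real.log_nonneg hT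
  have key : ∀ p ∈ (DD q).filter (fun p => (bb q p.1 p.2 : ℝ) ≤ T), GG (bb q p.1 p.2) ^ 2 ≤
      q * (1 + Real.log T) ^ 2 * (1 / ((xx q p.1 p.2 : ℝ) * yy q p.1 p.2)) := by
    intro p hp
    obtain ⟨hp, hb⟩ := Finset.mem_filter.1 hp
    obtain ⟨⟨h1, h2⟩, hi⟩ := mem_DD.1 hp
    obtain ⟨_, _, hb1, _, _, _, _⟩ := facts hq h1 h2 hi
    have hb0 : (0 : ℝ) < bb q p.1 p.2 := by exact_mod_cast hb1
    have hl := Real.log_le_log hb0 hb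
    have hl0 := Real.log_natCast_nonneg (bb q p.1 p.2)
    unfold GG
    rw [mul_pow, Real.sq_sqrt hb0.le]
    calc _ ≤ (q * (1 / ((xx q p.1 p.2 : ℝ) * yy q p.1 p.2))) * (1 + Real.log T) ^ 2 := by
          gcongr
          exact bb_le_div hq h1 h2 hi
      _ = _ := by ring
  refine (Finset.sum_le_sum key).trans ?_
  rw [← Finset.mul_sum]
  have h := DD_sum_le hq ((DD q).filter (fun p => (bb q p.1 p.2 : ℝ) ≤ T))
    (Finset.filter_subset _ _) W
    (fun w => 1 / ((w.1 : ℝ) * w.2)) (fun _ _ => by positivity) (by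
      intro p hp
      obtain ⟨hp, hb⟩ := Finset.mem_filter.1 hp
      obtain ⟨⟨h1, h2⟩, hi⟩ := mem_DD.1 hp
      obtain ⟨m1, m2, m3, m4⟩ := mem_pairs hq h1 h2 hi
      refine Finset.mem_filter.2 ⟨Finset.mem_product.2 ⟨Finset.mem_Icc.2 ⟨m1, m2⟩,
        Finset.mem_Icc.2 ⟨m3, m4⟩⟩, ?_, ?_⟩
      · exact_mod_cast (xy_lt hq h1 h2 hi).le
      · have : (q : ℝ) ≤ (bb q p.1 p.2 + 2) * (xx q p.1 p.2 * yy q p.1 p.2) := by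
          exact_mod_cast xy_ge hq h1 h2 hi
        refine this.trans ?_
        gcongr)
  have hlam : 1 + Real.log (T + 2) ≤ 3 * (1 + Real.log T) := by
    have h3 : Real.log (T + 2) ≤ Real.log (3 * T) := Real.log_le_log (by linarith) (by linarith)
    rw [Real.log_mul (by norm_num) (by linarith)] at h3
    have : Real.log 3 ≤ 2 := by
      have := Real.log_le_sub_one_of_pos (x := 3) (by norm_num); linarith
    linarith
  have hW : ∑ w ∈ W, 1 / ((w.1 : ℝ) * w.2) ≤ (1 + Real.log q) * (3 * (1 + Real.log T)) := by
    rw [hWd, Finset.sum_filter, Finset.sum_product]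
    calc _ ≤ ∑ x ∈ Finset.Icc 1 q, 1 / (x : ℝ) * (3 * (1 + Real.log T)) := ?_
      _ ≤ _ := by
        rw [← Finset.sum_mul]
        gcongr
        exact harm_le q
    apply Finset.sum_le_sum
    intro x hx
    have hx0 : (0 : ℝ) < x := by exact_mod_cast (Finset.mem_Icc.1 hx).1
    rw [← Finset.sum_filter]
    have e : ∀ y ∈ (Finset.Icc 1 q).filter (fun y : ℕ => (x * y : ℝ) ≤ q ∧ (q : ℝ) ≤ (T + 2) * (x * y)),
        1 / ((x : ℝ) * y) = 1 / (x : ℝ) * (1 / (y : ℝ)) := by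
      intro y _
      rw [one_div_mul_one_div]
    rw [Finset.sum_congr rfl e, ← Finset.mul_sum]
    gcongr
    refine le_trans (harm_interval _ ?_ (T + 2) (by linarith) ?_) hlam
    · intro y hy
      exact (Finset.mem_Icc.1 (Finset.mem_filter.1 hy).1).1
    · intro y hy z hz
      obtain ⟨_, _, h2⟩ := Finset.mem_filter.1 hy
      obtain ⟨_, h1, _⟩ := Finset.mem_filter.1 hz
      have : (x : ℝ) * z ≤ x * ((T + 2) * y) := by linarith
      exact le_of_mul_le_mul_left this hx0
  calc _ ≤ q * (1 + Real.log T) ^ 2 * (2 * ((1 + Real.log q) * (3 * (1 + Real.log T)))) := by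
        gcongr
        linarith
    _ = _ := by ring


theorem sq_split (I : Finset ℕ) (s : ℕ → ℝ) : (∑ i ∈ I, s i) ^ 2 =
    ∑ i ∈ I, s i ^ 2 + 2 * ∑ p ∈ (I ×ˢ I).filter (fun p => p.1 < p.2), s p.1 * s p.2 := by
  rw [pow_two, Finset.sum_mul_sum, Finset.sum_filter, Finset.sum_product]
  have h1 : ∑ i ∈ I, ∑ j ∈ I, s i * s j = ∑ i ∈ I, ∑ j ∈ I, ((if i < j then s i * s j else 0)
      + (if j < i then s j * s i else 0) + (if i = j then s i * s j else 0)) := by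
    apply Finset.sum_congr rfl; intro i _
    apply Finset.sum_congr rfl; intro j _
    rcases lt_trichotomy i j with h | h | h
    · simp [h, h.ne, h.le]
    · simp [h]
    · simp [h, h.ne', h.le, mul_comm]
  rw [h1]
  simp only [Finset.sum_add_distrib]
  have h2 : ∑ i ∈ I, ∑ j ∈ I, (if j < i then s j * s i else 0) =
      ∑ i ∈ I, ∑ j ∈ I, (if i < j then s i * s j else 0) := Finset.sum_comm
  have h3 : ∑ i ∈ I, ∑ j ∈ I, (if i = j then s i * s j else 0) = ∑ i ∈ I, s i ^ 2 := by
    apply Finset.sum_congr rfl; intro i hi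
    rw [Finset.sum_ite_eq]; simp [hi, pow_two]
  rw [h2, h3]; ring

section
open Classical

theorem off_le (q : ℕ) (P : ℕ → ℕ → Prop) (Q : ((_ : ℕ) × (ℕ × ℕ)) → Prop)
    (h : ∀ t ∈ TT q, P t.1 t.2.1 → P t.1 t.2.2 → Q t) :
    ∑ a ∈ Finset.Icc 1 (q - 1), ∑ p ∈ (((Finset.range (cfList q a).length).filter (P a)) ×ˢ
      ((Finset.range (cfList q a).length).filter (P a))).filter (fun p => p.1 < p.2),
        GG (bb q a p.1) * GG (bb q a p.2) ≤
    ∑ t ∈ (TT q).filter Q, GG (bb q t.1 t.2.1) * GG (bb q t.1 t.2.2) := by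
  rw [Finset.sum_sigma']
  apply Finset.sum_le_sum_of_subset_of_nonneg
  · intro t ht
    simp only [Finset.mem_sigma, Finset.mem_filter, Finset.mem_product, Finset.mem_range,
      Finset.mem_Icc] at ht
    obtain ⟨h1, ⟨⟨h2, h3⟩, h4, h5⟩, h6⟩ := ht
    have : t ∈ TT q := mem_TT.2 ⟨h1, h6, h4⟩
    exact Finset.mem_filter.2 ⟨this, h t this h3 h5⟩
  · intro t _ _
    exact mul_nonneg (GG_nonneg _) (GG_nonneg _)

theorem diag_le (q : ℕ) (P : ℕ → ℕ → Prop) (Q : ((_ : ℕ) × ℕ) → Prop)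
    (h : ∀ t ∈ DD q, P t.1 t.2 → Q t) :
    ∑ a ∈ Finset.Icc 1 (q - 1), ∑ i ∈ ((Finset.range (cfList q a).length).filter (P a)),
        GG (bb q a i) ^ 2 ≤
    ∑ t ∈ (DD q).filter Q, GG (bb q t.1 t.2) ^ 2 := by
  rw [Finset.sum_sigma']
  apply Finset.sum_le_sum_of_subset_of_nonneg
  · intro t ht
    simp only [Finset.mem_sigma, Finset.mem_filter, Finset.mem_range,
      Finset.mem_Icc] at ht
    obtain ⟨h1, h2, h3⟩ := ht
    have : t ∈ DD q := mem_DD.2 ⟨h1, h2⟩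
    exact Finset.mem_filter.2 ⟨this, h t this h3⟩
  · intro t _ _
    positivity

theorem small_off : ∃ C : ℝ, 0 < C ∧ ∀ q : ℕ, q.Prime → ∀ T : ℝ, 1 ≤ T →
    ∑ t ∈ (TT q).filter (fun t => (bb q t.1 t.2.1 : ℝ) ≤ T ∧ (bb q t.1 t.2.2 : ℝ) ≤ T),
      GG (bb q t.1 t.2.1) * GG (bb q t.1 t.2.2) ≤
    C * q * ((1 + Real.log q) ^ 2 + (1 + Real.log q) * (1 + Real.log T) ^ 3) := by
  obtain ⟨CL, hCL, hL⟩ := LL_bound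
  obtain ⟨CR, hCR, hR⟩ := RR_bound
  refine ⟨6 * CL + 6 * CR + 54, by positivity, fun q hq T hT => ?_⟩
  have hL := hL q hq
  have hR := hR q hq
  have hD := small_diag hq T hT
  set lf : ℕ → ℕ → Prop := fun a i => (cont ((cfList q a).take (i + 1))).1 ^ 2 ≤ q
  set rt : ℕ → ℕ → Prop := fun a i => (cont ((cfList q a).drop i)).1 ^ 2 ≤ q
  set sm : ℕ → ℕ → Prop := fun a i => (bb q a i : ℝ) ≤ T
  set P1 : ℕ → ℕ → Prop := fun a i => sm a i ∧ lf a i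
  set P2 : ℕ → ℕ → Prop := fun a i => sm a i ∧ ¬ lf a i ∧ rt a i
  set P3 : ℕ → ℕ → Prop := fun a i => sm a i ∧ ¬ lf a i ∧ ¬ rt a i
  have o1 := off_le q P1 (fun t => (cont ((cfList q t.1).take (t.2.2 + 1))).1 ^ 2 ≤ q)
    (fun t _ _ h => h.2)
  have o2 := off_le q P2 (fun t => (cont ((cfList q t.1).drop t.2.1)).1 ^ 2 ≤ q)
    (fun t _ h _ => h.2.2)
  have o3 := off_le q P3 (fun t => False)
    (fun t ht h h' => by
      obtain ⟨m1, m2, m3⟩ := mem_TT.1 ht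
      exact mid_unique hq m1.1 m1.2 m2 m3 h.2.1 h'.2.2)
  have d1 := diag_le q P1 (fun p => (bb q p.1 p.2 : ℝ) ≤ T) (fun t _ h => h.1)
  have d2 := diag_le q P2 (fun p => (bb q p.1 p.2 : ℝ) ≤ T) (fun t _ h => h.1)
  have d3 := diag_le q P3 (fun p => (bb q p.1 p.2 : ℝ) ≤ T) (fun t _ h => h.1)
  simp only [Finset.filter_false, Finset.sum_empty] at o3
  -- per a inequality
  have hper : ∑ t ∈ (TT q).filter (fun t => (bb q t.1 t.2.1 : ℝ) ≤ T ∧ (bb q t.1 t.2.2 : ℝ) ≤ T),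
      GG (bb q t.1 t.2.1) * GG (bb q t.1 t.2.2) ≤ ∑ a ∈ Finset.Icc 1 (q - 1),
        (∑ i ∈ (Finset.range (cfList q a).length).filter (sm a), GG (bb q a i)) ^ 2 := by
    have : ∀ a ∈ Finset.Icc 1 (q - 1), ∑ p ∈ (((Finset.range (cfList q a).length).filter (sm a)) ×ˢ
      ((Finset.range (cfList q a).length).filter (sm a))).filter (fun p => p.1 < p.2),
        GG (bb q a p.1) * GG (bb q a p.2) ≤
        (∑ i ∈ (Finset.range (cfList q a).length).filter (sm a), GG (bb q a i)) ^ 2 := by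
      intro a _
      rw [sq_split]
      have h1 : 0 ≤ ∑ i ∈ (Finset.range (cfList q a).length).filter (sm a), GG (bb q a i) ^ 2 :=
        Finset.sum_nonneg (fun _ _ => by positivity)
      have h2 : 0 ≤ ∑ p ∈ (((Finset.range (cfList q a).length).filter (sm a)) ×ˢ
        ((Finset.range (cfList q a).length).filter (sm a))).filter (fun p => p.1 < p.2),
          GG (bb q a p.1) * GG (bb q a p.2) :=
        Finset.sum_nonneg (fun _ _ => mul_nonneg (GG_nonneg _) (GG_nonneg _))
      linarith
    refine le_trans ?_ (Finset.sum_le_sum this)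
    rw [Finset.sum_sigma']
    apply Finset.sum_le_sum_of_subset_of_nonneg
    · intro t ht
      obtain ⟨h1, h2, h3⟩ := Finset.mem_filter.1 ht
      obtain ⟨m1, m2, m3⟩ := mem_TT.1 h1
      simp only [Finset.mem_sigma, Finset.mem_filter, Finset.mem_product, Finset.mem_range,
        Finset.mem_Icc]
      exact ⟨m1, ⟨⟨by omega, h2⟩, m3, h3⟩, m2⟩
    · intro t _ _
      exact mul_nonneg (GG_nonneg _) (GG_nonneg _)
  have hsplit : ∀ a, (∑ i ∈ (Finset.range (cfList q a).length).filter (sm a), GG (bb q a i)) ^ 2 ≤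
      3 * ((∑ i ∈ (Finset.range (cfList q a).length).filter (P1 a), GG (bb q a i)) ^ 2 +
        (∑ i ∈ (Finset.range (cfList q a).length).filter (P2 a), GG (bb q a i)) ^ 2 +
        (∑ i ∈ (Finset.range (cfList q a).length).filter (P3 a), GG (bb q a i)) ^ 2) := by
    intro a
    have e : ∑ i ∈ (Finset.range (cfList q a).length).filter (sm a), GG (bb q a i) =
        ∑ i ∈ (Finset.range (cfList q a).length).filter (P1 a), GG (bb q a i) +
        ∑ i ∈ (Finset.range (cfList q a).length).filter (P2 a), GG (bb q a i) +
        ∑ i ∈ (Finset.range (cfList q a).length).filter (P3 a), GG (bb q a i) := by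
      simp only [Finset.sum_filter, ← Finset.sum_add_distrib]
      apply Finset.sum_congr rfl
      intro i _
      by_cases h1 : sm a i <;> by_cases h2 : lf a i <;> by_cases h3 : rt a i <;>
        simp [P1, P2, P3, h1, h2, h3]
    rw [e]
    set A := ∑ i ∈ (Finset.range (cfList q a).length).filter (P1 a), GG (bb q a i)
    set B := ∑ i ∈ (Finset.range (cfList q a).length).filter (P2 a), GG (bb q a i)
    set D := ∑ i ∈ (Finset.range (cfList q a).length).filter (P3 a), GG (bb q a i)
    nlinarith [sq_nonneg (A - B), sq_nonneg (B - D), sq_nonneg (A - D)]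
  have htot := hper.trans (Finset.sum_le_sum (fun a _ => hsplit a))
  simp only [sq_split, ← Finset.mul_sum, Finset.sum_add_distrib] at htot
  have hlT := Real.log_nonneg hT
  have hlq := Real.log_natCast_nonneg q
  have hfin : 0 ≤ CL * q * ((1 + Real.log q) * (1 + Real.log T) ^ 3) := by positivity
  have hfin2 : 0 ≤ CR * q * ((1 + Real.log q) * (1 + Real.log T) ^ 3) := by positivity
  have hfin3 : 0 ≤ (q : ℝ) * (1 + Real.log q) ^ 2 := by positivity
  have o1' := o1.trans (le_trans (le_of_eq (by congr!)) hL)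
  have o2' := o2.trans (le_trans (le_of_eq (by congr!)) hR)
  have d1' := d1.trans (le_trans (le_of_eq (by congr!)) hD)
  have d2' := d2.trans (le_trans (le_of_eq (by congr!)) hD)
  have d3' := d3.trans (le_trans (le_of_eq (by congr!)) hD)
  refine le_trans (le_of_eq (by congr!)) (htot.trans ?_)
  calc _ ≤ 3 * (6 * q * (1 + Real.log q) * (1 + Real.log T) ^ 3 + 2 * (CL * q * (1 + Real.log q) ^ 2)
        + (6 * q * (1 + Real.log q) * (1 + Real.log T) ^ 3 + 2 * (CR * q * (1 + Real.log q) ^ 2))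
        + (6 * q * (1 + Real.log q) * (1 + Real.log T) ^ 3 + 2 * 0)) := by
        have h2 : ∀ {x y : ℝ}, x ≤ y → 2 * x ≤ 2 * y := fun h => by linarith
        have hall := mul_le_mul_of_nonneg_left (add_le_add (add_le_add (add_le_add d1' (h2 o1'))
          (add_le_add d2' (h2 o2'))) (add_le_add d3' (h2 o3))) (by norm_num : (0 : ℝ) ≤ 3)
        refine le_trans (le_of_eq ?_) hall
        congr!
    _ ≤ _ := by
      clear o1 o2 o3 o1' o2' d1 d2 d3 d1' d2' d3' htot hsplit hper hD hL hR
      nlinarith [hfin, hfin2, hfin3]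

/-- length of the expansion -/
theorem len_le {q a : ℕ} (hq : q.Prime) (h1 : 1 ≤ a) (h2 : a ≤ q - 1) :
    ((cfList q a).length : ℝ) ≤ 4 * (1 + Real.log q) := by
  obtain ⟨k1, k2⟩ := cf_spec hq h1 h2
  have h := len_bound _ k2.posL
  rw [k1] at h
  simp only at h
  have hq0 : (0 : ℝ) < q := by exact_mod_cast hq.pos
  have h' : ((2 : ℝ)) ^ ((cfList q a).length / 2) ≤ q := by exact_mod_cast h
  have h3 := Real.log_le_log (by positivity) h'
  rw [Real.log_pow] at h3
  have h4 : (0.5 : ℝ) ≤ Real.log 2 := by linarith [Real.log_two_gt_d9]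
  have h5 : ((cfList q a).length : ℝ) ≤ 2 * (((cfList q a).length / 2 : ℕ) : ℝ) + 1 := by
    have : (cfList q a).length ≤ 2 * ((cfList q a).length / 2) + 1 := by omega
    exact_mod_cast this
  have h6 : (((cfList q a).length / 2 : ℕ) : ℝ) * 0.5 ≤ Real.log q :=
    le_trans (by gcongr) h3
  have := Real.log_natCast_nonneg q
  linarith

theorem mixed_off {q : ℕ} (hq : q.Prime) (T0 : ℝ) (hT : 1 ≤ T0) :
    ∑ t ∈ (TT q).filter (fun t => (T0 ^ 8 < (bb q t.1 t.2.1 : ℝ) ∧ (bb q t.1 t.2.2 : ℝ) ≤ T0) ∨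
        (T0 ^ 8 < (bb q t.1 t.2.2 : ℝ) ∧ (bb q t.1 t.2.1 : ℝ) ≤ T0)),
      GG (bb q t.1 t.2.1) * GG (bb q t.1 t.2.2) ≤
    256 * q * (1 + Real.log q) ^ 3 / T0 := by
  have hT0 : 0 < T0 := by linarith
  have hlq := Real.log_natCast_nonneg q
  have hsm : ∀ b : ℕ, 1 ≤ b → (b : ℝ) ≤ T0 → GG b ≤ 4 * T0 := by
    intro b hb hbT
    have hb1 : (1 : ℝ) ≤ b := by exact_mod_cast hb
    refine (GG_le b hb).trans ?_
    have : (b : ℝ) ^ (3 / 4 : ℝ) ≤ (b : ℝ) ^ (1 : ℝ) :=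
      Real.rpow_le_rpow_of_exponent_le hb1 (by norm_num)
    rw [Real.rpow_one] at this
    linarith
  -- bound by a double sum
  have key : ∑ t ∈ (TT q).filter (fun t => (T0 ^ 8 < (bb q t.1 t.2.1 : ℝ) ∧ (bb q t.1 t.2.2 : ℝ) ≤ T0) ∨
        (T0 ^ 8 < (bb q t.1 t.2.2 : ℝ) ∧ (bb q t.1 t.2.1 : ℝ) ≤ T0)),
      GG (bb q t.1 t.2.1) * GG (bb q t.1 t.2.2) ≤
      ∑ t ∈ (Finset.Icc 1 (q - 1)).sigma (fun a =>
        ((Finset.range (cfList q a).length) ×ˢ (Finset.range (cfList q a).length))),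
        (((if T0 ^ 8 < (bb q t.1 t.2.1 : ℝ) then GG (bb q t.1 t.2.1) else 0) * (4 * T0)) +
        ((if T0 ^ 8 < (bb q t.1 t.2.2 : ℝ) then GG (bb q t.1 t.2.2) else 0) * (4 * T0))) := by
    rw [Finset.sum_filter]
    refine le_trans (Finset.sum_le_sum (g := fun t => (((if T0 ^ 8 < (bb q t.1 t.2.1 : ℝ) then GG (bb q t.1 t.2.1) else 0) * (4 * T0)) +
        ((if T0 ^ 8 < (bb q t.1 t.2.2 : ℝ) then GG (bb q t.1 t.2.2) else 0) * (4 * T0)))) ?_) ?_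
    · intro t ht
      obtain ⟨m1, m2, m3⟩ := mem_TT.1 ht
      obtain ⟨_, _, b1, _⟩ := facts hq m1.1 m1.2 (m2.trans m3)
      obtain ⟨_, _, b2, _⟩ := facts hq m1.1 m1.2 m3
      have n1 := GG_nonneg (bb q t.1 t.2.1)
      have n2 := GG_nonneg (bb q t.1 t.2.2)
      have p1 : 0 ≤ (if T0 ^ 8 < (bb q t.1 t.2.1 : ℝ) then GG (bb q t.1 t.2.1) else 0) * (4 * T0) := by
        split_ifs <;> positivity
      have p2 : 0 ≤ (if T0 ^ 8 < (bb q t.1 t.2.2 : ℝ) then GG (bb q t.1 t.2.2) else 0) * (4 * T0) := by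
        split_ifs <;> positivity
      split_ifs with h
      all_goals try positivity
      all_goals try (rcases h with ⟨h1, h2⟩ | ⟨h1, h2⟩)
      all_goals try contradiction
      · nlinarith [hsm _ b2 h2, mul_le_mul_of_nonneg_left (hsm _ b2 h2) n1]
      · nlinarith [hsm _ b1 h2, mul_le_mul_of_nonneg_left (hsm _ b1 h2) n2]
      · nlinarith [hsm _ b2 h2, mul_le_mul_of_nonneg_left (hsm _ b2 h2) n1]
      · nlinarith [hsm _ b1 h2, mul_le_mul_of_nonneg_left (hsm _ b1 h2) n2]
    · apply Finset.sum_le_sum_of_subset_of_nonneg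
      · intro t ht
        obtain ⟨m1, m2, m3⟩ := mem_TT.1 ht
        simp only [Finset.mem_sigma, Finset.mem_product, Finset.mem_range, Finset.mem_Icc]
        exact ⟨m1, by omega, m3⟩
      · intro t _ _
        have n1 := GG_nonneg (bb q t.1 t.2.1)
        have n2 := GG_nonneg (bb q t.1 t.2.2)
        split_ifs <;> positivity
  refine key.trans ?_
  have hM := big_marg hq T0 hT
  rw [Finset.sum_filter, DD, Finset.sum_sigma] at hM
  rw [Finset.sum_sigma]
  have hper : ∀ a ∈ Finset.Icc 1 (q - 1), ∑ p ∈ (Finset.range (cfList q a).length) ×ˢ (Finset.range (cfList q a).length),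
        (((if T0 ^ 8 < (bb q a p.1 : ℝ) then GG (bb q a p.1) else 0) * (4 * T0)) +
        ((if T0 ^ 8 < (bb q a p.2 : ℝ) then GG (bb q a p.2) else 0) * (4 * T0))) ≤
      32 * T0 * (1 + Real.log q) * ∑ i ∈ Finset.range (cfList q a).length, (if T0 ^ 8 < (bb q a i : ℝ) then GG (bb q a i) else 0) := by
    intro a ha
    obtain ⟨h1, h2⟩ := Finset.mem_Icc.1 ha
    have hl := len_le hq h1 h2
    have hn : 0 ≤ ∑ i ∈ Finset.range (cfList q a).length, (if T0 ^ 8 < (bb q a i : ℝ) then GG (bb q a i) else 0) :=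
      Finset.sum_nonneg (fun i _ => by have := GG_nonneg (bb q a i); split_ifs <;> simp [this])
    rw [Finset.sum_product]
    simp only [Finset.sum_add_distrib, Finset.sum_const, Finset.card_range, nsmul_eq_mul,
      ← Finset.sum_mul, ← Finset.mul_sum]
    calc _ = (cfList q a).length * (8 * T0 * ∑ i ∈ Finset.range (cfList q a).length, (if T0 ^ 8 < (bb q a i : ℝ) then GG (bb q a i) else 0)) := by ring
      _ ≤ (4 * (1 + Real.log q)) * (8 * T0 * ∑ i ∈ Finset.range (cfList q a).length, (if T0 ^ 8 < (bb q a i : ℝ) then GG (bb q a i) else 0)) := by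
          gcongr
      _ = _ := by ring
  refine (Finset.sum_le_sum hper).trans ?_
  rw [← Finset.mul_sum]
  calc _ ≤ 32 * T0 * (1 + Real.log q) * (8 * q * (1 + Real.log q) ^ 2 / T0 ^ 2) := by
        gcongr
    _ = _ := by field_simp; ring
end


/-- number of divisors -/
def dv (n : ℕ) : ℕ := n.divisors.card

theorem dv_mul_le (a b : ℕ) : dv (a * b) ≤ dv a * dv b := by
  unfold dv
  rw [Nat.divisors_mul]
  exact Finset.card_mul_le

theorem dv_pos {n : ℕ} (hn : 1 ≤ n) : 1 ≤ dv n :=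
  Finset.card_pos.2 ⟨1, Nat.mem_divisors.2 ⟨one_dvd _, by omega⟩⟩

theorem dv_prime {p : ℕ} (hp : p.Prime) : dv p = 2 := by
  unfold dv
  rw [hp.divisors, Finset.card_pair hp.one_lt.ne]

theorem landreau (R : ℝ) (hR : 1 ≤ R) (k : ℕ) : ∀ N : ℕ, 1 ≤ N → (N : ℝ) ≤ R ^ k →
    ∃ e, 1 ≤ e ∧ e ∣ N ∧ (e : ℝ) ≤ R ∧ dv N ≤ (2 * dv e) ^ k := by
  classical
  induction k with
  | zero =>
    intro N hN h
    have : N = 1 := by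
      have : (N : ℝ) ≤ 1 := by simpa using h
      have : N ≤ 1 := by exact_mod_cast this
      omega
    subst this
    exact ⟨1, le_rfl, dvd_rfl, by simpa using hR, by simp [dv]⟩
  | succ k ih =>
    intro N hN h
    by_cases hNR : (N : ℝ) ≤ R
    · refine ⟨N, hN, dvd_rfl, hNR, ?_⟩
      have := dv_pos hN
      calc dv N ≤ 2 * dv N := by omega
        _ ≤ _ := Nat.le_self_pow (by omega) _
    · have hex : ∃ D, D ∣ N ∧ R < (D : ℝ) := ⟨N, dvd_rfl, not_le.1 hNR⟩
      set D := Nat.find hex with hD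
      obtain ⟨hDN, hDR⟩ := Nat.find_spec hex
      rw [← hD] at hDN hDR
      have hD1 : D ≠ 1 := by
        rintro h1; rw [h1] at hDR; simp at hDR; linarith
      have hD0 : 1 ≤ D := Nat.pos_of_dvd_of_pos hDN hN
      obtain ⟨p, hp, e, he⟩ := Nat.exists_prime_and_dvd hD1
      have he1 : 1 ≤ e := by
        rcases Nat.eq_zero_or_pos e with h0 | h0
        · subst h0; omega
        · exact h0
      have heD : e < D := by rw [he]; nlinarith [hp.two_le]
      have heN : e ∣ N := (Dvd.intro_left p he.symm).trans hDN
      have heR : (e : ℝ) ≤ R := by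
        by_contra hc
        exact Nat.find_min hex heD ⟨heN, not_le.1 hc⟩
      obtain ⟨M, hM⟩ := hDN
      have hM1 : 1 ≤ M := by
        rcases Nat.eq_zero_or_pos M with h0 | h0
        · subst h0; omega
        · exact h0
      have hMR : (M : ℝ) ≤ R ^ k := by
        have h1 : (N : ℝ) = D * M := by exact_mod_cast hM
        rw [h1, pow_succ] at h
        have hM0 : (0 : ℝ) ≤ M := by positivity
        have : R * M ≤ R * R ^ k := by nlinarith
        exact le_of_mul_le_mul_left this (by linarith)
      obtain ⟨e', he'1, he'M, he'R, hd⟩ := ih M hM1 hMR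
      have hdD : dv D ≤ 2 * dv e := by
        rw [he]; exact (dv_mul_le p e).trans (by rw [dv_prime hp])
      have hdN : dv N ≤ (2 * dv e) * (2 * dv e') ^ k := by
        rw [hM]
        exact (dv_mul_le _ _).trans (Nat.mul_le_mul hdD hd)
      rcases le_total (dv e) (dv e') with hle | hle
      · refine ⟨e', he'1, he'M.trans (Dvd.intro_left D hM.symm), he'R, hdN.trans ?_⟩
        rw [pow_succ, mul_comm]
        gcongr
      · refine ⟨e, he1, heN, heR, hdN.trans ?_⟩
        rw [pow_succ, mul_comm ((2 * dv e) ^ k)]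
        gcongr

theorem card_divAnti (e : ℕ) : e.divisorsAntidiagonal.card = e.divisors.card := by
  rw [← Nat.map_div_right_divisors, Finset.card_map]

theorem dv_sum (M : ℕ) (j : ℕ) :
    ∑ e ∈ Finset.Icc 1 M, (dv e : ℝ) ^ j / e ≤ (1 + Real.log M) ^ (2 ^ j) := by
  classical
  induction j with
  | zero => simpa using harm_le M
  | succ j ih =>
    have h0 : 0 ≤ ∑ e ∈ Finset.Icc 1 M, (dv e : ℝ) ^ j / e :=
      Finset.sum_nonneg (fun _ _ => by positivity)
    have key : ∑ e ∈ Finset.Icc 1 M, (dv e : ℝ) ^ (j + 1) / e ≤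
        (∑ e ∈ Finset.Icc 1 M, (dv e : ℝ) ^ j / e) * (∑ e ∈ Finset.Icc 1 M, (dv e : ℝ) ^ j / e) := by
      rw [Finset.sum_mul_sum, ← Finset.sum_product']
      have e1 : ∀ e ∈ Finset.Icc 1 M, (dv e : ℝ) ^ (j + 1) / e =
          ∑ p ∈ e.divisorsAntidiagonal, (dv (p.1 * p.2) : ℝ) ^ j / ((p.1 : ℝ) * p.2) := by
        intro e he
        have : ∀ p ∈ e.divisorsAntidiagonal, (dv (p.1 * p.2) : ℝ) ^ j / ((p.1 : ℝ) * p.2) =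
            (dv e : ℝ) ^ j / e := by
          intro p hp
          have := (Nat.mem_divisorsAntidiagonal.1 hp).1
          rw [← Nat.cast_mul, this]
        rw [Finset.sum_congr rfl this, Finset.sum_const, card_divAnti, nsmul_eq_mul]
        unfold dv
        rw [pow_succ]; ring
      rw [Finset.sum_congr rfl e1, Finset.sum_sigma']
      calc _ = ∑ p ∈ ((Finset.Icc 1 M).sigma (fun e => e.divisorsAntidiagonal)).image
              (fun t => t.2), (dv (p.1 * p.2) : ℝ) ^ j / ((p.1 : ℝ) * p.2) := by
            rw [Finset.sum_image]
            rintro ⟨e, p⟩ ht ⟨e', p'⟩ ht' h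
            simp only at h
            subst h
            simp only [Finset.coe_sigma, Set.mem_sigma_iff, Finset.mem_coe,
              Nat.mem_divisorsAntidiagonal] at ht ht'
            have : e = e' := ht.2.1.symm.trans ht'.2.1
            subst this
            rfl
        _ ≤ ∑ p ∈ Finset.Icc 1 M ×ˢ Finset.Icc 1 M, (dv (p.1 * p.2) : ℝ) ^ j / ((p.1 : ℝ) * p.2) := by
            apply Finset.sum_le_sum_of_subset_of_nonneg
            · intro p hp
              obtain ⟨⟨e, p'⟩, ht, rfl⟩ := Finset.mem_image.1 hp
              simp only [Finset.mem_sigma, Nat.mem_divisorsAntidiagonal, Finset.mem_Icc] at ht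
              obtain ⟨⟨h1, h2⟩, h3, h4⟩ := ht
              simp only [Finset.mem_product, Finset.mem_Icc]
              have hp1 : 1 ≤ p'.1 := by
                rcases Nat.eq_zero_or_pos p'.1 with h | h
                · rw [h] at h3; omega
                · exact h
              have hp2 : 1 ≤ p'.2 := by
                rcases Nat.eq_zero_or_pos p'.2 with h | h
                · rw [h] at h3; omega
                · exact h
              refine ⟨⟨hp1, by nlinarith⟩, hp2, by nlinarith⟩
            · intro _ _ _; positivity
        _ ≤ _ := by
            apply Finset.sum_le_sum
            intro p _
            have : (dv (p.1 * p.2) : ℝ) ≤ dv p.1 * dv p.2 := by exact_mod_cast dv_mul_le _ _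
            rw [div_mul_div_comm, ← mul_pow]
            gcongr
    refine key.trans ?_
    rw [pow_succ 2 j, pow_mul, pow_two]
    exact mul_le_mul ih ih h0 (h0.trans ih)

theorem sqrt_sum (K : ℕ) : ∑ k ∈ Finset.Icc 1 K, 1 / Real.sqrt k ≤ 2 * Real.sqrt K := by
  induction K with
  | zero => simp
  | succ n ih =>
    rw [Finset.sum_Icc_succ_top (by omega)]
    have h1 : (0 : ℝ) < Real.sqrt ((n + 1 : ℕ) : ℝ) := Real.sqrt_pos.2 (by positivity)
    have h2 : Real.sqrt (n : ℝ) ≤ Real.sqrt ((n + 1 : ℕ) : ℝ) := Real.sqrt_le_sqrt (by push_cast; linarith)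
    have s1 : Real.sqrt ((n + 1 : ℕ) : ℝ) ^ 2 = n + 1 := by rw [Real.sq_sqrt (by positivity)]; push_cast; ring
    have s2 : Real.sqrt (n : ℝ) ^ 2 = n := Real.sq_sqrt (by positivity)
    have : 1 / Real.sqrt ((n + 1 : ℕ) : ℝ) ≤ 2 * (Real.sqrt ((n + 1 : ℕ) : ℝ) - Real.sqrt n) := by
      rw [div_le_iff₀ h1]
      nlinarith [Real.sqrt_nonneg (n : ℝ)]
    linarith

theorem ap_sum (e : ℕ) (he : 1 ≤ e) (H : ℝ) (hH : 0 ≤ H) (S : Finset ℕ) (hS1 : ∀ n ∈ S, 1 ≤ n)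
    (hS2 : ∀ n ∈ S, (n : ℝ) ≤ H) (hS3 : ∀ n ∈ S, ∀ n' ∈ S, n ≡ n' [MOD e]) :
    ∑ n ∈ S, 1 / Real.sqrt n ≤ 1 + 2 * Real.sqrt H / e := by
  classical
  have he0 : (0 : ℝ) < e := by exact_mod_cast he
  have hinj : Set.InjOn (fun n : ℕ => n / e) S := by
    intro n hn n' hn' h
    simp only at h
    have := hS3 n hn n' hn'
    rw [← Nat.div_add_mod n e, ← Nat.div_add_mod n' e, h, this]
  set g : ℕ → ℝ := fun k => if k = 0 then 1 else 1 / (Real.sqrt e * Real.sqrt k)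
  have hle : ∀ n ∈ S, 1 / Real.sqrt n ≤ g (n / e) := by
    intro n hn
    simp only [g]
    split_ifs with h0
    · have : (1 : ℝ) ≤ n := by exact_mod_cast hS1 n hn
      rw [div_le_one (Real.sqrt_pos.2 (by linarith))]
      exact Real.one_le_sqrt.2 this
    · have hk : (0 : ℝ) < (n / e : ℕ) := by exact_mod_cast Nat.pos_of_ne_zero h0
      rw [← Real.sqrt_mul he0.le]
      apply one_div_le_one_div_of_le (Real.sqrt_pos.2 (by positivity))
      apply Real.sqrt_le_sqrt
      exact_mod_cast Nat.mul_div_le n e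
  refine (Finset.sum_le_sum hle).trans ?_
  rw [← Finset.sum_image (f := g) hinj]
  set K := ⌊H / e⌋₊
  have hsub : S.image (fun n : ℕ => n / e) ⊆ insert 0 (Finset.Icc 1 K) := by
    intro k hk
    obtain ⟨n, hn, rfl⟩ := Finset.mem_image.1 hk
    simp only [Finset.mem_insert, Finset.mem_Icc]
    rcases Nat.eq_zero_or_pos (n / e) with h | h
    · exact Or.inl h
    · refine Or.inr ⟨h, ?_⟩
      apply Nat.le_floor
      rw [le_div_iff₀ he0]
      refine le_trans ?_ (hS2 n hn)
      exact_mod_cast Nat.div_mul_le_self n e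
  have hg0 : ∀ k, 0 ≤ g k := by intro k; simp only [g]; split_ifs <;> positivity
  refine (Finset.sum_le_sum_of_subset_of_nonneg hsub (fun k _ _ => hg0 k)).trans ?_
  rw [Finset.sum_insert (by simp)]
  have e2 : ∑ k ∈ Finset.Icc 1 K, g k = 1 / Real.sqrt e * ∑ k ∈ Finset.Icc 1 K, 1 / Real.sqrt k := by
    rw [Finset.mul_sum]
    apply Finset.sum_congr rfl
    intro k hk
    have : k ≠ 0 := by have := (Finset.mem_Icc.1 hk).1; omega
    simp only [g, this, if_false]
    rw [one_div_mul_one_div]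
  rw [e2]
  have hg00 : g 0 = 1 := by simp [g]
  rw [hg00]
  have hK : Real.sqrt K ≤ Real.sqrt (H / e) := Real.sqrt_le_sqrt (Nat.floor_le (by positivity))
  have h3 := sqrt_sum K
  have hse : Real.sqrt e * Real.sqrt e = e := Real.mul_self_sqrt he0.le
  have hse0 : 0 < Real.sqrt e := Real.sqrt_pos.2 he0
  have : 1 / Real.sqrt e * ∑ k ∈ Finset.Icc 1 K, 1 / Real.sqrt k ≤ 1 / Real.sqrt e * (2 * Real.sqrt (H / e)) := by
    gcongr; linarith
  rw [Real.sqrt_div hH] at this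
  have e4 : 1 / Real.sqrt e * (2 * (Real.sqrt H / Real.sqrt e)) = 2 * Real.sqrt H / e := by
    calc _ = 2 * Real.sqrt H / (Real.sqrt e * Real.sqrt e) := by field_simp
      _ = _ := by rw [hse]
  linarith


section
open Classical

theorem core_half (B : ℕ) (Z : ℝ) (hZ : 0 < Z) (e : ℕ) (he : 1 ≤ e) (heZ : (e : ℝ) ^ 4 ≤ Z)
    (P : ℕ → ℕ → Prop) (hP : ∀ m n n', P m n → P m n' → n ≡ n' [MOD e]) :
    ∑ m ∈ Finset.Icc 1 B, ∑ n ∈ (Finset.Icc 1 B).filter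
      (fun n : ℕ => (m : ℝ) * n ≤ Z ∧ m ≤ n ∧ P m n), 1 / Real.sqrt ((m : ℝ) * n) ≤
    3 * Real.sqrt Z * (1 + Real.log B) / e := by
  have he0 : (0 : ℝ) < e := by exact_mod_cast he
  calc _ ≤ ∑ m ∈ Finset.Icc 1 B, 3 * Real.sqrt Z / e * (1 / (m : ℝ)) := ?_
    _ ≤ _ := by
      rw [← Finset.mul_sum]
      calc _ ≤ 3 * Real.sqrt Z / e * (1 + Real.log B) := by gcongr; exact harm_le B
        _ = _ := by ring
  apply Finset.sum_le_sum
  intro m hm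
  have hm1 := (Finset.mem_Icc.1 hm).1
  have hm0 : (0 : ℝ) < m := by exact_mod_cast hm1
  set S := (Finset.Icc 1 B).filter (fun n : ℕ => (m : ℝ) * n ≤ Z ∧ m ≤ n ∧ P m n) with hS
  rcases S.eq_empty_or_nonempty with h0 | ⟨n0, hn0⟩
  · rw [h0]; simp; positivity
  · have hm2 : (m : ℝ) ^ 2 ≤ Z := by
      obtain ⟨_, h1, h2, _⟩ := Finset.mem_filter.1 hn0
      have : (m : ℝ) ≤ n0 := by exact_mod_cast h2
      nlinarith
    have h := ap_sum e he (Z / m) (by positivity) S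
      (fun n hn => (Finset.mem_Icc.1 (Finset.mem_filter.1 hn).1).1)
      (fun n hn => by
        rw [le_div_iff₀ hm0]
        have := (Finset.mem_filter.1 hn).2.1
        linarith)
      (fun n hn n' hn' => hP m n n' (Finset.mem_filter.1 hn).2.2.2 (Finset.mem_filter.1 hn').2.2.2)
    have hge : (1 : ℝ) ≤ Real.sqrt (Z / m) / e := by
      rw [le_div_iff₀ he0, one_mul]
      apply Real.le_sqrt_of_sq_le
      rw [le_div_iff₀ hm0]
      by_contra hc
      push Not at hc
      have : Z ^ 2 < ((e : ℝ) ^ 2 * m) ^ 2 := by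
        apply pow_lt_pow_left₀ hc hZ.le (by norm_num)
      have h2 : ((e : ℝ) ^ 2 * m) ^ 2 ≤ Z * Z := by
        calc ((e : ℝ) ^ 2 * m) ^ 2 = (e : ℝ) ^ 4 * (m : ℝ) ^ 2 := by ring
          _ ≤ _ := by gcongr
      nlinarith
    have e1 : ∑ n ∈ S, 1 / Real.sqrt ((m : ℝ) * n) = 1 / Real.sqrt m * ∑ n ∈ S, 1 / Real.sqrt n := by
      rw [Finset.mul_sum]
      apply Finset.sum_congr rfl
      intro n _
      rw [Real.sqrt_mul hm0.le, one_div_mul_one_div]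
    rw [e1]
    have hsm0 : 0 < Real.sqrt m := Real.sqrt_pos.2 hm0
    calc _ ≤ 1 / Real.sqrt m * (3 * Real.sqrt (Z / m) / e) := by
          gcongr
          refine h.trans ?_
          have : 3 * Real.sqrt (Z / m) / e = Real.sqrt (Z / m) / e + 2 * Real.sqrt (Z / m) / e := by ring
          linarith
      _ = 3 * Real.sqrt Z / e * (1 / (Real.sqrt m * Real.sqrt m)) := by
          rw [Real.sqrt_div hZ.le]; field_simp
      _ = _ := by rw [Real.mul_self_sqrt hm0.le]

theorem core_sum (B : ℕ) (Z : ℝ) (hZ : 0 < Z) (e : ℕ) (he : 1 ≤ e) (heZ : (e : ℝ) ^ 4 ≤ Z)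
    (P : ℕ → ℕ → Prop) (hP : ∀ m n n', P m n → P m n' → n ≡ n' [MOD e])
    (hP' : ∀ m m' n, P m n → P m' n → m ≡ m' [MOD e]) :
    ∑ w ∈ (Finset.Icc 1 B ×ˢ Finset.Icc 1 B).filter
      (fun w : ℕ × ℕ => (w.1 : ℝ) * w.2 ≤ Z), (if P w.1 w.2 then 1 / Real.sqrt ((w.1 : ℝ) * w.2) else 0) ≤
    6 * Real.sqrt Z * (1 + Real.log B) / e := by
  have h1 := core_half B Z hZ e he heZ P hP
  have h2 := core_half B Z hZ e he heZ (fun m n => P n m) (fun m n n' h h' => hP' n n' m h h')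
  simp only [Finset.sum_filter] at h1 h2
  rw [Finset.sum_comm] at h2
  rw [Finset.sum_filter, Finset.sum_product]
  calc _ ≤ ∑ m ∈ Finset.Icc 1 B, ∑ n ∈ Finset.Icc 1 B,
        ((if (m : ℝ) * n ≤ Z ∧ m ≤ n ∧ P m n then 1 / Real.sqrt ((m : ℝ) * n) else 0) +
         (if (n : ℝ) * m ≤ Z ∧ n ≤ m ∧ P m n then 1 / Real.sqrt ((n : ℝ) * m) else 0)) := by
        apply Finset.sum_le_sum; intro m _
        apply Finset.sum_le_sum; intro n _
        by_cases hz : (m : ℝ) * n ≤ Z <;> by_cases hp : P m n <;> rcases le_total m n with hmn | hmn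
        all_goals
          have hz2 := hz
          rw [mul_comm] at hz2
          rw [mul_comm (n : ℝ) m]
          simp only [hz, hp, hmn, and_true, true_and, and_false, false_and, if_true, if_false]
          try simp
          try (split_ifs <;> positivity)
    _ ≤ _ := by
        simp only [Finset.sum_add_distrib]
        calc _ ≤ 3 * Real.sqrt Z * (1 + Real.log B) / e + 3 * Real.sqrt Z * (1 + Real.log B) / e := add_le_add h1 h2
          _ = _ := by ring

theorem dvN_sum (k q : ℕ) (hq : 1 ≤ q) (Z R : ℝ) (hZ : 0 < Z) (hR1 : 1 ≤ R) (hR4 : R ^ 4 ≤ Z) (hRq : R ≤ q)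
    (Nf : ℕ → ℕ → ℕ)
    (hN : ∀ m n : ℕ, 1 ≤ m → 1 ≤ n → (m : ℝ) * n ≤ Z → 1 ≤ Nf m n ∧ (Nf m n : ℝ) ≤ R ^ k)
    (c1 : ∀ e m n n' : ℕ, 1 ≤ e → (e : ℝ) ≤ R → 1 ≤ m → 1 ≤ n → 1 ≤ n' → (m : ℝ) * n ≤ Z → (m : ℝ) * n' ≤ Z →
      e ∣ Nf m n → e ∣ Nf m n' → n ≡ n' [MOD e])
    (c2 : ∀ e m m' n : ℕ, 1 ≤ e → (e : ℝ) ≤ R → 1 ≤ m → 1 ≤ m' → 1 ≤ n → (m : ℝ) * n ≤ Z → (m' : ℝ) * n ≤ Z →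
      e ∣ Nf m n → e ∣ Nf m' n → m ≡ m' [MOD e]) :
    ∑ w ∈ (Finset.Icc 1 q ×ˢ Finset.Icc 1 q).filter
      (fun w : ℕ × ℕ => (w.1 : ℝ) * w.2 ≤ Z), 1 / Real.sqrt ((w.1 : ℝ) * w.2) * (dv (Nf w.1 w.2) : ℝ) ^ 2 ≤
    6 * 2 ^ (k * 2) * Real.sqrt Z * (1 + Real.log q) ^ (2 ^ (k * 2) + 1) := by
  set W := (Finset.Icc 1 q ×ˢ Finset.Icc 1 q).filter (fun w : ℕ × ℕ => (w.1 : ℝ) * w.2 ≤ Z) with hW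
  obtain ⟨P, hP⟩ : ∃ P : ℕ → ℕ → ℕ → Prop, ∀ e m n, P e m n ↔
      (1 ≤ m ∧ 1 ≤ n ∧ (m : ℝ) * n ≤ Z ∧ e ∣ Nf m n) := ⟨_, fun _ _ _ => Iff.rfl⟩
  have step : ∀ w ∈ W, 1 / Real.sqrt ((w.1 : ℝ) * w.2) * (dv (Nf w.1 w.2) : ℝ) ^ 2 ≤
      ∑ e ∈ (Finset.Icc 1 q).filter (fun e : ℕ => (e : ℝ) ≤ R), (2 ^ (k * 2) * (dv e : ℝ) ^ (k * 2)) *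
        (if P e w.1 w.2 then 1 / Real.sqrt ((w.1 : ℝ) * w.2) else 0) := by
    intro w hw
    obtain ⟨hw1, hw2⟩ := Finset.mem_filter.1 hw
    obtain ⟨hm, hn⟩ := Finset.mem_product.1 hw1
    have hm1 := (Finset.mem_Icc.1 hm).1
    have hn1 := (Finset.mem_Icc.1 hn).1
    obtain ⟨a1, a2⟩ := hN _ _ hm1 hn1 hw2
    obtain ⟨e, he1, he2, he3, he4⟩ := landreau R hR1 k _ a1 a2
    have heq : e ≤ q := by
      have : (e : ℝ) ≤ q := he3.trans hRq
      exact_mod_cast this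
    refine le_trans ?_ (Finset.single_le_sum (f := fun e : ℕ => (2 ^ (k * 2) * (dv e : ℝ) ^ (k * 2)) *
        (if P e w.1 w.2 then 1 / Real.sqrt ((w.1 : ℝ) * w.2) else 0)) (fun i _ => by positivity)
        (Finset.mem_filter.2 ⟨Finset.mem_Icc.2 ⟨he1, heq⟩, he3⟩))
    rw [if_pos ((hP _ _ _).2 ⟨hm1, hn1, hw2, he2⟩), mul_comm]
    gcongr
    have : (dv (Nf w.1 w.2) : ℝ) ≤ (2 * dv e) ^ k := by exact_mod_cast he4
    calc (dv (Nf w.1 w.2) : ℝ) ^ 2 ≤ ((2 * dv e) ^ k) ^ 2 := by gcongr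
      _ = _ := by rw [← pow_mul, mul_pow]
  refine (Finset.sum_le_sum step).trans ?_
  rw [Finset.sum_comm]
  have hlq := Real.log_natCast_nonneg q
  calc _ ≤ ∑ e ∈ (Finset.Icc 1 q).filter (fun e : ℕ => (e : ℝ) ≤ R), (2 ^ (k * 2) * (dv e : ℝ) ^ (k * 2)) *
          (6 * Real.sqrt Z * (1 + Real.log q) / e) := by
        apply Finset.sum_le_sum
        intro e he
        obtain ⟨he1, heR⟩ := Finset.mem_filter.1 he
        have he1 := (Finset.mem_Icc.1 he1).1
        rw [← Finset.mul_sum]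
        gcongr
        apply core_sum q Z hZ e he1 ((pow_le_pow_left₀ (by positivity) heR 4).trans hR4) (P e)
        · intro m n n' h h'
          rw [hP] at h h'
          exact c1 e m n n' he1 heR h.1 h.2.1 h'.2.1 h.2.2.1 h'.2.2.1 h.2.2.2 h'.2.2.2
        · intro m m' n h h'
          rw [hP] at h h'
          exact c2 e m m' n he1 heR h.1 h'.1 h.2.1 h.2.2.1 h'.2.2.1 h.2.2.2 h'.2.2.2
    _ ≤ ∑ e ∈ Finset.Icc 1 q, (2 ^ (k * 2) * (dv e : ℝ) ^ (k * 2)) *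
          (6 * Real.sqrt Z * (1 + Real.log q) / e) := by
        apply Finset.sum_le_sum_of_subset_of_nonneg (Finset.filter_subset _ _)
        intro _ _ _; positivity
    _ = 6 * 2 ^ (k * 2) * Real.sqrt Z * (1 + Real.log q) * ∑ e ∈ Finset.Icc 1 q, (dv e : ℝ) ^ (k * 2) / e := by
        rw [Finset.mul_sum]
        apply Finset.sum_congr rfl
        intro e _; ring
    _ ≤ 6 * 2 ^ (k * 2) * Real.sqrt Z * (1 + Real.log q) * (1 + Real.log q) ^ (2 ^ (k * 2)) := by
        gcongr
        exact dv_sum q (k * 2)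
    _ = _ := by rw [pow_succ]; ring

theorem dvn_sum (q : ℕ) (Z : ℝ) (hZ : 0 < Z) :
    ∑ w ∈ (Finset.Icc 1 q ×ˢ Finset.Icc 1 q).filter
      (fun w : ℕ × ℕ => (w.1 : ℝ) * w.2 ≤ Z), 1 / Real.sqrt ((w.1 : ℝ) * w.2) * (dv w.2 : ℝ) ^ 2 ≤
    Real.sqrt Z * (1 + Real.log q) ^ 5 := by
  have hlq := Real.log_natCast_nonneg q
  calc _ ≤ ∑ w ∈ (Finset.Icc 1 q ×ˢ Finset.Icc 1 q).filter
          (fun w : ℕ × ℕ => (w.1 : ℝ) * w.2 ≤ Z), Real.sqrt Z * (1 / (w.1 : ℝ) * ((dv w.2 : ℝ) ^ 2 / w.2)) := by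
        apply Finset.sum_le_sum
        intro w hw
        obtain ⟨hw1, hw2⟩ := Finset.mem_filter.1 hw
        obtain ⟨hm, hn⟩ := Finset.mem_product.1 hw1
        have hm1 : (0 : ℝ) < w.1 := by exact_mod_cast (Finset.mem_Icc.1 hm).1
        have hn1 : (0 : ℝ) < w.2 := by exact_mod_cast (Finset.mem_Icc.1 hn).1
        have hmn : 0 < (w.1 : ℝ) * w.2 := by positivity
        have : 1 / Real.sqrt ((w.1 : ℝ) * w.2) ≤ Real.sqrt Z / ((w.1 : ℝ) * w.2) := by
          rw [div_le_div_iff₀ (Real.sqrt_pos.2 hmn) hmn, one_mul]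
          calc (w.1 : ℝ) * w.2 = Real.sqrt ((w.1 : ℝ) * w.2) * Real.sqrt ((w.1 : ℝ) * w.2) :=
                (Real.mul_self_sqrt hmn.le).symm
            _ ≤ _ := by gcongr
        calc _ ≤ Real.sqrt Z / ((w.1 : ℝ) * w.2) * (dv w.2 : ℝ) ^ 2 := by gcongr
          _ = _ := by field_simp
    _ ≤ ∑ w ∈ (Finset.Icc 1 q ×ˢ Finset.Icc 1 q), Real.sqrt Z * (1 / (w.1 : ℝ) * ((dv w.2 : ℝ) ^ 2 / w.2)) := by
        apply Finset.sum_le_sum_of_subset_of_nonneg (Finset.filter_subset _ _)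
        intro _ _ _; positivity
    _ = Real.sqrt Z * ((∑ m ∈ Finset.Icc 1 q, 1 / (m : ℝ)) * ∑ n ∈ Finset.Icc 1 q, (dv n : ℝ) ^ 2 / n) := by
        rw [← Finset.mul_sum, Finset.sum_product, Finset.sum_mul_sum]
    _ ≤ Real.sqrt Z * ((1 + Real.log q) * (1 + Real.log q) ^ (2 ^ 2)) := by
        gcongr
        · exact harm_le q
        · exact dv_sum q 2
    _ = _ := by ring
end


section
open Classical

/-- `x_i y_j` -/
def nn (q : ℕ) (t : (_ : ℕ) × (ℕ × ℕ)) : ℕ := xx q t.1 t.2.1 * yy q t.1 t.2.2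
/-- `x_j y_i` -/
def NN (q : ℕ) (t : (_ : ℕ) × (ℕ × ℕ)) : ℕ := xx q t.1 t.2.2 * yy q t.1 t.2.1

theorem big_generic {q : ℕ} (hq : q.Prime) (T0 : ℝ) (hT : 2 ≤ T0) (A : Finset ((_ : ℕ) × (ℕ × ℕ)))
    (hA : ∀ t ∈ A, t ∈ TT q ∧ T0 < (bb q t.1 t.2.1 : ℝ) ∧ T0 < (bb q t.1 t.2.2 : ℝ))
    (mf : ((_ : ℕ) × (ℕ × ℕ)) → ℕ) (Nf : ℕ → ℕ → ℕ)
    (hm : ∀ t ∈ A, 1 ≤ mf t ∧ NN q t = Nf (mf t) (nn q t) ∧ q * mf t ≤ 2 * NN q t) :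
    ∑ t ∈ A, GG (bb q t.1 t.2.1) * GG (bb q t.1 t.2.2) ≤
      4 * (1 + Real.log q) ^ 2 * Real.sqrt (2 * q) *
      ∑ w ∈ (Finset.Icc 1 q ×ˢ Finset.Icc 1 q).filter
        (fun w : ℕ × ℕ => (w.1 : ℝ) * w.2 ≤ 2 * q / T0 ^ 2),
        1 / Real.sqrt ((w.1 : ℝ) * w.2) * ((dv w.2 : ℝ) * dv (Nf w.1 w.2)) := by
  have hlq := Real.log_natCast_nonneg q
  have hq0 : (0 : ℝ) < q := by exact_mod_cast hq.pos
  have hT0 : 0 < T0 := by linarith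
  set W := (Finset.Icc 1 q ×ˢ Finset.Icc 1 q).filter
        (fun w : ℕ × ℕ => (w.1 : ℝ) * w.2 ≤ 2 * q / T0 ^ 2) with hW
  -- basic facts
  have basic : ∀ t ∈ A, 1 ≤ nn q t ∧ 1 ≤ mf t ∧
      (bb q t.1 t.2.1 : ℝ) * bb q t.1 t.2.2 * ((mf t : ℝ) * nn q t) ≤ 2 * q ∧
      1 ≤ bb q t.1 t.2.1 ∧ 1 ≤ bb q t.1 t.2.2 ∧ bb q t.1 t.2.1 ≤ q ∧ bb q t.1 t.2.2 ≤ q := by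
    intro t ht
    obtain ⟨h1, _, _⟩ := hA t ht
    obtain ⟨m1, m2, m3⟩ := mem_TT.1 h1
    obtain ⟨_, _, b1, _, x1, y1, _⟩ := facts hq m1.1 m1.2 (m2.trans m3)
    obtain ⟨_, _, b2, _, x2, y2, _⟩ := facts hq m1.1 m1.2 m3
    have l1 := xy_le hq m1.1 m1.2 (m2.trans m3)
    have l2 := xy_le hq m1.1 m1.2 m3
    obtain ⟨k1, k2, k3⟩ := hm t ht
    refine ⟨Nat.mul_pos x1 y2, k1, ?_, b1, b2, ?_, ?_⟩
    · have : bb q t.1 t.2.1 * bb q t.1 t.2.2 * (mf t * nn q t) * q ≤ 2 * q * q := by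
        calc bb q t.1 t.2.1 * bb q t.1 t.2.2 * (mf t * nn q t) * q
            = bb q t.1 t.2.1 * bb q t.1 t.2.2 * nn q t * (q * mf t) := by ring
          _ ≤ bb q t.1 t.2.1 * bb q t.1 t.2.2 * nn q t * (2 * NN q t) := Nat.mul_le_mul_left _ k3
          _ = 2 * ((bb q t.1 t.2.1 * (xx q t.1 t.2.1 * yy q t.1 t.2.1)) *
              (bb q t.1 t.2.2 * (xx q t.1 t.2.2 * yy q t.1 t.2.2))) := by unfold nn NN; ring
          _ ≤ 2 * (q * q) := Nat.mul_le_mul_left _ (Nat.mul_le_mul l1 l2)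
          _ = _ := by ring
      exact_mod_cast Nat.le_of_mul_le_mul_right this hq.pos
    · have : 1 ≤ xx q t.1 t.2.1 * yy q t.1 t.2.1 := Nat.mul_pos x1 y1
      nlinarith
    · have : 1 ≤ xx q t.1 t.2.2 * yy q t.1 t.2.2 := Nat.mul_pos x2 y2
      nlinarith
  have term : ∀ t ∈ A, GG (bb q t.1 t.2.1) * GG (bb q t.1 t.2.2) ≤
      (1 + Real.log q) ^ 2 * Real.sqrt (2 * q) * (1 / Real.sqrt ((mf t : ℝ) * nn q t)) := by
    intro t ht
    obtain ⟨n1, m1, hb, b1, b2, b3, b4⟩ := basic t ht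
    have hmn : 0 < (mf t : ℝ) * nn q t := by
      have : 0 < mf t * nn q t := Nat.mul_pos m1 n1
      exact_mod_cast this
    have c1 : (0 : ℝ) < bb q t.1 t.2.1 := by exact_mod_cast b1
    have c2 : (0 : ℝ) < bb q t.1 t.2.2 := by exact_mod_cast b2
    have l1 : Real.log (bb q t.1 t.2.1) ≤ Real.log q := Real.log_le_log c1 (by exact_mod_cast b3)
    have l2 : Real.log (bb q t.1 t.2.2) ≤ Real.log q := Real.log_le_log c2 (by exact_mod_cast b4)
    have l3 := Real.log_natCast_nonneg (bb q t.1 t.2.1)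
    have l4 := Real.log_natCast_nonneg (bb q t.1 t.2.2)
    have hs : Real.sqrt (bb q t.1 t.2.1) * Real.sqrt (bb q t.1 t.2.2) ≤
        Real.sqrt (2 * q) * (1 / Real.sqrt ((mf t : ℝ) * nn q t)) := by
      rw [mul_one_div, ← Real.sqrt_div (by positivity), ← Real.sqrt_mul c1.le]
      apply Real.sqrt_le_sqrt
      rw [le_div_iff₀ hmn]; exact hb
    unfold GG
    calc _ = (Real.sqrt (bb q t.1 t.2.1) * Real.sqrt (bb q t.1 t.2.2)) *
          ((1 + Real.log (bb q t.1 t.2.1)) * (1 + Real.log (bb q t.1 t.2.2))) := by ring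
      _ ≤ (Real.sqrt (2 * q) * (1 / Real.sqrt ((mf t : ℝ) * nn q t))) *
          ((1 + Real.log q) * (1 + Real.log q)) := by gcongr
      _ = _ := by ring
  refine (Finset.sum_le_sum term).trans ?_
  rw [← Finset.mul_sum]
  have maps : ∀ t ∈ A, (mf t, nn q t) ∈ W := by
    intro t ht
    obtain ⟨n1, m1, hb, b1, b2, b3, b4⟩ := basic t ht
    obtain ⟨_, t1, t2⟩ := hA t ht
    have hmn : 0 < (mf t : ℝ) * nn q t := by
      have : 0 < mf t * nn q t := Nat.mul_pos m1 n1
      exact_mod_cast this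
    have hZ : (mf t : ℝ) * nn q t ≤ 2 * q / T0 ^ 2 := by
      rw [le_div_iff₀ (by positivity)]
      have : T0 ^ 2 ≤ (bb q t.1 t.2.1 : ℝ) * bb q t.1 t.2.2 := by nlinarith
      nlinarith
    have hZq : (mf t : ℝ) * nn q t ≤ q := by
      refine hZ.trans ?_
      rw [div_le_iff₀ (by positivity)]
      have h4 : (4 : ℝ) ≤ T0 ^ 2 := by nlinarith
      nlinarith
    have hZq' : mf t * nn q t ≤ q := by exact_mod_cast hZq
    refine Finset.mem_filter.2 ⟨Finset.mem_product.2 ⟨Finset.mem_Icc.2 ⟨m1, by nlinarith⟩,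
      Finset.mem_Icc.2 ⟨n1, by nlinarith⟩⟩, hZ⟩
  have fib : ∑ t ∈ A, 1 / Real.sqrt ((mf t : ℝ) * nn q t) ≤
      ∑ w ∈ W, 4 * (1 / Real.sqrt ((w.1 : ℝ) * w.2) * ((dv w.2 : ℝ) * dv (Nf w.1 w.2))) := by
    rw [← Finset.sum_fiberwise_of_maps_to maps]
    apply Finset.sum_le_sum
    intro w hw
    have e1 : ∑ t ∈ A.filter (fun t => (mf t, nn q t) = w), 1 / Real.sqrt ((mf t : ℝ) * nn q t) =
        (A.filter (fun t => (mf t, nn q t) = w)).card * (1 / Real.sqrt ((w.1 : ℝ) * w.2)) := by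
      rw [Finset.sum_congr rfl (g := fun _ => 1 / Real.sqrt ((w.1 : ℝ) * w.2))]
      · simp
      · intro t ht
        have := (Finset.mem_filter.1 ht).2
        rw [← this]
    rw [e1]
    have hcard : (A.filter (fun t => (mf t, nn q t) = w)).card ≤
        (dv w.2 * dv (Nf w.1 w.2)) * (2 * 2) := by
      have := Finset.card_le_card_of_injOn (s := A.filter (fun t => (mf t, nn q t) = w))
        (t := ((Nat.divisors w.2) ×ˢ (Nat.divisors (Nf w.1 w.2))) ×ˢ (Finset.range 2 ×ˢ Finset.range 2))
        (fun t => ((xx q t.1 t.2.1, xx q t.1 t.2.2), (t.2.1 % 2, t.2.2 % 2))) ?_ ?_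
      · simpa [dv, Finset.card_product] using this
      · intro t ht
        obtain ⟨ht1, ht2⟩ := Finset.mem_filter.1 ht
        obtain ⟨h1, _, _⟩ := hA t ht1
        obtain ⟨m1, m2, m3⟩ := mem_TT.1 h1
        obtain ⟨_, _, b1, _, x1, y1, _⟩ := facts hq m1.1 m1.2 (m2.trans m3)
        obtain ⟨_, _, b2, _, x2, y2, _⟩ := facts hq m1.1 m1.2 m3
        have hN := (hm t ht1).2.1
        rw [← ht2]
        simp only [← hN, Finset.coe_product, Set.mem_prod, Finset.mem_coe, Nat.mem_divisors,
          Finset.mem_range]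
        refine ⟨⟨⟨Dvd.intro _ rfl, (Nat.mul_pos x1 y2).ne'⟩, Dvd.intro _ rfl, (Nat.mul_pos x2 y1).ne'⟩,
          Nat.mod_lt _ (by norm_num), Nat.mod_lt _ (by norm_num)⟩
      · intro t ht t' ht' e
        obtain ⟨ht1, ht2⟩ := Finset.mem_filter.1 ht
        obtain ⟨ht1', ht2'⟩ := Finset.mem_filter.1 ht'
        obtain ⟨h1, _, _⟩ := hA t ht1
        obtain ⟨m1, m2, m3⟩ := mem_TT.1 h1
        obtain ⟨h1', _, _⟩ := hA t' ht1'
        obtain ⟨m1', m2', m3'⟩ := mem_TT.1 h1'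
        obtain ⟨_, _, b1, _, x1, y1, _⟩ := facts hq m1.1 m1.2 (m2.trans m3)
        obtain ⟨_, _, b2, _, x2, y2, _⟩ := facts hq m1.1 m1.2 m3
        have hww := ht2.trans ht2'.symm
        simp only [Prod.mk.injEq] at e hww
        obtain ⟨⟨ex1, ex2⟩, ep1, ep2⟩ := e
        obtain ⟨em, en⟩ := hww
        have eN : NN q t = NN q t' := by
          rw [(hm t ht1).2.1, (hm t' ht1').2.1, em, en]
        have ey2 : yy q t.1 t.2.2 = yy q t'.1 t'.2.2 := by
          unfold nn at en
          rw [← ex1] at en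
          exact Nat.eq_of_mul_eq_mul_left x1 en
        have ey1 : yy q t.1 t.2.1 = yy q t'.1 t'.2.1 := by
          unfold NN at eN
          rw [← ex2] at eN
          exact Nat.eq_of_mul_eq_mul_left x2 eN
        have r1 := DD_inj hq m1.1 m1.2 (m2.trans m3) m1'.1 m1'.2 (m2'.trans m3') ex1 ey1 ep1
        have r2 := DD_inj hq m1.1 m1.2 m3 m1'.1 m1'.2 m3' ex2 ey2 ep2
        obtain ⟨a, i, j⟩ := t
        obtain ⟨a', i', j'⟩ := t'
        simp only at r1 r2
        obtain ⟨rfl, rfl⟩ := r1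
        obtain ⟨_, rfl⟩ := r2
        rfl
    have hc : ((A.filter (fun t => (mf t, nn q t) = w)).card : ℝ) ≤
        (dv w.2 * dv (Nf w.1 w.2)) * (2 * 2) := by exact_mod_cast hcard
    calc _ ≤ ((dv w.2 : ℝ) * dv (Nf w.1 w.2)) * (2 * 2) * (1 / Real.sqrt ((w.1 : ℝ) * w.2)) := by gcongr
      _ = _ := by ring
  rw [← Finset.mul_sum] at fib
  calc _ ≤ (1 + Real.log q) ^ 2 * Real.sqrt (2 * q) * (4 * ∑ w ∈ W, 1 / Real.sqrt ((w.1 : ℝ) * w.2) * ((dv w.2 : ℝ) * dv (Nf w.1 w.2))) := by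
        gcongr
    _ = _ := by ring

theorem big_half {q : ℕ} (k : ℕ) (hq : q.Prime) (T0 : ℝ) (hT : 2 ≤ T0) (A : Finset ((_ : ℕ) × (ℕ × ℕ)))
    (hA : ∀ t ∈ A, t ∈ TT q ∧ T0 < (bb q t.1 t.2.1 : ℝ) ∧ T0 < (bb q t.1 t.2.2 : ℝ))
    (mf : ((_ : ℕ) × (ℕ × ℕ)) → ℕ) (Nf : ℕ → ℕ → ℕ)
    (hm : ∀ t ∈ A, 1 ≤ mf t ∧ NN q t = Nf (mf t) (nn q t) ∧ q * mf t ≤ 2 * NN q t)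
    (hdN : ∑ w ∈ (Finset.Icc 1 q ×ˢ Finset.Icc 1 q).filter
      (fun w : ℕ × ℕ => (w.1 : ℝ) * w.2 ≤ 2 * q / T0 ^ 2), 1 / Real.sqrt ((w.1 : ℝ) * w.2) * (dv (Nf w.1 w.2) : ℝ) ^ 2 ≤
    6 * 2 ^ (k * 2) * Real.sqrt (2 * q / T0 ^ 2) * (1 + Real.log q) ^ (2 ^ (k * 2) + 1)) :
    ∑ t ∈ A, GG (bb q t.1 t.2.1) * GG (bb q t.1 t.2.2) ≤
      (24 * 2 ^ (k * 2) + 4) * q * (1 + Real.log q) ^ (2 ^ (k * 2) + 7) / T0 := by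
  have hlq := Real.log_natCast_nonneg q
  have hq0 : (0 : ℝ) < q := by exact_mod_cast hq.pos
  have hT0 : 0 < T0 := by linarith
  have h1 := big_generic hq T0 hT A hA mf Nf hm
  have h2 := dvn_sum q (2 * q / T0 ^ 2) (by positivity)
  have hE0 : (0 : ℝ) < 2 ^ (k * 2) := by positivity
  generalize (2 : ℝ) ^ (k * 2) = E' at *
  generalize 2 ^ (k * 2) = E at *
  set W := (Finset.Icc 1 q ×ˢ Finset.Icc 1 q).filter
        (fun w : ℕ × ℕ => (w.1 : ℝ) * w.2 ≤ 2 * q / T0 ^ 2) with hW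
  have h3 : ∑ w ∈ W, 1 / Real.sqrt ((w.1 : ℝ) * w.2) * ((dv w.2 : ℝ) * dv (Nf w.1 w.2)) ≤
      (∑ w ∈ W, 1 / Real.sqrt ((w.1 : ℝ) * w.2) * (dv w.2 : ℝ) ^ 2 +
      ∑ w ∈ W, 1 / Real.sqrt ((w.1 : ℝ) * w.2) * (dv (Nf w.1 w.2) : ℝ) ^ 2) / 2 := by
    rw [← Finset.sum_add_distrib, Finset.sum_div]
    apply Finset.sum_le_sum
    intro w _
    have h0 : 0 ≤ 1 / Real.sqrt ((w.1 : ℝ) * w.2) := by positivity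
    rw [← mul_add, mul_div_assoc]
    gcongr
    nlinarith [sq_nonneg ((dv w.2 : ℝ) - dv (Nf w.1 w.2))]
  refine h1.trans ?_
  set L1 := 1 + Real.log q with hL1
  have hL : 1 ≤ L1 := by linarith
  set sZ := Real.sqrt (2 * q / T0 ^ 2) with hsZ
  have hs : Real.sqrt (2 * q) * sZ = 2 * q / T0 := by
    rw [hsZ, Real.sqrt_div (by positivity), Real.sqrt_sq hT0.le, ← mul_div_assoc,
      Real.mul_self_sqrt (by positivity)]
  have p1 : L1 ^ 7 ≤ L1 ^ (E + 7) := pow_le_pow_right₀ hL (by omega)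
  have p2 : L1 ^ (E + 3) ≤ L1 ^ (E + 7) := pow_le_pow_right₀ hL (by omega)
  have hqT : 0 ≤ 2 * q / T0 := by positivity
  calc _ ≤ 4 * L1 ^ 2 * Real.sqrt (2 * q) * ((sZ * L1 ^ 5 + 6 * E' * sZ * L1 ^ (E + 1)) / 2) := by
        gcongr
        exact h3.trans (by linarith)
    _ = (2 * q / T0) * (2 * L1 ^ 7 + 12 * E' * L1 ^ (E + 3)) := by
        rw [← hs]; ring
    _ ≤ (2 * q / T0) * (2 * L1 ^ (E + 7) + 12 * E' * L1 ^ (E + 7)) := by gcongr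
    _ = _ := by ring

theorem big_pm {q : ℕ} (k : ℕ) (hk : k = 16) (hq : q.Prime) (T0 : ℝ) (hT : 2 ≤ T0) (hTq : T0 ^ 4 ≤ q)
    (A : Finset ((_ : ℕ) × (ℕ × ℕ)))
    (hA : ∀ t ∈ A, t ∈ TT q ∧ T0 < (bb q t.1 t.2.1 : ℝ) ∧ T0 < (bb q t.1 t.2.2 : ℝ))
    (mf : ((_ : ℕ) × (ℕ × ℕ)) → ℕ) (Nf : ℕ → ℕ → ℕ)
    (hNf : (∀ m n, Nf m n = q * m + n) ∨ (∀ m n, Nf m n = q * m - n))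
    (hm : ∀ t ∈ A, 1 ≤ mf t ∧ NN q t = Nf (mf t) (nn q t) ∧ q * mf t ≤ 2 * NN q t) :
    ∑ t ∈ A, GG (bb q t.1 t.2.1) * GG (bb q t.1 t.2.2) ≤
      (24 * 2 ^ (k * 2) + 4) * q * (1 + Real.log q) ^ (2 ^ (k * 2) + 7) / T0 := by
  apply big_half k hq T0 hT A hA mf Nf hm
  have hq0 : (0 : ℝ) < q := by exact_mod_cast hq.pos
  have hq1 : (1 : ℝ) < q := by exact_mod_cast hq.one_lt
  have hT0 : 0 < T0 := by linarith
  set R : ℝ := (q : ℝ) ^ (1 / 8 : ℝ) with hR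
  have hR8 : R ^ 8 = q := by
    rw [hR, ← Real.rpow_natCast, ← Real.rpow_mul hq0.le]; norm_num
  have hR1 : 1 ≤ R := Real.one_le_rpow hq1.le (by norm_num)
  have hRlt : R < q := by
    rw [hR]
    conv_rhs => rw [← Real.rpow_one (q : ℝ)]
    exact Real.rpow_lt_rpow_of_exponent_lt hq1 (by norm_num)
  have hR4 : R ^ 4 ≤ 2 * q / T0 ^ 2 := by
    have h2 : T0 ^ 2 ≤ R ^ 4 := by
      have : (T0 ^ 2) ^ 2 ≤ (R ^ 4) ^ 2 := by nlinarith
      exact le_of_sq_le_sq this (by positivity)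
    rw [le_div_iff₀ (by positivity)]
    nlinarith [pow_pos (lt_of_lt_of_le one_pos hR1) 4]
  have hZq : 2 * q / T0 ^ 2 ≤ (q : ℝ) / 2 := by
    rw [div_le_iff₀ (by positivity)]
    have h4 : (4 : ℝ) ≤ T0 ^ 2 := by nlinarith
    nlinarith
  have hmn : ∀ m n : ℕ, 1 ≤ m → 1 ≤ n → (m : ℝ) * n ≤ 2 * q / T0 ^ 2 → 2 * (m * n) ≤ q := by
    intro m n _ _ h
    have : 2 * ((m : ℝ) * n) ≤ q := by linarith
    exact_mod_cast this
  have hcop : ∀ e : ℕ, 1 ≤ e → (e : ℝ) ≤ R → Nat.Coprime e q := by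
    intro e h1 h2
    have : e < q := by exact_mod_cast h2.trans_lt hRlt
    exact (Nat.coprime_of_lt_prime (by omega) this hq).symm
  refine dvN_sum k q hq.pos _ R (by positivity) hR1 hR4 hRlt.le Nf ?_ ?_ ?_
  · intro m n m1 n1 h
    have h2 := hmn m n m1 n1 h
    have hm2 : 2 * m ≤ q := by nlinarith
    have hn2 : 2 * n ≤ q := by nlinarith
    have hqm : q * 1 ≤ q * m := Nat.mul_le_mul_left _ m1
    have hb : Nf m n ≤ q * q := by
      rcases hNf with h | h <;> rw [h]
      · nlinarith
      · exact (Nat.sub_le _ _).trans (by nlinarith)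
    refine ⟨?_, ?_⟩
    · rcases hNf with h | h <;> rw [h] <;> omega
    · subst hk
      have : (Nf m n : ℝ) ≤ q * q := by exact_mod_cast hb
      calc (Nf m n : ℝ) ≤ q * q := this
        _ = R ^ 16 := by rw [← hR8]; ring
  · intro e m n n' e1 eR m1 n1 n1' h h' d d'
    have h2 := hmn m n m1 n1 h
    have h2' := hmn m n' m1 n1' h'
    have hqm : q * 1 ≤ q * m := Nat.mul_le_mul_left _ m1
    have hn2 : n ≤ q * m := by nlinarith
    have hn2' : n' ≤ q * m := by nlinarith
    rw [Nat.modEq_iff_dvd]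
    rcases hNf with hN | hN <;> rw [hN] at d d' <;> zify [hn2, hn2'] at d d'
    · have hh := dvd_sub d' d
      have e0 : (q * m + n' - (q * m + n) : ℤ) = n' - n := by ring
      rwa [e0] at hh
    · have hh := dvd_sub d d'
      have e0 : (q * m - n - (q * m - n') : ℤ) = n' - n := by ring
      rwa [e0] at hh
  · intro e m m' n e1 eR m1 m1' n1 h h' d d'
    have h2 := hmn m n m1 n1 h
    have h2' := hmn m' n m1' n1 h'
    have hqm : q * 1 ≤ q * m := Nat.mul_le_mul_left _ m1
    have hqm' : q * 1 ≤ q * m' := Nat.mul_le_mul_left _ m1'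
    have hn2 : n ≤ q * m := by nlinarith
    have hn2' : n ≤ q * m' := by nlinarith
    rw [Nat.modEq_iff_dvd]
    have hc : IsCoprime (e : ℤ) (q : ℤ) := Nat.isCoprime_iff_coprime.2 (hcop e e1 eR)
    apply hc.dvd_of_dvd_mul_left
    rcases hNf with hN | hN <;> rw [hN] at d d' <;> zify [hn2, hn2'] at d d'
    · have := dvd_sub d' d
      convert this using 1; ring
    · have := dvd_sub d' d
      convert this using 1; ring

theorem big_off : ∃ (C : ℝ) (E : ℕ), 0 < C ∧ ∀ q : ℕ, q.Prime → ∀ T0 : ℝ, 2 ≤ T0 → T0 ^ 4 ≤ q →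
    ∑ t ∈ (TT q).filter (fun t => T0 < (bb q t.1 t.2.1 : ℝ) ∧ T0 < (bb q t.1 t.2.2 : ℝ)),
      GG (bb q t.1 t.2.1) * GG (bb q t.1 t.2.2) ≤ C * q * (1 + Real.log q) ^ E / T0 := by
  obtain ⟨k, hk⟩ : ∃ k : ℕ, k = 16 := ⟨_, rfl⟩
  refine ⟨2 * (24 * 2 ^ (k * 2) + 4), 2 ^ (k * 2) + 7, by positivity, fun q hq T0 hT hTq => ?_⟩
  set S := (TT q).filter (fun t => T0 < (bb q t.1 t.2.1 : ℝ) ∧ T0 < (bb q t.1 t.2.2 : ℝ)) with hS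
  have hSm : ∀ t ∈ S, t ∈ TT q ∧ T0 < (bb q t.1 t.2.1 : ℝ) ∧ T0 < (bb q t.1 t.2.2 : ℝ) :=
    fun t ht => Finset.mem_filter.1 ht
  rw [← Finset.sum_filter_add_sum_filter_not S (fun t => ∃ m, 1 ≤ m ∧ NN q t = q * m + nn q t)]
  have b1 := big_pm k hk hq T0 hT hTq (S.filter (fun t => ∃ m, 1 ≤ m ∧ NN q t = q * m + nn q t))
    (fun t ht => hSm t (Finset.mem_filter.1 ht).1) (fun t => (NN q t - nn q t) / q)
    (fun m n => q * m + n) (Or.inl fun _ _ => rfl) ?_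
  have b2 := big_pm k hk hq T0 hT hTq (S.filter (fun t => ¬ ∃ m, 1 ≤ m ∧ NN q t = q * m + nn q t))
    (fun t ht => hSm t (Finset.mem_filter.1 ht).1) (fun t => (NN q t + nn q t) / q)
    (fun m n => q * m - n) (Or.inr fun _ _ => rfl) ?_
  · refine (add_le_add b1 b2).trans (le_of_eq ?_)
    ring
  · intro t ht
    obtain ⟨ht1, ht2⟩ := Finset.mem_filter.1 ht
    obtain ⟨h1, tb1, tb2⟩ := hSm t ht1
    obtain ⟨m1, m2, m3⟩ := mem_TT.1 h1
    obtain ⟨m, s, hm, hs, e, ex, ey⟩ := pair_rel hq m1.1 m1.2 m2 m3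
    have hnn : 2 * nn q t ≤ q := by
      have l2 := xy_le hq m1.1 m1.2 m3
      have : (2 : ℝ) < bb q t.1 t.2.2 := by linarith
      have h2 : 2 < bb q t.1 t.2.2 := by exact_mod_cast this
      calc 2 * nn q t ≤ bb q t.1 t.2.2 * (xx q t.1 t.2.2 * yy q t.1 t.2.2) := by
            unfold nn; gcongr
        _ ≤ q := l2
    have e' : NN q t + nn q t = q * m := by
      rcases hs with rfl | rfl
      · exfalso; apply ht2
        refine ⟨m, hm, ?_⟩
        unfold NN nn
        zify; rw [e]; ring
      · unfold NN nn
        zify; rw [e]; ring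
    have hd : (NN q t + nn q t) / q = m := by
      rw [e']; exact Nat.mul_div_cancel_left _ hq.pos
    have hqm : q * 1 ≤ q * m := Nat.mul_le_mul_left _ hm
    simp only [hd]
    refine ⟨hm, ?_, ?_⟩ <;> omega
  · intro t ht
    obtain ⟨ht1, m, hm, e⟩ := Finset.mem_filter.1 ht
    have hd : (NN q t - nn q t) / q = m := by
      rw [e, Nat.add_sub_cancel]; exact Nat.mul_div_cancel_left _ hq.pos
    simp only [hd]
    refine ⟨hm, e, ?_⟩
    omega
end


section
open Classical

theorem pow_le_exp (E : ℕ) : ∃ C : ℝ, 0 < C ∧ ∀ y : ℝ, 0 ≤ y → (1 + y ^ 3) ^ E ≤ C * Real.exp y := by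
  refine ⟨(3 * E).factorial * Real.exp 1, by positivity, fun y hy => ?_⟩
  have h1 : 1 + y ^ 3 ≤ (1 + y) ^ 3 := by nlinarith [pow_nonneg hy 2]
  calc (1 + y ^ 3) ^ E ≤ ((1 + y) ^ 3) ^ E := by gcongr
    _ = (1 + y) ^ (3 * E) := by rw [← pow_mul]
    _ ≤ (3 * E).factorial * Real.exp (1 + y) := by
        have := Real.pow_div_factorial_le_exp (1 + y) (by positivity) (3 * E)
        rw [div_le_iff₀ (by positivity)] at this
        linarith
    _ = _ := by rw [Real.exp_add]; ring

theorem off_diag : ∃ C : ℝ, 0 < C ∧ ∀ q : ℕ, q.Prime →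
    ∑ t ∈ TT q, GG (bb q t.1 t.2.1) * GG (bb q t.1 t.2.2) ≤ C * q * (1 + Real.log q) ^ 2 := by
  obtain ⟨Cs, hCs, hs⟩ := small_off
  obtain ⟨Cb, E, hCb, hb⟩ := big_off
  obtain ⟨C1, hC1, h1⟩ := pow_le_exp E
  obtain ⟨C3, hC3, h3⟩ := pow_le_exp 3
  set F : ℕ → ℝ := fun q => ∑ t ∈ TT q, GG (bb q t.1 t.2.1) * GG (bb q t.1 t.2.2) with hF
  have hF0 : ∀ q, 0 ≤ F q := fun q => Finset.sum_nonneg fun t _ => mul_nonneg (GG_nonneg _) (GG_nonneg _)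
  set M := ∑ q ∈ Finset.range (⌊Real.exp 8⌋₊ + 1), F q with hM
  have hM0 : 0 ≤ M := Finset.sum_nonneg fun q _ => hF0 q
  refine ⟨M + (Cs * 2049 + Cb * C1 + 256 * C3), by positivity, fun q hq => ?_⟩
  have hq0 : (0 : ℝ) < q := by exact_mod_cast hq.pos
  have hq1 : (1 : ℝ) ≤ q := by exact_mod_cast hq.pos
  have hlq := Real.log_natCast_nonneg q
  set l := Real.log q with hl
  have hl1 : 1 ≤ (1 + l) ^ 2 := by nlinarith
  change F q ≤ _
  have hK0 : 0 ≤ Cs * 2049 + Cb * C1 + 256 * C3 := by positivity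
  have hql : 1 ≤ q * (1 + l) ^ 2 := by nlinarith
  by_cases h8 : 8 ≤ l
  swap
  · have hqe : (q : ℝ) ≤ Real.exp 8 := by
      rw [← Real.log_le_iff_le_exp hq0]; linarith
    have hmem : q ∈ Finset.range (⌊Real.exp 8⌋₊ + 1) :=
      Finset.mem_range.2 (Nat.lt_succ_of_le (Nat.le_floor hqe))
    have : F q ≤ M := Finset.single_le_sum (fun q _ => hF0 q) hmem
    nlinarith
  set y := l ^ (1 / 3 : ℝ) with hy
  have hy0 : 0 ≤ y := by positivity
  have hy3 : y ^ 3 = l := by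
    rw [hy, ← Real.rpow_natCast, ← Real.rpow_mul hlq]; norm_num
  have hy2 : 2 ≤ y := by
    by_contra h
    push Not at h
    have : y ^ 3 < 2 ^ 3 := by gcongr
    linarith
  set T0 := Real.exp y with hT0
  have hT1 : 2 ≤ T0 := by
    have := Real.add_one_le_exp y
    linarith
  have hT4 : T0 ^ 4 ≤ q := by
    rw [hT0, ← Real.exp_nat_mul, ← Real.exp_log hq0]
    apply Real.exp_le_exp.2
    rw [← hl, ← hy3]
    push_cast
    have h44 : 4 ≤ y ^ 2 := by nlinarith
    calc 4 * y ≤ y ^ 2 * y := by gcongr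
      _ = y ^ 3 := by ring
  have a1 := hs q hq (T0 ^ 8) (one_le_pow₀ (by linarith))
  have a2 := hb q hq T0 hT1 hT4
  have a3 := mixed_off hq T0 (by linarith)
  have hlT : Real.log (T0 ^ 8) = 8 * y := by
    rw [Real.log_pow, hT0, Real.log_exp]; norm_num
  rw [hlT, ← hl] at a1
  rw [← hl] at a2 a3
  have c1 : (1 + 8 * y) ^ 3 ≤ 2048 * (1 + l) := by
    rw [← hy3]
    nlinarith [mul_nonneg hy0 (sq_nonneg (y - 1)), pow_nonneg hy0 3, sq_nonneg (y-1), mul_nonneg hy0 hy0]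
  have hT00 : 0 < T0 := by positivity
  have c2 : (1 + l) ^ E / T0 ≤ C1 := by
    rw [div_le_iff₀ hT00, ← hy3]; exact h1 y hy0
  have c3 : (1 + l) ^ 3 / T0 ≤ C3 := by
    rw [div_le_iff₀ hT00, ← hy3]; exact h3 y hy0
  have cover : F q ≤ Cs * q * ((1 + l) ^ 2 + (1 + l) * (1 + 8 * y) ^ 3) + Cb * q * (1 + l) ^ E / T0 +
      256 * q * (1 + l) ^ 3 / T0 := by
    refine le_trans ?_ (add_le_add (add_le_add a1 a2) a3)
    rw [hF]
    simp only [Finset.sum_filter]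
    rw [← Finset.sum_add_distrib, ← Finset.sum_add_distrib]
    apply Finset.sum_le_sum
    intro t _
    have hg : 0 ≤ GG (bb q t.1 t.2.1) * GG (bb q t.1 t.2.2) := mul_nonneg (GG_nonneg _) (GG_nonneg _)
    have hT8 : T0 ≤ T0 ^ 8 := le_self_pow₀ (by linarith) (by norm_num)
    generalize GG (bb q t.1 t.2.1) * GG (bb q t.1 t.2.2) = g at *
    generalize (bb q t.1 t.2.1 : ℝ) = x at *
    generalize (bb q t.1 t.2.2 : ℝ) = z at *
    have pos : ∀ (P : Prop) [Decidable P], 0 ≤ (if P then g else 0) := by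
      intro P _; split_ifs <;> simp [hg]
    have p1 := pos (x ≤ T0 ^ 8 ∧ z ≤ T0 ^ 8)
    have p2 := pos (T0 < x ∧ T0 < z)
    have p3 := pos (T0 ^ 8 < x ∧ z ≤ T0 ∨ T0 ^ 8 < z ∧ x ≤ T0)
    have : (x ≤ T0 ^ 8 ∧ z ≤ T0 ^ 8) ∨ (T0 < x ∧ T0 < z) ∨ (T0 ^ 8 < x ∧ z ≤ T0 ∨ T0 ^ 8 < z ∧ x ≤ T0) := by
      by_cases u1 : x ≤ T0 ^ 8
      · by_cases u2 : z ≤ T0 ^ 8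
        · exact Or.inl ⟨u1, u2⟩
        · push Not at u2
          by_cases u3 : x ≤ T0
          · exact Or.inr (Or.inr (Or.inr ⟨u2, u3⟩))
          · push Not at u3
            exact Or.inr (Or.inl ⟨u3, by linarith⟩)
      · push Not at u1
        by_cases u3 : z ≤ T0
        · exact Or.inr (Or.inr (Or.inl ⟨u1, u3⟩))
        · push Not at u3
          exact Or.inr (Or.inl ⟨by linarith, u3⟩)
    rcases this with h | h | h
    · rw [if_pos h]; linarith
    · rw [if_pos h]; linarith
    · rw [if_pos h]; linarith
  refine cover.trans ?_
  calc _ ≤ Cs * q * ((1 + l) ^ 2 + (1 + l) * (2048 * (1 + l))) + Cb * q * C1 + 256 * q * C3 := by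
        have e1 : Cb * q * (1 + l) ^ E / T0 = Cb * q * ((1 + l) ^ E / T0) := by ring
        have e2 : 256 * q * (1 + l) ^ 3 / T0 = 256 * q * ((1 + l) ^ 3 / T0) := by ring
        rw [e1, e2]
        gcongr
    _ = q * (Cs * 2049 * (1 + l) ^ 2 + (Cb * C1 + 256 * C3)) := by ring
    _ ≤ q * (Cs * 2049 * (1 + l) ^ 2 + (Cb * C1 + 256 * C3) * (1 + l) ^ 2 + M * (1 + l) ^ 2) := by
        apply mul_le_mul_of_nonneg_left _ hq0.le
        have h5 : 0 ≤ Cb * C1 + 256 * C3 := by positivity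
        have h6 : 0 ≤ M * (1 + l) ^ 2 := by positivity
        nlinarith
    _ = _ := by ring
end


theorem summable_ll : Summable fun d : ℕ => (1 + Real.log d) ^ 2 / (d : ℝ) ^ 2 := by
  have h : Summable fun d : ℕ => 16 * (1 / (d : ℝ) ^ (3 / 2 : ℝ)) :=
    (Real.summable_one_div_nat_rpow.2 (by norm_num)).mul_left 16
  refine Summable.of_nonneg_of_le (fun d => by positivity) (fun d => ?_) h
  rcases Nat.eq_zero_or_pos d with rfl | hd
  · simp
  have hd0 : (0 : ℝ) < d := by exact_mod_cast hd
  have h1 := one_add_log_le hd0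
  have h0 := Real.log_natCast_nonneg d
  have h2 : (1 + Real.log d) ^ 2 ≤ 16 * (d : ℝ) ^ (1 / 2 : ℝ) := by
    calc (1 + Real.log d) ^ 2 ≤ (4 * (d : ℝ) ^ (1 / 4 : ℝ)) ^ 2 := by gcongr
      _ = 16 * ((d : ℝ) ^ (1 / 4 : ℝ)) ^ 2 := by ring
      _ = _ := by
        rw [← Real.rpow_natCast, ← Real.rpow_mul hd0.le]; norm_num
  rw [div_le_iff₀ (by positivity)]
  refine h2.trans (le_of_eq ?_)
  have : (d : ℝ) ^ 2 = (d : ℝ) ^ (3 / 2 : ℝ) * (d : ℝ) ^ (1 / 2 : ℝ) := by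
    rw [← Real.rpow_add hd0, ← Real.rpow_natCast]; norm_num
  rw [this]
  have h3 : (0 : ℝ) < (d : ℝ) ^ (3 / 2 : ℝ) := by positivity
  field_simp

theorem pow_diff (M : ℝ) (a b : ℝ) (ha : |a| ≤ M) (hb : |b| ≤ M) (k : ℕ) :
    |a ^ (k + 1) - b ^ (k + 1)| ≤ (k + 1) * M ^ k * |a - b| := by
  have hM : 0 ≤ M := (abs_nonneg a).trans ha
  induction k with
  | zero => simp
  | succ k ih =>
    have e : a ^ (k + 1 + 1) - b ^ (k + 1 + 1) = a ^ (k + 1) * (a - b) + b * (a ^ (k + 1) - b ^ (k + 1)) := by ring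
    rw [e]
    refine (abs_add_le _ _).trans ?_
    rw [abs_mul, abs_mul, abs_pow]
    calc |a| ^ (k + 1) * |a - b| + |b| * |a ^ (k + 1) - b ^ (k + 1)|
        ≤ M ^ (k + 1) * |a - b| + M * ((k + 1) * M ^ k * |a - b|) := by gcongr
      _ = _ := by push_cast; ring

theorem pow_diff2 (M : ℝ) (a b : ℝ) (ha : |a| ≤ M) (hb : |b| ≤ M) (k : ℕ) :
    |a ^ (k + 2) - b ^ (k + 2) - (k + 2) * a ^ (k + 1) * (a - b)| ≤ (k + 2) ^ 2 * M ^ k * (a - b) ^ 2 := by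
  have hM : 0 ≤ M := (abs_nonneg a).trans ha
  induction k with
  | zero =>
    have e : a ^ (0 + 2) - b ^ (0 + 2) - ((0 : ℕ) + 2) * a ^ (0 + 1) * (a - b) = - (a - b) ^ 2 := by
      push_cast; ring
    rw [e, abs_neg, abs_of_nonneg (sq_nonneg _)]
    push_cast
    nlinarith [sq_nonneg (a - b)]
  | succ k ih =>
    have e : a ^ (k + 1 + 2) - b ^ (k + 1 + 2) - ((k + 1 : ℕ) + 2) * a ^ (k + 1 + 1) * (a - b) =
      -((k + 2) * a ^ (k + 1) * (a - b) ^ 2) + b * (a ^ (k + 2) - b ^ (k + 2) - (k + 2) * a ^ (k + 1) * (a - b)) := by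
      push_cast; ring
    rw [e]
    refine (abs_add_le _ _).trans ?_
    have hk : (0 : ℝ) ≤ k + 2 := by positivity
    have e2 : |(k + 2) * a ^ (k + 1) * (a - b) ^ 2| = (k + 2) * |a| ^ (k + 1) * (a - b) ^ 2 := by
      rw [abs_mul, abs_mul, abs_pow, abs_of_nonneg hk, abs_of_nonneg (sq_nonneg (a - b))]
    rw [abs_neg, abs_mul b, e2]
    calc _ ≤ (k + 2) * M ^ (k + 1) * (a - b) ^ 2 + M * ((k + 2) ^ 2 * M ^ k * (a - b) ^ 2) := by gcongr
      _ = ((k + 2) + (k + 2) ^ 2) * (M ^ (k + 1) * (a - b) ^ 2) := by ring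
      _ ≤ ((k + 1 : ℕ) + 2) ^ 2 * (M ^ (k + 1) * (a - b) ^ 2) := by
        gcongr
        push_cast
        nlinarith
      _ = _ := by ring

theorem harm_gamma (N : ℕ) (hN : 1 ≤ N) :
    |∑ n ∈ Finset.Icc 1 N, 1 / (n : ℝ) - Real.log (N + 1) - eulerMascheroniConstant| ≤ 1 / N := by
  have e : ∑ n ∈ Finset.Icc 1 N, 1 / (n : ℝ) = harmonic N := by
    rw [harmonic_eq_sum_Icc]; push_cast; simp [one_div]
  have h1 := eulerMascheroniSeq_lt_eulerMascheroniConstant N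
  have h2 := eulerMascheroniConstant_lt_eulerMascheroniSeq' N
  unfold eulerMascheroniSeq at h1
  unfold eulerMascheroniSeq' at h2
  rw [if_neg (by omega)] at h2
  have hN0 : (0 : ℝ) < N := by exact_mod_cast hN
  have h3 : Real.log (N + 1) - Real.log N ≤ 1 / N := by
    rw [← Real.log_div (by positivity) (by positivity)]
    have := Real.log_le_sub_one_of_pos (x := ((N : ℝ) + 1) / N) (by positivity)
    refine this.trans (le_of_eq ?_)
    field_simp; ring
  rw [e, abs_le]
  constructor <;> linarith

set_option maxHeartbeats 1000000 in
theorem Sk (k : ℕ) : ∃ C : ℝ, 0 < C ∧ ∀ Y : ℝ, 1 ≤ Y →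
    |∑ n ∈ Finset.Icc 1 ⌊Y⌋₊, 1 / (n : ℝ) * (Real.log (Y / n)) ^ (k + 1) - (Real.log Y) ^ (k + 2) / (k + 2)
      - eulerMascheroniConstant * (Real.log Y) ^ (k + 1)| ≤ C * (1 + Real.log Y) ^ k := by
  set S0 := ∑' d : ℕ, (1 + Real.log d) ^ 2 / (d : ℝ) ^ 2 with hS0
  have hS0' : 0 ≤ S0 := tsum_nonneg fun d => by positivity
  refine ⟨(k + 2) * S0 + (k + 1) * S0 + 1 + 1, by positivity, fun Y hY => ?_⟩
  set l := Real.log Y with hl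
  have hl0 : 0 ≤ l := Real.log_nonneg hY
  have hY0 : 0 < Y := by linarith
  set N := ⌊Y⌋₊ with hN
  have hN1 : 1 ≤ N := Nat.le_floor (by simpa using hY)
  have hNY : (N : ℝ) ≤ Y := Nat.floor_le hY0.le
  have hYN : Y < N + 1 := Nat.lt_floor_add_one Y
  have hN0 : (0 : ℝ) < N := by exact_mod_cast hN1
  set a : ℕ → ℝ := fun n => l - Real.log n with ha
  set M := 1 + l with hM
  have hM1 : 1 ≤ M := by linarith
  have hstep : ∀ n : ℕ, 1 ≤ n → 0 ≤ a n - a (n + 1) ∧ a n - a (n + 1) ≤ 1 / n ∧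
      1 / (n : ℝ) - (a n - a (n + 1)) ≤ 1 / (n : ℝ) ^ 2 := by
    intro n hn
    have hn0 : (0 : ℝ) < n := by exact_mod_cast hn
    have h1 := log_step n hn
    have e : a n - a (n + 1) = Real.log ((n + 1 : ℕ) : ℝ) - Real.log n := by simp only [ha]; ring
    have h3 : Real.log ((n + 1 : ℕ) : ℝ) - Real.log n ≤ 1 / n := by
      rw [← Real.log_div (by positivity) (by positivity)]
      have := Real.log_le_sub_one_of_pos (x := ((n + 1 : ℕ) : ℝ) / n) (by positivity)
      refine this.trans (le_of_eq ?_)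
      push_cast
      field_simp; ring
    have h4 : (0 : ℝ) ≤ 1 / ((n : ℝ) + 1) := by positivity
    refine ⟨by linarith, by linarith, ?_⟩
    have h5 : 1 / (n : ℝ) - 1 / ((n : ℝ) + 1) ≤ 1 / (n : ℝ) ^ 2 := by
      rw [div_sub_div _ _ (by positivity) (by positivity), div_le_div_iff₀ (by positivity) (by positivity)]
      nlinarith
    linarith
  have hamem : ∀ n ∈ Finset.Icc 1 N, 0 ≤ a n ∧ a n ≤ l ∧ |a n| ≤ M ∧ |a (n + 1)| ≤ M := by
    intro n hn
    obtain ⟨n1, n2⟩ := Finset.mem_Icc.1 hn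
    have hn0 : (0 : ℝ) < n := by exact_mod_cast n1
    have h0 := Real.log_natCast_nonneg n
    have h1 : Real.log n ≤ l := Real.log_le_log hn0 (le_trans (by exact_mod_cast n2) hNY)
    obtain ⟨s1, s2, _⟩ := hstep n n1
    have hn1 : 1 / (n : ℝ) ≤ 1 := by rw [div_le_one hn0]; exact_mod_cast n1
    have e : a n = l - Real.log n := rfl
    refine ⟨by linarith, by linarith, ?_, ?_⟩ <;> rw [abs_le] <;> constructor <;> linarith
  have hterm : ∀ n ∈ Finset.Icc 1 N, 1 / (n : ℝ) * (Real.log (Y / n)) ^ (k + 1) =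
      (1 / (n : ℝ) - (a n - a (n + 1))) * l ^ (k + 1)
      + (1 / (n : ℝ) - (a n - a (n + 1))) * (a n ^ (k + 1) - l ^ (k + 1))
      + (a n ^ (k + 2) - a (n + 1) ^ (k + 2)) / (k + 2)
      - (a n ^ (k + 2) - a (n + 1) ^ (k + 2) - (k + 2) * a n ^ (k + 1) * (a n - a (n + 1))) / (k + 2) := by
    intro n hn
    obtain ⟨n1, n2⟩ := Finset.mem_Icc.1 hn
    have hn0 : (0 : ℝ) < n := by exact_mod_cast n1
    rw [Real.log_div hY0.ne' hn0.ne']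
    have e : l - Real.log n = a n := rfl
    rw [← hl, e]
    have hk : (k : ℝ) + 2 ≠ 0 := by positivity
    field_simp
    ring
  have tele : ∀ (f : ℕ → ℝ), ∑ n ∈ Finset.Icc 1 N, (f n - f (n + 1)) = f 1 - f (N + 1) := by
    intro f
    clear_value N
    clear hterm hamem hN hNY hYN hN0
    induction N, hN1 using Nat.le_induction with
    | base => simp
    | succ n hn ih => rw [Finset.sum_Icc_succ_top (by omega), ih]; ring
  have a1 : a 1 = l := by simp [ha]
  have aN : |a (N + 1)| ≤ 1 := by
    obtain ⟨s1, s2, _⟩ := hstep N hN1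
    obtain ⟨t1, _, _⟩ := hamem N (Finset.mem_Icc.2 ⟨hN1, le_refl _⟩)
    have hn1 : 1 / (N : ℝ) ≤ 1 := by rw [div_le_one hN0]; exact_mod_cast hN1
    have : a (N + 1) ≤ 0 := by
      have : Real.log Y ≤ Real.log ((N + 1 : ℕ) : ℝ) := Real.log_le_log hY0 (by push_cast; exact hYN.le)
      simp only [ha]; linarith
    rw [abs_le]; constructor <;> linarith
  rw [Finset.sum_congr rfl hterm]
  rw [Finset.sum_sub_distrib, Finset.sum_add_distrib, Finset.sum_add_distrib, ← Finset.sum_mul, ← Finset.sum_div,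
    tele (fun n => a n ^ (k + 2)), Finset.sum_sub_distrib, tele a, a1]
  set A1 := ∑ n ∈ Finset.Icc 1 N, 1 / (n : ℝ) with hA1
  set A2 := ∑ n ∈ Finset.Icc 1 N, (1 / (n : ℝ) - (a n - a (n + 1))) * (a n ^ (k + 1) - l ^ (k + 1)) with hA2
  set A3 := ∑ n ∈ Finset.Icc 1 N,
    (a n ^ (k + 2) - a (n + 1) ^ (k + 2) - (k + 2) * a n ^ (k + 1) * (a n - a (n + 1))) / ((k : ℝ) + 2) with hA3
  have hsum : ∑ n ∈ Finset.Icc 1 N, (1 + Real.log n) ^ 2 / (n : ℝ) ^ 2 ≤ S0 :=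
    summable_ll.sum_le_tsum _ fun d _ => by positivity
  have b3 : |A3| ≤ (k + 2) * S0 * M ^ k := by
    calc |A3| ≤ ∑ n ∈ Finset.Icc 1 N, ((k + 2) * M ^ k) * ((1 + Real.log n) ^ 2 / (n : ℝ) ^ 2) := by
          refine (Finset.abs_sum_le_sum_abs _ _).trans (Finset.sum_le_sum fun n hn => ?_)
          obtain ⟨n1, n2⟩ := Finset.mem_Icc.1 hn
          have hn0 : (0 : ℝ) < n := by exact_mod_cast n1
          obtain ⟨_, _, m1, m2⟩ := hamem n hn
          obtain ⟨s1, s2, _⟩ := hstep n n1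
          have hk : (0 : ℝ) < k + 2 := by positivity
          rw [abs_div, abs_of_pos hk, div_le_iff₀ hk]
          refine (pow_diff2 M _ _ m1 m2 k).trans ?_
          have h0 := Real.log_natCast_nonneg n
          have h5 : (a n - a (n + 1)) ^ 2 ≤ (1 + Real.log n) ^ 2 / (n : ℝ) ^ 2 := by
            rw [← div_pow]
            gcongr
            refine s2.trans ?_
            gcongr
            linarith
          calc _ ≤ ((k : ℝ) + 2) ^ 2 * M ^ k * ((1 + Real.log n) ^ 2 / (n : ℝ) ^ 2) := by gcongr
            _ = _ := by ring
      _ ≤ ((k + 2) * M ^ k) * S0 := by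
          rw [← Finset.mul_sum]; gcongr
      _ = _ := by ring
  have b2 : |A2| ≤ (k + 1) * S0 * M ^ k := by
    calc |A2| ≤ ∑ n ∈ Finset.Icc 1 N, ((k + 1) * M ^ k) * ((1 + Real.log n) ^ 2 / (n : ℝ) ^ 2) := by
          refine (Finset.abs_sum_le_sum_abs _ _).trans (Finset.sum_le_sum fun n hn => ?_)
          obtain ⟨n1, n2⟩ := Finset.mem_Icc.1 hn
          have hn0 : (0 : ℝ) < n := by exact_mod_cast n1
          obtain ⟨_, _, m1, m2⟩ := hamem n hn
          obtain ⟨s1, s2, s3⟩ := hstep n n1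
          have h0 := Real.log_natCast_nonneg n
          have hlM : |l| ≤ M := by rw [abs_of_nonneg hl0]; linarith
          have h6 := pow_diff M (a n) l m1 hlM k
          have h7 : |a n - l| = Real.log n := by
            have : a n - l = - Real.log n := by simp only [ha]; ring
            rw [this, abs_neg, abs_of_nonneg h0]
          rw [h7] at h6
          have h8 : 0 ≤ 1 / (n : ℝ) - (a n - a (n + 1)) := by linarith
          rw [abs_mul, abs_of_nonneg h8]
          calc _ ≤ 1 / (n : ℝ) ^ 2 * ((k + 1) * M ^ k * (1 + Real.log n) ^ 2) := by
                gcongr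
                refine h6.trans ?_
                gcongr
                nlinarith
            _ = _ := by ring
      _ ≤ ((k + 1) * M ^ k) * S0 := by
          rw [← Finset.mul_sum]; gcongr
      _ = _ := by ring
  have hMk : 1 ≤ M ^ k := one_le_pow₀ hM1
  have b1 : |(A1 - (l - a (N + 1)) - eulerMascheroniConstant) * l ^ (k + 1)| ≤ M ^ k := by
    have hg := harm_gamma N hN1
    have e : l - a (N + 1) = Real.log (N + 1) := by simp [ha]
    rw [e, abs_mul, abs_of_nonneg (by positivity : 0 ≤ l ^ (k + 1))]
    have hlN : l ≤ N := by
      have := Real.log_le_sub_one_of_pos hY0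
      linarith
    calc _ ≤ 1 / (N : ℝ) * l ^ (k + 1) := by gcongr
      _ = l / N * l ^ k := by ring
      _ ≤ 1 * M ^ k := by
          have h9 : l / N ≤ 1 := by rw [div_le_one hN0]; exact hlN
          have h10 : l ^ k ≤ M ^ k := by gcongr; linarith
          gcongr
      _ = _ := one_mul _
  have b4 : |a (N + 1) ^ (k + 2) / (k + 2)| ≤ M ^ k := by
    have hk : (1 : ℝ) ≤ k + 2 := by
      have : (0 : ℝ) ≤ k := by positivity
      linarith
    rw [abs_div, abs_pow, abs_of_pos (by linarith : (0 : ℝ) < k + 2), div_le_iff₀ (by linarith)]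
    have : |a (N + 1)| ^ (k + 2) ≤ 1 := pow_le_one₀ (abs_nonneg _) aN
    nlinarith
  have key : (A1 - (l - a (N + 1))) * l ^ (k + 1) + A2 + (l ^ (k + 2) - a (N + 1) ^ (k + 2)) / (k + 2) - A3
      - l ^ (k + 2) / (k + 2) - eulerMascheroniConstant * l ^ (k + 1) =
      (A1 - (l - a (N + 1)) - eulerMascheroniConstant) * l ^ (k + 1) + A2 - a (N + 1) ^ (k + 2) / (k + 2) - A3 := by
    ring
  rw [key]
  have c1 := abs_le.1 b1
  have c2 := abs_le.1 b2
  have c3 := abs_le.1 b3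
  have c4 := abs_le.1 b4
  have e5 : ((k + 2) * S0 + (k + 1) * S0 + 1 + 1) * M ^ k =
    (k + 2) * S0 * M ^ k + (k + 1) * S0 * M ^ k + M ^ k + M ^ k := by ring
  rw [e5, abs_le]
  constructor <;> linarith [c1.1, c1.2, c2.1, c2.2, c3.1, c3.2, c4.1, c4.2]


/-- inner sum -/
noncomputable def UU (K Y : ℝ) : ℝ := ∑ y ∈ Finset.Icc 1 ⌊Y⌋₊, 1 / (y : ℝ) * (Real.log (Y / y) + K) ^ 2
/-- double sum -/
noncomputable def TQ (K Q : ℝ) : ℝ := ∑ x ∈ Finset.Icc 1 ⌊Q⌋₊, 1 / (x : ℝ) * UU K (Q / x)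

theorem harm_floor (Y : ℝ) (hY : 1 ≤ Y) : ∑ n ∈ Finset.Icc 1 ⌊Y⌋₊, 1 / (n : ℝ) ≤ 1 + Real.log Y := by
  have h := harm_le ⌊Y⌋₊
  have h1 : 1 ≤ ⌊Y⌋₊ := Nat.le_floor (by simpa using hY)
  have h2 : Real.log ⌊Y⌋₊ ≤ Real.log Y := Real.log_le_log (by exact_mod_cast h1) (Nat.floor_le (by linarith))
  linarith

theorem UU_asymp (K : ℝ) : ∃ C : ℝ, 0 < C ∧ ∀ Y : ℝ, 1 ≤ Y →
    |UU K Y - (Real.log Y ^ 3 / 3 + (eulerMascheroniConstant + K) * Real.log Y ^ 2)| ≤ C * (1 + Real.log Y) := by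
  obtain ⟨C1, hC1, h1⟩ := Sk 1
  obtain ⟨C0, hC0, h0⟩ := Sk 0
  set g := eulerMascheroniConstant with hg
  have hg0 : 0 < g := by linarith [one_half_lt_eulerMascheroniConstant]
  refine ⟨C1 + 2 * |K| * (g + C0) + K ^ 2, by positivity, fun Y hY => ?_⟩
  have h1 := h1 Y hY
  have h0 := h0 Y hY
  have hh := harm_floor Y hY
  have hl : 0 ≤ Real.log Y := Real.log_nonneg hY
  have hh0 : 0 ≤ ∑ n ∈ Finset.Icc 1 ⌊Y⌋₊, 1 / (n : ℝ) := Finset.sum_nonneg fun _ _ => by positivity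
  have e : UU K Y = ∑ n ∈ Finset.Icc 1 ⌊Y⌋₊, 1 / (n : ℝ) * (Real.log (Y / n)) ^ (1 + 1) +
    2 * K * ∑ n ∈ Finset.Icc 1 ⌊Y⌋₊, 1 / (n : ℝ) * (Real.log (Y / n)) ^ (0 + 1) +
    K ^ 2 * ∑ n ∈ Finset.Icc 1 ⌊Y⌋₊, 1 / (n : ℝ) := by
    unfold UU
    rw [Finset.mul_sum, Finset.mul_sum, ← Finset.sum_add_distrib, ← Finset.sum_add_distrib]
    apply Finset.sum_congr rfl
    intro n _
    ring
  rw [e]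
  generalize ∑ n ∈ Finset.Icc 1 ⌊Y⌋₊, 1 / (n : ℝ) * (Real.log (Y / n)) ^ (1 + 1) = s2 at *
  generalize ∑ n ∈ Finset.Icc 1 ⌊Y⌋₊, 1 / (n : ℝ) * (Real.log (Y / n)) ^ (0 + 1) = s1 at *
  generalize ∑ n ∈ Finset.Icc 1 ⌊Y⌋₊, 1 / (n : ℝ) = s0 at *
  generalize Real.log Y = l at *
  norm_num at h1 h0
  have key : s2 + 2 * K * s1 + K ^ 2 * s0 - (l ^ 3 / 3 + (g + K) * l ^ 2) =
    (s2 - l ^ 3 / 3 - g * l ^ 2) + 2 * K * (s1 - l ^ 2 / 2 - g * l) + 2 * K * (g * l) + K ^ 2 * s0 := by ring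
  rw [key]
  calc _ ≤ |s2 - l ^ 3 / 3 - g * l ^ 2| + |2 * K * (s1 - l ^ 2 / 2 - g * l)| + |2 * K * (g * l)| + |K ^ 2 * s0| :=
        (abs_add_le _ _).trans (add_le_add ((abs_add_le _ _).trans (add_le_add (abs_add_le _ _) le_rfl)) le_rfl)
    _ = |s2 - l ^ 3 / 3 - g * l ^ 2| + 2 * |K| * |s1 - l ^ 2 / 2 - g * l| + 2 * |K| * (g * l) + K ^ 2 * s0 := by
        rw [abs_mul, abs_mul, abs_mul, abs_mul, abs_mul (K ^ 2), abs_mul g, abs_of_pos hg0, abs_of_nonneg hl,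
          abs_of_nonneg hh0, abs_of_nonneg (sq_nonneg K), abs_of_pos (by norm_num : (0 : ℝ) < 2)]
    _ ≤ C1 * (1 + l) + 2 * |K| * (C0 * (1 + l)) + 2 * |K| * (g * (1 + l)) + K ^ 2 * (1 + l) := by
        have : C0 ≤ C0 * (1 + l) := by nlinarith
        gcongr
        · linarith
        · linarith
    _ = _ := by ring

theorem TQ_asymp (K : ℝ) : ∃ β C : ℝ, 0 < C ∧ ∀ Q : ℝ, 1 ≤ Q →
    |TQ K Q - (Real.log Q ^ 4 / 12 + β * Real.log Q ^ 3)| ≤ C * (1 + Real.log Q) ^ 2 := by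
  obtain ⟨C3, hC3, h3⟩ := Sk 2
  obtain ⟨C2, hC2, h2⟩ := Sk 1
  obtain ⟨CU, hCU, hU⟩ := UU_asymp K
  set g := eulerMascheroniConstant with hg
  refine ⟨g / 3 + (g + K) / 3, CU + C3 / 3 + |g + K| * (|g| + C2), by positivity, fun Q hQ => ?_⟩
  have h3 := h3 Q hQ
  have h2 := h2 Q hQ
  have hh := harm_floor Q hQ
  have hl : 0 ≤ Real.log Q := Real.log_nonneg hQ
  have hQ0 : 0 < Q := by linarith
  have err : |TQ K Q - (1 / 3 * ∑ n ∈ Finset.Icc 1 ⌊Q⌋₊, 1 / (n : ℝ) * (Real.log (Q / n)) ^ (2 + 1) +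
      (g + K) * ∑ n ∈ Finset.Icc 1 ⌊Q⌋₊, 1 / (n : ℝ) * (Real.log (Q / n)) ^ (1 + 1))| ≤
      CU * (1 + Real.log Q) ^ 2 := by
    unfold TQ
    rw [Finset.mul_sum, Finset.mul_sum, ← Finset.sum_add_distrib, ← Finset.sum_sub_distrib]
    calc _ ≤ ∑ n ∈ Finset.Icc 1 ⌊Q⌋₊, (CU * (1 + Real.log Q)) * (1 / (n : ℝ)) := by
          refine (Finset.abs_sum_le_sum_abs _ _).trans (Finset.sum_le_sum fun n hn => ?_)
          obtain ⟨n1, n2⟩ := Finset.mem_Icc.1 hn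
          have hn0 : (0 : ℝ) < n := by exact_mod_cast n1
          have hn1 : (1 : ℝ) ≤ n := by exact_mod_cast n1
          have hnQ : (n : ℝ) ≤ Q := le_trans (by exact_mod_cast n2) (Nat.floor_le hQ0.le)
          have hy : 1 ≤ Q / n := by rw [le_div_iff₀ hn0]; linarith
          have hu := hU (Q / n) hy
          have hlog : Real.log (Q / n) ≤ Real.log Q :=
            Real.log_le_log (by positivity) (div_le_self hQ0.le hn1)
          have e : 1 / (n : ℝ) * UU K (Q / n) - (1 / 3 * (1 / (n : ℝ) * (Real.log (Q / n)) ^ (2 + 1)) +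
              (g + K) * (1 / (n : ℝ) * (Real.log (Q / n)) ^ (1 + 1))) =
              1 / (n : ℝ) * (UU K (Q / n) - (Real.log (Q / n) ^ 3 / 3 + (g + K) * Real.log (Q / n) ^ 2)) := by ring
          rw [e, abs_mul, abs_of_nonneg (by positivity : 0 ≤ 1 / (n : ℝ)), mul_comm]
          gcongr
          exact hu.trans (by gcongr)
      _ ≤ (CU * (1 + Real.log Q)) * (1 + Real.log Q) := by
          rw [← Finset.mul_sum]; gcongr
      _ = _ := by ring
  generalize ∑ n ∈ Finset.Icc 1 ⌊Q⌋₊, 1 / (n : ℝ) * (Real.log (Q / n)) ^ (1 + 1) = s2 at *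
  generalize ∑ n ∈ Finset.Icc 1 ⌊Q⌋₊, 1 / (n : ℝ) * (Real.log (Q / n)) ^ (2 + 1) = s3 at *
  generalize TQ K Q = t at *
  generalize Real.log Q = l at *
  norm_num at h3 h2
  have key : t - (l ^ 4 / 12 + (g / 3 + (g + K) / 3) * l ^ 3) =
    (t - (1 / 3 * s3 + (g + K) * s2)) + 1 / 3 * (s3 - l ^ 4 / 4 - g * l ^ 3) + (g + K) * (s2 - l ^ 3 / 3 - g * l ^ 2)
      + (g + K) * (g * l ^ 2) := by ring
  rw [key]
  calc _ ≤ |t - (1 / 3 * s3 + (g + K) * s2)| + |1 / 3 * (s3 - l ^ 4 / 4 - g * l ^ 3)| +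
        |(g + K) * (s2 - l ^ 3 / 3 - g * l ^ 2)| + |(g + K) * (g * l ^ 2)| :=
        (abs_add_le _ _).trans (add_le_add ((abs_add_le _ _).trans (add_le_add (abs_add_le _ _) le_rfl)) le_rfl)
    _ = |t - (1 / 3 * s3 + (g + K) * s2)| + 1 / 3 * |s3 - l ^ 4 / 4 - g * l ^ 3| +
        |g + K| * |s2 - l ^ 3 / 3 - g * l ^ 2| + |g + K| * (|g| * l ^ 2) := by
        rw [abs_mul, abs_mul, abs_mul (g + K), abs_mul g, abs_of_nonneg (by positivity : 0 ≤ l ^ 2),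
          abs_of_pos (by norm_num : (0 : ℝ) < 1 / 3)]
    _ ≤ CU * (1 + l) ^ 2 + 1 / 3 * (C3 * (1 + l) ^ 2) + |g + K| * (C2 * (1 + l) ^ 2) +
        |g + K| * (|g| * (1 + l) ^ 2) := by
        have : C2 * (1 + l) ≤ C2 * (1 + l) ^ 2 := by
          gcongr; nlinarith
        gcongr
        · linarith
        · linarith
    _ = _ := by ring

set_option maxHeartbeats 800000 in
/-- comparison for all `d` -/
theorem TQ_d (K : ℝ) : ∃ β C : ℝ, 0 < C ∧ ∀ q : ℝ, 1 ≤ q → ∀ d : ℕ, 1 ≤ d →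
    |TQ K (q / d ^ 2) - (Real.log q ^ 4 / 12 - 2 / 3 * Real.log q ^ 3 * Real.log d + β * Real.log q ^ 3)| ≤
      C * (1 + Real.log q) ^ 2 * (1 + Real.log d) ^ 2 := by
  obtain ⟨β, C, hC, h⟩ := TQ_asymp K
  refine ⟨β, C + 4 + 6 * |β|, by positivity, fun q hq d hd => ?_⟩
  have hd0 : (0 : ℝ) < d := by exact_mod_cast hd
  have hq0 : 0 < q := by linarith
  have hl : 0 ≤ Real.log q := Real.log_nonneg hq
  have hv : 0 ≤ Real.log d := Real.log_natCast_nonneg d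
  have elog : Real.log (q / d ^ 2) = Real.log q - 2 * Real.log d := by
    rw [Real.log_div hq0.ne' (by positivity), Real.log_pow]; push_cast; ring
  by_cases hdq : (d : ℝ) ^ 2 ≤ q
  · have h1 : 1 ≤ q / (d : ℝ) ^ 2 := by rw [le_div_iff₀ (by positivity)]; linarith
    have h2 := h _ h1
    have h3 : 0 ≤ Real.log (q / d ^ 2) := Real.log_nonneg h1
    rw [elog] at h2 h3
    generalize TQ K (q / d ^ 2) = t at *
    generalize Real.log q = l at *
    generalize Real.log d = v at *
    have key : t - (l ^ 4 / 12 - 2 / 3 * l ^ 3 * v + β * l ^ 3) =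
      (t - ((l - 2 * v) ^ 4 / 12 + β * (l - 2 * v) ^ 3)) + ((l - 2 * v) ^ 4 - l ^ 4 + 8 * l ^ 3 * v) / 12
        + β * ((l - 2 * v) ^ 3 - l ^ 3) := by ring
    rw [key]
    have hv2 : v ≤ l / 2 := by linarith
    have k1 : |((l - 2 * v) ^ 4 - l ^ 4 + 8 * l ^ 3 * v) / 12| ≤ 4 * l ^ 2 * v ^ 2 := by
      have e : ((l - 2 * v) ^ 4 - l ^ 4 + 8 * l ^ 3 * v) / 12 =
        v ^ 2 * (24 * l ^ 2 - 32 * l * v + 16 * v ^ 2) / 12 := by ring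
      have p1 : 0 ≤ 24 * l ^ 2 - 32 * l * v + 16 * v ^ 2 := by nlinarith
      have p2 : 24 * l ^ 2 - 32 * l * v + 16 * v ^ 2 ≤ 48 * l ^ 2 := by nlinarith
      rw [e, abs_of_nonneg (by positivity)]
      nlinarith [sq_nonneg v]
    have k2 : |(l - 2 * v) ^ 3 - l ^ 3| ≤ 6 * l ^ 2 * v := by
      have e : (l - 2 * v) ^ 3 - l ^ 3 = -(v * (6 * l ^ 2 - 12 * l * v + 8 * v ^ 2)) := by ring
      have p1 : 0 ≤ 6 * l ^ 2 - 12 * l * v + 8 * v ^ 2 := by nlinarith [sq_nonneg (l - v)]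
      have p2 : 6 * l ^ 2 - 12 * l * v + 8 * v ^ 2 ≤ 6 * l ^ 2 := by nlinarith
      rw [e, abs_neg, abs_of_nonneg (by positivity)]
      nlinarith
    calc _ ≤ |t - ((l - 2 * v) ^ 4 / 12 + β * (l - 2 * v) ^ 3)| + |((l - 2 * v) ^ 4 - l ^ 4 + 8 * l ^ 3 * v) / 12|
          + |β * ((l - 2 * v) ^ 3 - l ^ 3)| := (abs_add_le _ _).trans (add_le_add (abs_add_le _ _) le_rfl)
      _ ≤ C * (1 + (l - 2 * v)) ^ 2 + 4 * l ^ 2 * v ^ 2 + |β| * (6 * l ^ 2 * v) := by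
          rw [abs_mul β]; gcongr
      _ ≤ C * ((1 + l) ^ 2 * (1 + v) ^ 2) + 4 * ((1 + l) ^ 2 * (1 + v) ^ 2) + |β| * (6 * ((1 + l) ^ 2 * (1 + v) ^ 2)) := by
          have r1 : (1 + (l - 2 * v)) ^ 2 ≤ (1 + l) ^ 2 := by gcongr; linarith
          have r2 : (1 + l) ^ 2 ≤ (1 + l) ^ 2 * (1 + v) ^ 2 := by
            have : 1 ≤ (1 + v) ^ 2 := by nlinarith
            nlinarith [sq_nonneg (1 + l)]
          have r3 : l ^ 2 * v ^ 2 ≤ (1 + l) ^ 2 * (1 + v) ^ 2 := by gcongr <;> linarith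
          have r4 : l ^ 2 * v ≤ (1 + l) ^ 2 * (1 + v) ^ 2 := by
            gcongr
            · linarith
            · nlinarith
          have r5 : 4 * l ^ 2 * v ^ 2 ≤ 4 * ((1 + l) ^ 2 * (1 + v) ^ 2) := by linarith
          have r6 : 6 * l ^ 2 * v ≤ 6 * ((1 + l) ^ 2 * (1 + v) ^ 2) := by linarith
          exact add_le_add (add_le_add (mul_le_mul_of_nonneg_left (r1.trans r2) hC.le) r5)
            (mul_le_mul_of_nonneg_left r6 (abs_nonneg β))
      _ = _ := by ring
  · push Not at hdq
    have hT : TQ K (q / d ^ 2) = 0 := by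
      unfold TQ
      have : ⌊q / (d : ℝ) ^ 2⌋₊ = 0 := by
        rw [Nat.floor_eq_zero, div_lt_one (by positivity)]; exact hdq
      rw [this]; simp
    rw [hT]
    have hlv : Real.log q ≤ 2 * Real.log d := by
      have := Real.log_le_log hq0 hdq.le
      rw [Real.log_pow] at this
      exact_mod_cast this
    generalize Real.log q = l at *
    generalize Real.log d = v at *
    have r3 : l ^ 2 * v ^ 2 ≤ (1 + l) ^ 2 * (1 + v) ^ 2 := by gcongr <;> linarith
    have r4 : l ^ 2 * v ≤ (1 + l) ^ 2 * (1 + v) ^ 2 := by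
      gcongr
      · linarith
      · nlinarith
    have key : 0 - (l ^ 4 / 12 - 2 / 3 * l ^ 3 * v + β * l ^ 3) = (l ^ 3 * (8 * v - l)) / 12 - β * l ^ 3 := by ring
    rw [key]
    calc _ ≤ |(l ^ 3 * (8 * v - l)) / 12| + |β * l ^ 3| := abs_sub _ _
      _ = (l ^ 3 * (8 * v - l)) / 12 + |β| * l ^ 3 := by
          rw [abs_mul β, abs_of_nonneg (by positivity : 0 ≤ l ^ 3), abs_of_nonneg]
          have : 0 ≤ 8 * v - l := by linarith
          positivity
      _ ≤ 4 * (l ^ 2 * v ^ 2) + |β| * (6 * (l ^ 2 * v)) := by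
          have u1 : l ^ 3 ≤ 2 * (l ^ 2 * v) := by nlinarith [sq_nonneg l]
          have u2 : l ^ 3 * (8 * v - l) / 12 ≤ 4 * (l ^ 2 * v ^ 2) := by
            have : l ^ 3 * (8 * v - l) ≤ 2 * (l ^ 2 * v) * (8 * v) := by
              gcongr
              · linarith
              · linarith
            have h0 : 0 ≤ l ^ 2 * v ^ 2 := by positivity
            nlinarith
          have h0 : 0 ≤ l ^ 2 * v := by positivity
          gcongr
          linarith
      _ ≤ 4 * ((1 + l) ^ 2 * (1 + v) ^ 2) + |β| * (6 * ((1 + l) ^ 2 * (1 + v) ^ 2)) := by gcongr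
      _ ≤ C * ((1 + l) ^ 2 * (1 + v) ^ 2) + (4 * ((1 + l) ^ 2 * (1 + v) ^ 2) +
            |β| * (6 * ((1 + l) ^ 2 * (1 + v) ^ 2))) := le_add_of_nonneg_left (by positivity)
      _ = _ := by ring


theorem mu_sum : HasSum (fun d : ℕ => (ArithmeticFunction.moebius d : ℝ) / (d : ℝ) ^ 2) (6 / π ^ 2) := by
  have hs : (1 : ℝ) < (2 : ℂ).re := by norm_num
  have h1 := ArithmeticFunction.LSeries_zeta_mul_Lseries_moebius hs
  have h2 : LSeriesSummable (fun n => ((ArithmeticFunction.moebius n : ℤ) : ℂ)) 2 :=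
    ArithmeticFunction.LSeriesSummable_moebius_iff.2 hs
  rw [ArithmeticFunction.LSeries_zeta_eq_riemannZeta hs, riemannZeta_two] at h1
  have h3 := LSeriesSummable.LSeriesHasSum h2
  have hpi : (π : ℂ) ≠ 0 := by exact_mod_cast Real.pi_ne_zero
  have h4 : LSeries (fun n => ((ArithmeticFunction.moebius n : ℤ) : ℂ)) 2 = ((6 / π ^ 2 : ℝ) : ℂ) := by
    push_cast
    field_simp at h1 ⊢
    linear_combination h1
  unfold LSeriesHasSum at h3
  rw [h4] at h3
  rw [← Complex.hasSum_ofReal]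
  convert h3 using 1
  ext d
  rcases Nat.eq_zero_or_pos d with rfl | hd
  · simp
  · rw [LSeries.term_of_ne_zero hd.ne']
    push_cast
    simp

theorem mu_abs (d : ℕ) : |(ArithmeticFunction.moebius d : ℝ)| ≤ 1 := by
  exact_mod_cast ArithmeticFunction.abs_moebius_le_one

theorem TQ_zero (K : ℝ) (q : ℝ) (d : ℕ) (h : q < (d : ℝ) ^ 2) : TQ K (q / d ^ 2) = 0 := by
  unfold TQ
  have : ⌊q / (d : ℝ) ^ 2⌋₊ = 0 := by
    rcases Nat.eq_zero_or_pos d with rfl | hd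
    · simp
    have hd0 : (0 : ℝ) < d := by exact_mod_cast hd
    rw [Nat.floor_eq_zero, div_lt_one (by positivity)]; exact h
  rw [this]; simp

/-- the pairs with product at most `q` -/
def PP (q : ℕ) : Finset (ℕ × ℕ) := (Finset.Icc 1 q ×ˢ Finset.Icc 1 q).filter (fun w => w.1 * w.2 ≤ q)

theorem mem_PP {q : ℕ} {w : ℕ × ℕ} : w ∈ PP q ↔ 1 ≤ w.1 ∧ 1 ≤ w.2 ∧ w.1 * w.2 ≤ q := by
  unfold PP
  rw [Finset.mem_filter, Finset.mem_product, Finset.mem_Icc, Finset.mem_Icc]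
  constructor
  · rintro ⟨⟨⟨a, b⟩, c, d⟩, e⟩; exact ⟨a, c, e⟩
  · rintro ⟨a, c, e⟩
    exact ⟨⟨⟨a, by nlinarith⟩, c, by nlinarith⟩, e⟩

/-- the summand -/
noncomputable def Fw (K q : ℝ) (w : ℕ × ℕ) : ℝ :=
  1 / ((w.1 : ℝ) * w.2) * (Real.log (q / ((w.1 : ℝ) * w.2)) + K) ^ 2

theorem cop_ind (q : ℕ) (x y : ℕ) (hx : 1 ≤ x) (hxq : x ≤ q) :
    (if Nat.Coprime x y then (1 : ℝ) else 0) =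
      ∑ d ∈ Finset.Icc 1 q, if d ∣ x ∧ d ∣ y then (ArithmeticFunction.moebius d : ℝ) else 0 := by
  have h := congrArg (fun f : ArithmeticFunction ℤ => f (Nat.gcd x y)) ArithmeticFunction.moebius_mul_coe_zeta
  simp only [ArithmeticFunction.coe_mul_zeta_apply, ArithmeticFunction.one_apply] at h
  have h' : ∑ d ∈ (Nat.gcd x y).divisors, (ArithmeticFunction.moebius d : ℝ) = if Nat.Coprime x y then (1 : ℝ) else 0 := by
    have := congrArg (fun z : ℤ => (z : ℝ)) h
    push_cast at this
    simpa [Nat.Coprime] using this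
  rw [← h', ← Finset.sum_filter]
  apply Finset.sum_congr _ fun _ _ => rfl
  ext d
  have hg : Nat.gcd x y ≠ 0 := Nat.gcd_ne_zero_left (by omega)
  rw [Nat.mem_divisors, Finset.mem_filter, Finset.mem_Icc, Nat.dvd_gcd_iff]
  constructor
  · rintro ⟨h1, _⟩
    exact ⟨⟨Nat.pos_of_dvd_of_pos h1.1 hx, (Nat.le_of_dvd hx h1.1).trans hxq⟩, h1⟩
  · rintro ⟨_, h1⟩
    exact ⟨h1, hg⟩

theorem inner_d (K : ℝ) (q d : ℕ) (hd : 1 ≤ d) :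
    ∑ w ∈ (PP q).filter (fun w => d ∣ w.1 ∧ d ∣ w.2), Fw K q w = 1 / (d : ℝ) ^ 2 * TQ K ((q : ℝ) / d ^ 2) := by
  have hd0 : (0 : ℝ) < d := by exact_mod_cast hd
  unfold TQ UU
  simp only [Finset.mul_sum]
  rw [Finset.sum_sigma']
  symm
  refine Finset.sum_bij (fun p _ => (d * p.1, d * p.2)) ?_ ?_ ?_ ?_
  · rintro ⟨x, y⟩ hp
    obtain ⟨h1, h2⟩ := Finset.mem_sigma.1 hp
    obtain ⟨x1, _⟩ := Finset.mem_Icc.1 h1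
    obtain ⟨y1, y2⟩ := Finset.mem_Icc.1 h2
    have hx0 : (0 : ℝ) < x := by exact_mod_cast x1
    simp only at y1 y2 x1
    rw [Nat.le_floor_iff (by positivity), le_div_iff₀ hx0, le_div_iff₀ (by positivity)] at y2
    refine Finset.mem_filter.2 ⟨mem_PP.2 ⟨Nat.mul_pos hd x1, Nat.mul_pos hd y1, ?_⟩, Dvd.intro _ rfl, Dvd.intro _ rfl⟩
    have : ((d * x) * (d * y) : ℝ) ≤ q := by nlinarith
    exact_mod_cast this
  · rintro ⟨x, y⟩ _ ⟨x', y'⟩ _ h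
    simp only [Prod.mk.injEq] at h
    have e1 := Nat.eq_of_mul_eq_mul_left hd h.1
    have e2 := Nat.eq_of_mul_eq_mul_left hd h.2
    subst e1 e2; rfl
  · rintro ⟨a, b⟩ h
    obtain ⟨h1, ⟨x, rfl⟩, ⟨y, rfl⟩⟩ := Finset.mem_filter.1 h
    obtain ⟨a1, b1, ab⟩ := mem_PP.1 h1
    simp only at a1 b1 ab
    have x1 : 1 ≤ x := Nat.pos_of_ne_zero (by rintro rfl; omega)
    have y1 : 1 ≤ y := Nat.pos_of_ne_zero (by rintro rfl; omega)
    have hx0 : (0 : ℝ) < x := by exact_mod_cast x1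
    have hy0 : (1 : ℝ) ≤ y := by exact_mod_cast y1
    have ab' : ((d * x) * (d * y) : ℝ) ≤ q := by exact_mod_cast ab
    refine ⟨⟨x, y⟩, Finset.mem_sigma.2 ⟨Finset.mem_Icc.2 ⟨x1, ?_⟩, Finset.mem_Icc.2 ⟨y1, ?_⟩⟩, rfl⟩
    · rw [Nat.le_floor_iff (by positivity), le_div_iff₀ (by positivity)]
      have : (x : ℝ) * d ^ 2 * 1 ≤ x * d ^ 2 * y := by gcongr
      nlinarith
    · simp only
      rw [Nat.le_floor_iff (by positivity), le_div_iff₀ hx0, le_div_iff₀ (by positivity)]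
      nlinarith
  · rintro ⟨x, y⟩ hp
    obtain ⟨h1, h2⟩ := Finset.mem_sigma.1 hp
    obtain ⟨x1, _⟩ := Finset.mem_Icc.1 h1
    obtain ⟨y1, _⟩ := Finset.mem_Icc.1 h2
    have hx0 : (0 : ℝ) < x := by exact_mod_cast x1
    have hy0 : (0 : ℝ) < y := by exact_mod_cast y1
    unfold Fw
    simp only
    push_cast
    have e : (q : ℝ) / (d ^ 2) / x / y = q / ((d * x) * (d * y)) := by field_simp
    rw [e]
    field_simp

theorem MM_eq (K : ℝ) (q : ℕ) :
    ∑ w ∈ (PP q).filter (fun w => Nat.Coprime w.1 w.2), Fw K q w =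
    ∑ d ∈ Finset.Icc 1 q, (ArithmeticFunction.moebius d : ℝ) / (d : ℝ) ^ 2 * TQ K ((q : ℝ) / d ^ 2) := by
  have h1 : ∑ w ∈ (PP q).filter (fun w => Nat.Coprime w.1 w.2), Fw K q w =
      ∑ w ∈ PP q, ∑ d ∈ Finset.Icc 1 q,
        (if d ∣ w.1 ∧ d ∣ w.2 then (ArithmeticFunction.moebius d : ℝ) else 0) * Fw K q w := by
    rw [Finset.sum_filter]
    apply Finset.sum_congr rfl
    intro w hw
    obtain ⟨a, b, c⟩ := mem_PP.1 hw
    rw [← Finset.sum_mul, ← cop_ind q w.1 w.2 a (by nlinarith)]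
    split_ifs <;> simp
  rw [h1, Finset.sum_comm]
  apply Finset.sum_congr rfl
  intro d hd
  have hd1 := (Finset.mem_Icc.1 hd).1
  have h2 := inner_d K q d hd1
  rw [Finset.sum_filter] at h2
  calc _ = ∑ w ∈ PP q, (ArithmeticFunction.moebius d : ℝ) * (if d ∣ w.1 ∧ d ∣ w.2 then Fw K q w else 0) := by
        apply Finset.sum_congr rfl
        intro w _
        split_ifs <;> simp
    _ = _ := by
        rw [← Finset.mul_sum, h2]; ring

theorem MM_asymp (K : ℝ) : ∃ c C : ℝ, 0 < C ∧ ∀ q : ℕ, 1 ≤ q →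
    |∑ w ∈ (PP q).filter (fun w => Nat.Coprime w.1 w.2), Fw K q w
      - (1 / (2 * π ^ 2) * Real.log q ^ 4 + c * Real.log q ^ 3)| ≤ C * (1 + Real.log q) ^ 2 := by
  obtain ⟨β, C, hC, h⟩ := TQ_d K
  set m : ℕ → ℝ := fun d => (ArithmeticFunction.moebius d : ℝ) / (d : ℝ) ^ 2 with hm
  have hmabs : ∀ d, |m d| ≤ 1 / (d : ℝ) ^ 2 := by
    intro d
    simp only [hm]
    rw [abs_div, abs_of_nonneg (by positivity : (0 : ℝ) ≤ (d : ℝ) ^ 2)]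
    gcongr
    exact mu_abs d
  have hs2 : Summable fun d => m d * Real.log d := by
    refine Summable.of_norm_bounded summable_ll fun d => ?_
    have h0 := Real.log_natCast_nonneg d
    rw [Real.norm_eq_abs, abs_mul, abs_of_nonneg h0]
    calc _ ≤ 1 / (d : ℝ) ^ 2 * (1 + Real.log d) ^ 2 := by
          gcongr
          · exact hmabs d
          · nlinarith
      _ = _ := by ring
  obtain ⟨c1, hc1⟩ := hs2
  set S0 := ∑' d : ℕ, (1 + Real.log d) ^ 2 / (d : ℝ) ^ 2 with hS0
  have hS0' : 0 ≤ S0 := tsum_nonneg fun d => by positivity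
  refine ⟨β * (6 / π ^ 2) - 2 / 3 * c1, C * S0 + 1, by positivity, fun q hq => ?_⟩
  have hq1 : (1 : ℝ) ≤ q := by exact_mod_cast hq
  set l := Real.log q with hl
  have hsum : HasSum (fun d => m d * TQ K ((q : ℝ) / d ^ 2))
      (∑ d ∈ Finset.Icc 1 q, m d * TQ K ((q : ℝ) / d ^ 2)) := by
    apply hasSum_sum_of_ne_finset_zero
    intro d hd
    rcases Nat.eq_zero_or_pos d with rfl | hd1
    · simp [hm]
    rw [TQ_zero, mul_zero]
    have : q < d := by
      by_contra hh
      exact hd (Finset.mem_Icc.2 ⟨hd1, by omega⟩)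
    have h2 : q < d ^ 2 := by nlinarith
    exact_mod_cast h2
  have hmain : HasSum (fun d => m d * (l ^ 4 / 12 - 2 / 3 * l ^ 3 * Real.log d + β * l ^ 3))
      (6 / π ^ 2 * (l ^ 4 / 12 + β * l ^ 3) - c1 * (2 / 3 * l ^ 3)) := by
    have := (mu_sum.mul_right (l ^ 4 / 12 + β * l ^ 3)).sub (hc1.mul_right (2 / 3 * l ^ 3))
    have e0 : (fun d => m d * (l ^ 4 / 12 - 2 / 3 * l ^ 3 * Real.log d + β * l ^ 3)) =
        fun d : ℕ => (ArithmeticFunction.moebius d : ℝ) / (d : ℝ) ^ 2 * (l ^ 4 / 12 + β * l ^ 3) -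
          m d * Real.log d * (2 / 3 * l ^ 3) := by
      funext d
      have e1 : (ArithmeticFunction.moebius d : ℝ) / (d : ℝ) ^ 2 = m d := rfl
      rw [e1]
      ring
    rw [e0]
    exact this
  have hdiff := hsum.sub hmain
  have hb : HasSum (fun d : ℕ => C * (1 + l) ^ 2 * ((1 + Real.log d) ^ 2 / (d : ℝ) ^ 2)) (C * (1 + l) ^ 2 * S0) :=
    summable_ll.hasSum.mul_left _
  have key := hdiff.norm_le_of_bounded hb (fun d => by
    rcases Nat.eq_zero_or_pos d with rfl | hd1
    · simp [hm]
    rw [← mul_sub, Real.norm_eq_abs, abs_mul]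
    calc _ ≤ 1 / (d : ℝ) ^ 2 * (C * (1 + l) ^ 2 * (1 + Real.log d) ^ 2) := by
          gcongr
          · exact hmabs d
          · exact h q hq1 d hd1
      _ = _ := by ring)
  rw [MM_eq, Real.norm_eq_abs] at *
  have e : 1 / (2 * π ^ 2) * l ^ 4 + (β * (6 / π ^ 2) - 2 / 3 * c1) * l ^ 3 =
      6 / π ^ 2 * (l ^ 4 / 12 + β * l ^ 3) - c1 * (2 / 3 * l ^ 3) := by
    have := Real.pi_ne_zero
    field_simp
    ring
  rw [e]
  refine key.trans ?_
  nlinarith [sq_nonneg (1 + l)]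


/-- `t (log t + K)^2` -/
noncomputable def HH (K t : ℝ) : ℝ := t * (Real.log t + K) ^ 2

theorem log_sq_le (K t : ℝ) (ht : 1 ≤ t) : (Real.log t + |K|) ^ 2 ≤ 4 * (1 + |K|) ^ 2 * t := by
  have ht0 : 0 < t := by linarith
  have hl := Real.log_nonneg ht
  have hK := abs_nonneg K
  have h1 : 1 + Real.log t ≤ 2 * Real.sqrt t := by
    have h2 := Real.log_le_sub_one_of_pos (Real.sqrt_pos.2 ht0)
    rw [Real.log_sqrt ht0.le] at h2
    linarith
  calc (Real.log t + |K|) ^ 2 ≤ ((1 + |K|) * (1 + Real.log t)) ^ 2 := by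
        gcongr; nlinarith
    _ ≤ ((1 + |K|) * (2 * Real.sqrt t)) ^ 2 := by gcongr
    _ = 4 * (1 + |K|) ^ 2 * (Real.sqrt t) ^ 2 := by ring
    _ = _ := by rw [Real.sq_sqrt ht0.le]

theorem HH_diff (K b t : ℝ) (hb : 1 ≤ b) (hbt : b ≤ t) (htb : t ≤ b + 2) :
    |HH K b - HH K t| ≤ 18 * (1 + |K|) ^ 2 * t := by
  have hb0 : 0 < b := by linarith
  have ht1 : 1 ≤ t := by linarith
  have ht0 : 0 < t := by linarith
  have hlb := Real.log_nonneg hb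
  have hlt := Real.log_nonneg ht1
  have hle : Real.log b ≤ Real.log t := Real.log_le_log hb0 hbt
  have hK := abs_nonneg K
  have hd : b * (Real.log t - Real.log b) ≤ 2 := by
    rw [← Real.log_div ht0.ne' hb0.ne']
    have := Real.log_le_sub_one_of_pos (x := t / b) (by positivity)
    calc b * Real.log (t / b) ≤ b * (t / b - 1) := by gcongr
      _ = t - b := by field_simp
      _ ≤ 2 := by linarith
  have e : HH K b - HH K t = -((t - b) * (Real.log t + K) ^ 2 +
      (b * (Real.log t - Real.log b)) * (Real.log t + Real.log b + 2 * K)) := by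
    unfold HH; ring
  have hs := log_sq_le K t ht1
  have h1 : (Real.log t + K) ^ 2 ≤ (Real.log t + |K|) ^ 2 := by
    apply sq_le_sq'
    · linarith [neg_abs_le K]
    · linarith [le_abs_self K]
  have h2 : |Real.log t + Real.log b + 2 * K| ≤ 2 * (Real.log t + |K|) := by
    rw [abs_le]
    constructor
    · linarith [neg_abs_le K]
    · linarith [le_abs_self K]
  have h3 : 0 ≤ b * (Real.log t - Real.log b) := mul_nonneg hb0.le (by linarith)
  have h4 : 2 * (Real.log t + |K|) ≤ 1 + (Real.log t + |K|) ^ 2 := by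
    nlinarith [sq_nonneg (Real.log t + |K| - 1)]
  rw [e, abs_neg]
  calc _ ≤ |(t - b) * (Real.log t + K) ^ 2| + |(b * (Real.log t - Real.log b)) * (Real.log t + Real.log b + 2 * K)| :=
        abs_add_le _ _
    _ = (t - b) * (Real.log t + K) ^ 2 + (b * (Real.log t - Real.log b)) * |Real.log t + Real.log b + 2 * K| := by
        rw [abs_mul, abs_mul, abs_of_nonneg h3, abs_of_nonneg (sq_nonneg (Real.log t + K)),
          abs_of_nonneg (by linarith : 0 ≤ t - b)]
    _ ≤ 2 * (4 * (1 + |K|) ^ 2 * t) + 2 * (1 + 4 * (1 + |K|) ^ 2 * t) := by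
        have : t - b ≤ 2 := by linarith
        have h5 : (Real.log t + K) ^ 2 ≤ 4 * (1 + |K|) ^ 2 * t := h1.trans hs
        have h6 : |Real.log t + Real.log b + 2 * K| ≤ 1 + 4 * (1 + |K|) ^ 2 * t := by linarith
        gcongr
    _ ≤ _ := by
        have e1 : 1 ≤ (1 + |K|) ^ 2 := by nlinarith
        have e2 : 1 ≤ (1 + |K|) ^ 2 * t := by nlinarith
        linarith

theorem HH_small (K t : ℝ) (ht : 1 ≤ t) (h4 : t ≤ 4) : |HH K t| ≤ 18 * (1 + |K|) ^ 2 * t := by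
  have ht0 : 0 < t := by linarith
  have hlt := Real.log_nonneg ht
  have hK := abs_nonneg K
  have hs := log_sq_le K t ht
  have h1 : (Real.log t + K) ^ 2 ≤ (Real.log t + |K|) ^ 2 := by
    apply sq_le_sq'
    · linarith [neg_abs_le K]
    · linarith [le_abs_self K]
  unfold HH
  rw [abs_of_nonneg (by positivity)]
  calc _ ≤ t * (4 * (1 + |K|) ^ 2 * t) := by gcongr; exact h1.trans hs
    _ ≤ t * (4 * (1 + |K|) ^ 2 * 4) := by gcongr
    _ ≤ _ := by
        have : 0 ≤ (1 + |K|) ^ 2 * t := by positivity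
        linarith

theorem diag (K : ℝ) : ∃ c C : ℝ, 0 < C ∧ ∀ q : ℕ, q.Prime →
    |∑ p ∈ DD q, HH K (bb q p.1 p.2) - q * (1 / π ^ 2 * Real.log q ^ 4 + c * Real.log q ^ 3)| ≤
      C * q * (1 + Real.log q) ^ 2 := by
  obtain ⟨c, C, hC, h⟩ := MM_asymp K
  set B := 18 * (1 + |K|) ^ 2 with hB
  have hB0 : 0 ≤ B := by positivity
  refine ⟨2 * c, 2 * C + 2 * B, by positivity, fun q hq => ?_⟩
  have h := h q hq.pos
  have hq0 : (0 : ℝ) < q := by exact_mod_cast hq.pos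
  have hl := Real.log_natCast_nonneg q
  set P := (PP q).filter (fun w => Nat.Coprime w.1 w.2) with hP
  set t : (ℕ × ℕ) × ℕ → ℝ := fun v => (q : ℝ) / ((v.1.1 : ℝ) * v.1.2) with ht
  set φ : ((_ : ℕ) × ℕ) → (ℕ × ℕ) × ℕ := fun p => ((xx q p.1 p.2, yy q p.1 p.2), p.2 % 2) with hφ
  have maps : ∀ p ∈ DD q, φ p ∈ P ×ˢ Finset.range 2 := by
    intro p hp
    obtain ⟨m1, m2⟩ := mem_DD.1 hp
    obtain ⟨_, _, b1, _, x1, y1, _⟩ := facts hq m1.1 m1.2 m2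
    have l1 := xy_le hq m1.1 m1.2 m2
    refine Finset.mem_product.2 ⟨Finset.mem_filter.2 ⟨mem_PP.2 ⟨x1, y1, ?_⟩, xy_coprime hq m1.1 m1.2 m2⟩,
      Finset.mem_range.2 (Nat.mod_lt _ (by norm_num))⟩
    simp only [hφ]
    nlinarith
  have inj : Set.InjOn φ (DD q) := by
    intro p hp p' hp' e
    obtain ⟨m1, m2⟩ := mem_DD.1 hp
    obtain ⟨m1', m2'⟩ := mem_DD.1 hp'
    simp only [hφ, Prod.mk.injEq] at e
    have := DD_inj hq m1.1 m1.2 m2 m1'.1 m1'.2 m2' e.1.1 e.1.2 e.2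
    obtain ⟨a, i⟩ := p
    obtain ⟨a', i'⟩ := p'
    simp only at this
    obtain ⟨rfl, rfl⟩ := this
    rfl
  have hsub : (DD q).image φ ⊆ P ×ˢ Finset.range 2 := Finset.image_subset_iff.2 maps
  have hPt : ∀ v ∈ P ×ˢ Finset.range 2, 1 ≤ v.1.1 ∧ 1 ≤ v.1.2 ∧ v.1.1 * v.1.2 ≤ q ∧ 1 ≤ t v ∧
      Nat.Coprime v.1.1 v.1.2 ∧ v.2 < 2 := by
    intro v hv
    obtain ⟨v1, v2⟩ := Finset.mem_product.1 hv
    obtain ⟨v3, v4⟩ := Finset.mem_filter.1 v1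
    obtain ⟨x1, y1, xy⟩ := mem_PP.1 v3
    refine ⟨x1, y1, xy, ?_, v4, Finset.mem_range.1 v2⟩
    have hx0 : (0 : ℝ) < v.1.1 := by exact_mod_cast x1
    have hy0 : (0 : ℝ) < v.1.2 := by exact_mod_cast y1
    simp only [ht]
    rw [le_div_iff₀ (by positivity), one_mul]
    exact_mod_cast xy
  -- total of the model sum
  have tot : ∑ v ∈ P ×ˢ Finset.range 2, HH K (t v) = 2 * q * ∑ w ∈ P, Fw K q w := by
    rw [Finset.sum_product, Finset.mul_sum]
    apply Finset.sum_congr rfl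
    intro w _
    simp only [ht, Finset.sum_const, Finset.card_range, nsmul_eq_mul, HH, Fw]
    push_cast
    ring
  have tot2 : ∑ v ∈ P ×ˢ Finset.range 2, t v ≤ 2 * q * (1 + Real.log q) ^ 2 := by
    rw [Finset.sum_product]
    calc _ = ∑ w ∈ P, 2 * q * (1 / ((w.1 : ℝ) * w.2)) := by
          apply Finset.sum_congr rfl
          intro w _
          simp only [ht, Finset.sum_const, Finset.card_range, nsmul_eq_mul]
          push_cast
          ring
      _ = 2 * q * ∑ w ∈ P, 1 / ((w.1 : ℝ) * w.2) := by rw [Finset.mul_sum]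
      _ ≤ 2 * q * ∑ w ∈ Finset.Icc 1 q ×ˢ Finset.Icc 1 q, 1 / ((w.1 : ℝ) * w.2) := by
          gcongr
          exact (Finset.filter_subset _ _).trans (Finset.filter_subset _ _)
      _ ≤ _ := by
          gcongr
          exact all_pairs_sum q
  have split : ∑ v ∈ P ×ˢ Finset.range 2, HH K (t v) =
      ∑ v ∈ (P ×ˢ Finset.range 2) \ (DD q).image φ, HH K (t v) + ∑ p ∈ DD q, HH K (t (φ p)) := by
    rw [← Finset.sum_sdiff hsub, Finset.sum_image inj]
  have splitt : ∑ v ∈ P ×ˢ Finset.range 2, t v =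
      ∑ v ∈ (P ×ˢ Finset.range 2) \ (DD q).image φ, t v + ∑ p ∈ DD q, t (φ p) := by
    rw [← Finset.sum_sdiff hsub, Finset.sum_image inj]
  have d1 : |∑ v ∈ (P ×ˢ Finset.range 2) \ (DD q).image φ, HH K (t v)| ≤
      B * ∑ v ∈ (P ×ˢ Finset.range 2) \ (DD q).image φ, t v := by
    rw [Finset.mul_sum]
    refine (Finset.abs_sum_le_sum_abs _ _).trans (Finset.sum_le_sum fun v hv => ?_)
    obtain ⟨v1, v2⟩ := Finset.mem_sdiff.1 hv
    obtain ⟨x1, y1, xy, t1, cop, par⟩ := hPt v v1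
    apply HH_small K (t v) t1
    by_contra hh
    push Not at hh
    apply v2
    have hx0 : (0 : ℝ) < v.1.1 := by exact_mod_cast x1
    have hy0 : (0 : ℝ) < v.1.2 := by exact_mod_cast y1
    simp only [ht] at hh
    rw [lt_div_iff₀ (by positivity)] at hh
    have hh' : 4 * (v.1.1 * v.1.2) ≤ q := by exact_mod_cast hh.le
    obtain ⟨a, i, a1, a2, i1, e1, e2, e3⟩ := DD_surj hq x1 y1 cop hh' par
    refine Finset.mem_image.2 ⟨⟨a, i⟩, mem_DD.2 ⟨⟨a1, a2⟩, i1⟩, ?_⟩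
    simp only [hφ, e1, e2, e3]
  have d2 : |∑ p ∈ DD q, HH K (bb q p.1 p.2) - ∑ p ∈ DD q, HH K (t (φ p))| ≤ B * ∑ p ∈ DD q, t (φ p) := by
    rw [Finset.mul_sum, ← Finset.sum_sub_distrib]
    refine (Finset.abs_sum_le_sum_abs _ _).trans (Finset.sum_le_sum fun p hp => ?_)
    obtain ⟨m1, m2⟩ := mem_DD.1 hp
    obtain ⟨_, _, b1, _, x1, y1, _⟩ := facts hq m1.1 m1.2 m2
    have l1 := xy_le hq m1.1 m1.2 m2
    have l2 := xy_ge hq m1.1 m1.2 m2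
    have hx0 : (0 : ℝ) < xx q p.1 p.2 := by exact_mod_cast x1
    have hy0 : (0 : ℝ) < yy q p.1 p.2 := by exact_mod_cast y1
    apply HH_diff
    · exact_mod_cast b1
    · simp only [ht, hφ]
      rw [le_div_iff₀ (by positivity)]
      exact_mod_cast l1
    · simp only [ht, hφ]
      rw [div_le_iff₀ (by positivity)]
      exact_mod_cast l2
  generalize ∑ p ∈ DD q, HH K (bb q p.1 p.2) = D at *
  generalize ∑ v ∈ (P ×ˢ Finset.range 2) \ (DD q).image φ, HH K (t v) = R1 at *
  generalize ∑ p ∈ DD q, HH K (t (φ p)) = R2 at *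
  generalize ∑ v ∈ (P ×ˢ Finset.range 2) \ (DD q).image φ, t v = r1 at *
  generalize ∑ p ∈ DD q, t (φ p) = r2 at *
  generalize ∑ v ∈ P ×ˢ Finset.range 2, t v = r at *
  rw [split] at tot
  generalize ∑ w ∈ P, Fw K q w = M at *
  generalize Real.log q = l at *
  have key : D - q * (1 / π ^ 2 * l ^ 4 + 2 * c * l ^ 3) =
      (D - R2) - R1 + 2 * q * (M - (1 / (2 * π ^ 2) * l ^ 4 + c * l ^ 3)) := by
    have : R1 = 2 * q * M - R2 := by linarith
    rw [this]
    have := Real.pi_ne_zero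
    field_simp
    ring
  rw [key]
  calc _ ≤ |D - R2| + |R1| + |2 * q * (M - (1 / (2 * π ^ 2) * l ^ 4 + c * l ^ 3))| :=
        (abs_add_le _ _).trans (add_le_add (abs_sub _ _) le_rfl)
    _ ≤ B * r2 + B * r1 + 2 * q * (C * (1 + l) ^ 2) := by
        rw [abs_mul (2 * (q : ℝ)), abs_of_pos (by positivity : (0 : ℝ) < 2 * q)]
        gcongr
    _ = B * r + 2 * q * (C * (1 + l) ^ 2) := by rw [splitt]; ring
    _ ≤ B * (2 * q * (1 + l) ^ 2) + 2 * q * (C * (1 + l) ^ 2) := by gcongr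
    _ = _ := by ring


theorem fpm_eq (ε : ℤ) {a q : ℕ} (h1 : 1 ≤ a) (h2 : a ≤ q - 1) :
    fpm ε a q = ∑ i ∈ Finset.range (cfList q a).length,
      (ε : ℝ) ^ (i + 1) * (Real.sqrt (bb q a i) * (Real.log (bb q a i) +
        (Real.eulerMascheroniConstant - Real.log (8 * π) - (ε : ℝ) * π / 2))) := by
  have hq : 0 < q := by omega
  have e : cfList a q = 0 :: cfList q a := by
    rw [cfList_pos a q hq, Nat.div_eq_of_lt (by omega), Nat.mod_eq_of_lt (by omega)]
  unfold fpm
  rw [e, List.length_cons, Nat.add_sub_cancel]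
  symm
  refine Finset.sum_bij (fun i _ => i + 1) ?_ ?_ ?_ ?_
  · intro i hi
    have := Finset.mem_range.1 hi
    exact Finset.mem_Icc.2 ⟨by omega, by omega⟩
  · intro i _ j _ h
    omega
  · intro j hj
    have := Finset.mem_Icc.1 hj
    exact ⟨j - 1, Finset.mem_range.2 (by omega), by omega⟩
  · intro i _
    rw [List.getD_cons_succ]
    unfold bb
    ring

theorem fpm_sq_sum (ε : ℤ) (hε : ε = 1 ∨ ε = -1) (K : ℝ)
    (hK : K = Real.eulerMascheroniConstant - Real.log (8 * π) - (ε : ℝ) * π / 2)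
    (q : ℕ) (hq : q.Prime) :
    |∑ a ∈ Finset.Icc 1 (q - 1), (fpm ε a q) ^ 2 - ∑ p ∈ DD q, HH K (bb q p.1 p.2)| ≤
      2 * (1 + |K|) ^ 2 * ∑ t ∈ TT q, GG (bb q t.1 t.2.1) * GG (bb q t.1 t.2.2) := by
  have habs : |(ε : ℝ)| = 1 := by rcases hε with h | h <;> simp [h]
  have hsq : (ε : ℝ) ^ 2 = 1 := by rcases hε with h | h <;> simp [h]
  set s : ℕ → ℕ → ℝ := fun a i => (ε : ℝ) ^ (i + 1) * (Real.sqrt (bb q a i) *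
    (Real.log (bb q a i) + K)) with hs
  have e1 : ∑ a ∈ Finset.Icc 1 (q - 1), (fpm ε a q) ^ 2 =
      ∑ p ∈ DD q, HH K (bb q p.1 p.2) + 2 * ∑ t ∈ TT q, s t.1 t.2.1 * s t.1 t.2.2 := by
    unfold DD TT
    rw [Finset.sum_sigma, Finset.sum_sigma, Finset.mul_sum, ← Finset.sum_add_distrib]
    refine Finset.sum_congr rfl fun a ha => ?_
    have ha := Finset.mem_Icc.1 ha
    rw [fpm_eq ε ha.1 ha.2, ← hK]
    rw [sq_split _ (s a)]
    congr 1
    refine Finset.sum_congr rfl fun i _ => ?_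
    simp only [hs, HH]
    rw [mul_pow, mul_pow, Real.sq_sqrt (Nat.cast_nonneg _), ← pow_mul, mul_comm (i + 1) 2, pow_mul,
      hsq, one_pow, one_mul]
  have hb : ∀ a i, |s a i| ≤ (1 + |K|) * GG (bb q a i) := by
    intro a i
    simp only [hs, GG]
    rw [abs_mul, abs_pow, habs, one_pow, one_mul, abs_mul, abs_of_nonneg (Real.sqrt_nonneg _)]
    have hl := Real.log_natCast_nonneg (bb q a i)
    have hk := abs_nonneg K
    have : |Real.log (bb q a i) + K| ≤ (1 + |K|) * (1 + Real.log (bb q a i)) := by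
      refine (abs_add_le _ _).trans ?_
      rw [abs_of_nonneg hl]
      nlinarith
    calc _ ≤ Real.sqrt (bb q a i) * ((1 + |K|) * (1 + Real.log (bb q a i))) := by gcongr
      _ = _ := by ring
  rw [e1, add_sub_cancel_left, abs_mul, abs_of_pos (by norm_num : (0 : ℝ) < 2), mul_assoc]
  refine mul_le_mul_of_nonneg_left ?_ (by norm_num)
  refine (Finset.abs_sum_le_sum_abs _ _).trans ?_
  rw [Finset.mul_sum]
  refine Finset.sum_le_sum fun t _ => ?_
  rw [abs_mul]
  have hk := abs_nonneg K
  calc _ ≤ ((1 + |K|) * GG (bb q t.1 t.2.1)) * ((1 + |K|) * GG (bb q t.1 t.2.2)) :=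
        mul_le_mul (hb _ _) (hb _ _) (abs_nonneg _)
          (mul_nonneg (by positivity) (GG_nonneg _))
    _ = _ := by ring

/-- Corollary (second moment of `f_±`). -/
theorem second_moment_of_f (ε : ℤ) (hε : ε = 1 ∨ ε = -1) :
    ∃ (c C : ℝ), 0 < C ∧
      ∀ (q : ℕ) (hq : q.Prime), 3 ≤ q →
        |(1/(q:ℝ)) * ∑ a ∈ Finset.Icc 1 (q-1), (fpm ε a q)^2
            - (1/π^2) * (Real.log q)^4 - c * (Real.log q)^3|
          ≤ C * (Real.log q)^2 := by
  obtain ⟨K, hK⟩ : ∃ K : ℝ, K = Real.eulerMascheroniConstant - Real.log (8 * π) - (ε : ℝ) * π / 2 :=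
    ⟨_, rfl⟩
  obtain ⟨c, C, hC, hd⟩ := diag K
  obtain ⟨C', hC', ho⟩ := off_diag
  refine ⟨c, 4 * (C + 2 * (1 + |K|) ^ 2 * C'), by positivity, fun q hq h3 => ?_⟩
  have hd := hd q hq
  have ho := ho q hq
  have hf := fpm_sq_sum ε hε K hK q hq
  have hq0 : (0 : ℝ) < q := by exact_mod_cast hq.pos
  have hL : 1 ≤ Real.log q := by
    rw [Real.le_log_iff_exp_le hq0]
    have h := Real.exp_one_lt_d9
    have h' : (3 : ℝ) ≤ q := by exact_mod_cast h3
    linarith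
  set L := Real.log q with hLdef
  set S := ∑ a ∈ Finset.Icc 1 (q - 1), (fpm ε a q) ^ 2 with hS
  set D := ∑ p ∈ DD q, HH K (bb q p.1 p.2) with hD
  have h1 : |S - q * (1 / π ^ 2 * L ^ 4 + c * L ^ 3)| ≤
      q * ((C + 2 * (1 + |K|) ^ 2 * C') * (1 + L) ^ 2) := by
    have e : S - q * (1 / π ^ 2 * L ^ 4 + c * L ^ 3) =
      (S - D) + (D - q * (1 / π ^ 2 * L ^ 4 + c * L ^ 3)) := by ring
    rw [e]
    refine (abs_add_le _ _).trans ?_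
    have h2 : 2 * (1 + |K|) ^ 2 * ∑ t ∈ TT q, GG (bb q t.1 t.2.1) * GG (bb q t.1 t.2.2) ≤
      2 * (1 + |K|) ^ 2 * (C' * q * (1 + L) ^ 2) := by gcongr
    calc _ ≤ 2 * (1 + |K|) ^ 2 * (C' * q * (1 + L) ^ 2) + C * q * (1 + L) ^ 2 :=
          add_le_add (hf.trans h2) hd
      _ = _ := by ring
  have e2 : 1 / (q : ℝ) * S - 1 / π ^ 2 * L ^ 4 - c * L ^ 3 =
      (S - q * (1 / π ^ 2 * L ^ 4 + c * L ^ 3)) / q := by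
    rw [eq_div_iff hq0.ne']
    have : 1 / (q : ℝ) * S * q = S := by field_simp
    linear_combination this
  rw [e2, abs_div, abs_of_pos hq0, div_le_iff₀ hq0]
  refine h1.trans ?_
  have h5 : (1 + L) ^ 2 ≤ 4 * L ^ 2 := by nlinarith
  calc _ ≤ q * ((C + 2 * (1 + |K|) ^ 2 * C') * (4 * L ^ 2)) := by gcongr
    _ = _ := by ring
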